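/- arXiv:2105.10655 — 4 statements merged into one kernel-verified Lean document; each statement's English description precedes it below -/
import Mathlib

section
/- Let Γ be a nicely distance-balanced graph with diameter d ≥ 3 and γ(Γ) = d+1. Let x_0, x_1, …, x_d be a shortest path in Γ between two vertices x_0 and x_d at distance d, and set D^i_j = D^i_j(x_1,x_0). Then for every i with 3 ≤ i ≤ d−1, the vertex x_i has no neighbour in D^i_{i−1} ∪ D^{i−1}_{i−1}. -/
open SimpleGraph Finset

/-- `W_{u,v}`: the set of vertices strictly closer to `u` than to `v`. -/
noncomputable def ndbW {V : Type*} [Fintype V] (G : SimpleGraph V) (u v : V) : Finset V :=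
  Finset.univ.filter fun x => G.dist x u < G.dist x v

/-- `D^i_j(u,v)`: the set of vertices at distance `i` from `u` and `j` from `v`. -/
noncomputable def ndbD {V : Type*} [Fintype V] (G : SimpleGraph V) (u v : V) (i j : ℕ) : Finset V :=
  Finset.univ.filter fun x => G.dist x u = i ∧ G.dist x v = j

/-- `G` is nicely distance-balanced with constant `γ`. -/
def IsNDB {V : Type*} [Fintype V] (G : SimpleGraph V) (γ : ℕ) : Prop :=
  ∀ u v : V, G.Adj u v → (ndbW G u v).card = γ ∧ (ndbW G v u).card = γ

/-- `G` has diameter `d`. -/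
def HasDiam {V : Type*} [Fintype V] (G : SimpleGraph V) (d : ℕ) : Prop :=
  (∀ u v : V, G.dist u v ≤ d) ∧ ∃ u v : V, G.dist u v = d

/-- Let `Γ` be NDB with diameter `d ≥ 3` and `γ = d + 1`, and let
`x 0, x 1, …, x d` be a shortest path between vertices at distance `d`. Then for
`3 ≤ i ≤ d - 1`, the vertex `x i` has no neighbour in
`D^i_{i-1}(x 1, x 0) ∪ D^{i-1}_{i-1}(x 1, x 0)`. -/
theorem stmt_2 {V : Type*} [Fintype V] [DecidableEq V] (G : SimpleGraph V)
    (hconn : G.Connected) (d : ℕ) (hd : 3 ≤ d) (hdiam : HasDiam G d)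
    (hndb : IsNDB G (d + 1)) (x : ℕ → V)
    (hadj : ∀ i < d, G.Adj (x i) (x (i + 1)))
    (hgeo : G.dist (x 0) (x d) = d) :
    ∀ i : ℕ, 3 ≤ i → i ≤ d - 1 → ∀ z : V, G.Adj (x i) z →
      z ∉ ndbD G (x 1) (x 0) i (i - 1) ∪ ndbD G (x 1) (x 0) (i - 1) (i - 1) := by
  intro i hi hid z hz hmem
  have tri : ∀ a b c : V, G.dist a c ≤ G.dist a b + G.dist b c := fun a b c => hconn.dist_triangle
  have upper : ∀ k a, a + k ≤ d → G.dist (x a) (x (a + k)) ≤ k := by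
    intro k
    induction k with
    | zero => intro a _; simp
    | succ k ih =>
      intro a h
      have h1 := ih a (by omega)
      have h2 := tri (x a) (x (a + k)) (x (a + k + 1))
      have h3 := SimpleGraph.dist_eq_one_iff_adj.mpr (hadj (a + k) (by omega))
      rw [← add_assoc]
      omega
  have upper' : ∀ a b, a ≤ b → b ≤ d → G.dist (x a) (x b) ≤ b - a := by
    intro a b h1 h2
    have := upper (b - a) a (by omega)
    rwa [Nat.add_sub_cancel' h1] at this
  have ex : ∀ a b, a ≤ b → b ≤ d → G.dist (x a) (x b) = b - a := by
    intro a b h1 h2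
    have e1 := upper' 0 a (by omega) (by omega)
    have e2 := upper' a b h1 h2
    have e3 := upper' b d h2 le_rfl
    have e4 := tri (x 0) (x a) (x d)
    have e5 := tri (x a) (x b) (x d)
    omega
  have hz0 : G.dist z (x 0) = i - 1 ∧ i - 1 ≤ G.dist z (x 1) := by
    simp only [ndbD, Finset.mem_union, Finset.mem_filter, Finset.mem_univ, true_and] at hmem
    omega
  obtain ⟨hz0, hz1⟩ := hz0
  obtain ⟨y, hzy, hy0⟩ : ∃ y, G.Adj z y ∧ G.dist y (x 0) ≤ i - 2 := by
    obtain ⟨p, hp⟩ := hconn.exists_walk_length_eq_dist z (x 0)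
    cases p with
    | nil => simp at hz0; omega
    | cons h q =>
      refine ⟨_, h, ?_⟩
      have := SimpleGraph.dist_le q
      simp only [SimpleGraph.Walk.length_cons] at hp
      omega
  have hiz := SimpleGraph.dist_eq_one_iff_adj.mpr hz
  have hzi := SimpleGraph.dist_eq_one_iff_adj.mpr hz.symm
  have hzy1 := SimpleGraph.dist_eq_one_iff_adj.mpr hzy
  have hyz1 := SimpleGraph.dist_eq_one_iff_adj.mpr hzy.symm
  have hy0' := tri z y (x 0)
  have hy1 := tri z y (x 1)
  have sy : ∀ a b, G.dist a b = G.dist b a := fun a b => SimpleGraph.dist_comm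
  -- distances from y, z to the vertices of the path
  have hxz : ∀ j ≤ d, z ≠ x j := by
    rintro j hj rfl
    rw [sy, ex 0 j (by omega) hj] at hz0
    rw [sy, ex 1 j (by omega) hj] at hz1
    omega
  have hxy : ∀ j ≤ d, y ≠ x j := by
    rintro j hj rfl
    rw [sy (x j) (x 0), ex 0 j (by omega) hj] at hy0 hy0'
    rw [sy (x j) (x 1), ex 1 j (by omega) hj] at hy1
    omega
  have hcard := (hndb (x (d - 1)) (x d) (by
    have := hadj (d - 1) (by omega)
    rwa [Nat.sub_add_cancel (by omega)] at this)).1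
  have hinj : Set.InjOn x (Finset.range d : Finset ℕ) := by
    intro a ha b hb hab
    simp only [Finset.coe_range, Set.mem_Iio] at ha hb
    have h1 := ex 0 a (by omega) (by omega)
    have h2 := ex 0 b (by omega) (by omega)
    rw [hab] at h1
    omega
  have hsub : insert z (insert y ((Finset.range d).image x)) ⊆ ndbW G (x (d - 1)) (x d) := by
    intro w hw
    simp only [Finset.mem_insert, Finset.mem_image, Finset.mem_range] at hw
    simp only [ndbW, Finset.mem_filter, Finset.mem_univ, true_and]
    have a1 := tri z (x i) (x (d - 1))
    have a2 := ex i (d - 1) (by omega) (by omega)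
    have a3 := tri (x 0) z (x d)
    have a4 := tri (x 0) y (x d)
    have a5 := tri y z (x (d - 1))
    rw [sy (x 0) z] at a3
    rw [sy (x 0) y] at a4
    rcases hw with rfl | rfl | ⟨j, hj, rfl⟩
    · omega
    · omega
    · rw [ex j (d - 1) (by omega) (by omega), ex j d (by omega) le_rfl]
      omega
  have hle := Finset.card_le_card hsub
  have hy_notin : y ∉ (Finset.range d).image x := by
    simp only [Finset.mem_image, Finset.mem_range, not_exists, not_and]
    intro j hj h
    exact hxy j hj.le h.symm
  have hz_notin : z ∉ insert y ((Finset.range d).image x) := by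
    simp only [Finset.mem_insert, Finset.mem_image, Finset.mem_range, not_or, not_exists, not_and]
    exact ⟨hzy.ne, fun j hj h => hxz j hj.le h.symm⟩
  rw [Finset.card_insert_of_notMem hz_notin, Finset.card_insert_of_notMem hy_notin,
    Finset.card_image_of_injOn hinj, Finset.card_range, hcard] at hle
  omega
end

section
/- Let Γ be a regular nicely distance-balanced graph with valency k, diameter d ≥ 3 and γ(Γ) = d+1. Then: (i) if k = 3 then d ∈ {3,4,5}; (ii) if k = 4 then d ∈ {3,4}; (iii) if k = 5 then d = 3. -/
open SimpleGraph Finset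

set_option linter.unusedSectionVars false

namespace NDBProof

variable {V : Type*} [Fintype V] {G : SimpleGraph V}

/-- `x 0, ..., x d` is a geodesic and `u` is the only vertex off it that is closer to `x 1`
than to `x 0`. -/
structure Half (G : SimpleGraph V) (d : ℕ) (x : ℕ → V) (u : V) : Prop where
  hx : ∀ i j, i ≤ d → j ≤ d → G.dist (x i) (x j) = (i - j) + (j - i)
  hu : G.dist u (x 1) < G.dist u (x 0)
  hne : ∀ i, i ≤ d → u ≠ x i
  hU : ∀ v, G.dist v (x 1) < G.dist v (x 0) → v = u ∨ ∃ i, 1 ≤ i ∧ i ≤ d ∧ v = x i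

theorem adj_le (hc : G.Connected) {v z : V} (h : G.Adj v z) (w : V) :
    G.dist v w ≤ G.dist z w + 1 := by
  have h1 := hc.dist_triangle (u := v) (v := z) (w := w)
  have h2 := SimpleGraph.dist_eq_one_iff_adj.2 h
  omega

theorem exists_step (hc : G.Connected) {v w : V} {n : ℕ} (h : G.dist v w = n + 1) :
    ∃ z, G.Adj v z ∧ G.dist z w = n := by
  obtain ⟨p, hp⟩ := hc.exists_walk_length_eq_dist v w
  cases p with
  | nil => simp at h
  | cons hadj q =>
    refine ⟨_, hadj, ?_⟩
    have h1 := SimpleGraph.dist_le q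
    have h2 := adj_le hc hadj w
    simp only [SimpleGraph.Walk.length_cons] at hp
    omega

theorem exists_geodesic (hc : G.Connected) {v w : V} {d : ℕ} (h : G.dist v w = d) :
    ∃ x : ℕ → V, ∀ i j, i ≤ d → j ≤ d → G.dist (x i) (x j) = (i - j) + (j - i) := by
  obtain ⟨p, hp⟩ := hc.exists_walk_length_eq_dist v w
  have hadj : ∀ i, i < d → G.Adj (p.getVert i) (p.getVert (i+1)) := fun i hi =>
    p.adj_getVert_succ (by omega)
  have hle : ∀ n i, i + n ≤ d → G.dist (p.getVert i) (p.getVert (i + n)) ≤ n := by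
    intro n
    induction n with
    | zero => intro i _; simp
    | succ n ih =>
      intro i hi
      have h1 := adj_le hc (hadj i (by omega)) (p.getVert (i + (n+1)))
      have h2 := ih (i+1) (by omega)
      rw [show i + 1 + n = i + (n+1) by omega] at h2
      omega
  have h0 : p.getVert 0 = v := p.getVert_zero
  have hd : p.getVert d = w := by rw [← h, ← hp]; exact p.getVert_length
  have key : ∀ i j, i ≤ j → j ≤ d → G.dist (p.getVert i) (p.getVert j) = j - i := by
    intro i j hij hj
    have h1 := hle (j - i) i (by omega)
    rw [show i + (j - i) = j by omega] at h1
    have h2 := hle i 0 (by omega)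
    have h3 := hle (d - j) j (by omega)
    rw [show j + (d - j) = d by omega, hd] at h3
    rw [Nat.zero_add, h0] at h2
    have h4 := hc.dist_triangle (u := v) (v := p.getVert i) (w := w)
    have h5 := hc.dist_triangle (u := p.getVert i) (v := p.getVert j) (w := w)
    omega
  refine ⟨p.getVert, fun i j hi hj => ?_⟩
  rcases le_total i j with hij | hij
  · rw [key i j hij hj]; omega
  · rw [SimpleGraph.dist_comm, key j i hij hi]; omega

theorem exists_half {d : ℕ} (hd : 3 ≤ d) (hndb : IsNDB G (d + 1)) (x : ℕ → V)
    (hx : ∀ i j, i ≤ d → j ≤ d → G.dist (x i) (x j) = (i - j) + (j - i)) :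
    ∃ u, Half G d x u := by
  classical
  have hadj : G.Adj (x 1) (x 0) := by
    rw [← SimpleGraph.dist_eq_one_iff_adj, hx 1 0 (by omega) (by omega)]
  have hW := (hndb _ _ hadj).1
  have hinj : Set.InjOn x (Icc 1 d : Finset ℕ) := by
    intro i hi j hj hij
    simp only [Finset.coe_Icc, Set.mem_Icc] at hi hj
    have := hx i j hi.2 hj.2
    rw [hij, SimpleGraph.dist_self] at this
    omega
  have hsub : (Icc 1 d).image x ⊆ ndbW G (x 1) (x 0) := by
    intro v hv
    simp only [Finset.mem_image, Finset.mem_Icc] at hv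
    obtain ⟨i, hi, rfl⟩ := hv
    simp only [ndbW, Finset.mem_filter, Finset.mem_univ, true_and]
    rw [hx i 1 hi.2 (by omega), hx i 0 hi.2 (by omega)]
    omega
  have hcard : (ndbW G (x 1) (x 0) \ (Icc 1 d).image x).card = 1 := by
    rw [Finset.card_sdiff_of_subset hsub, hW, Finset.card_image_of_injOn hinj]
    simp
  obtain ⟨u, hu⟩ := Finset.card_eq_one.1 hcard
  have hmem : ∀ v, v = u ↔ (G.dist v (x 1) < G.dist v (x 0)) ∧ ¬ ∃ i, (1 ≤ i ∧ i ≤ d) ∧ x i = v := by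
    intro v
    rw [← Finset.mem_singleton, ← hu]
    simp [ndbW]
  have hu' := (hmem u).1 rfl
  refine ⟨u, hx, hu'.1, ?_, ?_⟩
  · intro i hi h
    rcases Nat.eq_zero_or_pos i with h0 | h0
    · subst h0
      have := hu'.1
      rw [h, SimpleGraph.dist_self] at this
      omega
    · exact hu'.2 ⟨i, ⟨h0, hi⟩, h.symm⟩
  · intro v hv
    by_cases h : ∃ i, (1 ≤ i ∧ i ≤ d) ∧ x i = v
    · obtain ⟨i, hi, rfl⟩ := h
      exact Or.inr ⟨i, hi.1, hi.2, rfl⟩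
    · exact Or.inl ((hmem v).2 ⟨hv, h⟩)

theorem rev_geo {d : ℕ} {x : ℕ → V}
    (hx : ∀ i j, i ≤ d → j ≤ d → G.dist (x i) (x j) = (i - j) + (j - i)) :
    ∀ i j, i ≤ d → j ≤ d → G.dist (x (d - i)) (x (d - j)) = (i - j) + (j - i) := by
  intro i j hi hj
  rw [hx _ _ (by omega) (by omega)]
  omega

/-- distance bound from adjacency to a path vertex -/
theorem Half.bd (hc : G.Connected) {d : ℕ} {x : ℕ → V} {u : V} (H : Half G d x u) {v : V} {j : ℕ}
    (hj : j ≤ d) (h : G.Adj v (x j)) (i : ℕ) (hi : i ≤ d) :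
    G.dist v (x i) ≤ (i - j) + (j - i) + 1 ∧ (i - j) + (j - i) ≤ G.dist v (x i) + 1 := by
  have h1 := adj_le hc h (x i)
  have h2 := adj_le hc h.symm (x i)
  rw [H.hx j i hj hi] at h1 h2
  omega

theorem Half.dist_eq (hc : G.Connected) {d : ℕ} (hd : 3 ≤ d) {x : ℕ → V} {u : V}
    (H : Half G d x u) : G.dist u (x 0) = G.dist u (x 1) + 1 := by
  have h1 : G.Adj (x 1) (x 0) := by
    rw [← SimpleGraph.dist_eq_one_iff_adj, H.hx 1 0 (by omega) (by omega)]
  have h2 := adj_le hc h1.symm u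
  rw [SimpleGraph.dist_comm, SimpleGraph.dist_comm (u := x 1)] at h2
  have := H.hu
  omega

theorem Half.two_le (hc : G.Connected) {d : ℕ} (hd : 3 ≤ d) {x : ℕ → V} {u : V}
    (H : Half G d x u) : 2 ≤ G.dist u (x 0) := by
  have h1 := H.dist_eq hc hd
  have h2 := hc.pos_dist_of_ne (H.hne 1 (by omega))
  omega

/-- `u` is adjacent to the path vertex one level below it -/
theorem Half.adj_pred (hc : G.Connected) {d : ℕ} (hd : 3 ≤ d) {x : ℕ → V} {u : V}
    (H : Half G d x u) : ∃ j, 1 ≤ j ∧ j ≤ d ∧ j + 1 = G.dist u (x 0) ∧ G.Adj u (x j) := by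
  have h1 := H.dist_eq hc hd
  have h2 := H.two_le hc hd
  obtain ⟨n, hn⟩ : ∃ n, G.dist u (x 1) = n + 1 := ⟨G.dist u (x 1) - 1, by omega⟩
  obtain ⟨z, hz, hz1⟩ := exists_step hc hn
  have h3 := adj_le hc hz (x 0)
  rcases H.hU z (by omega) with rfl | ⟨i, hi1, hi, rfl⟩
  · exact absurd hz (G.loopless.irrefl _)
  · refine ⟨i, hi1, hi, ?_, hz⟩
    rw [H.hx i 1 hi (by omega)] at hz1
    omega

theorem Half.not_W {d : ℕ} {x : ℕ → V} {u v : V} (H : Half G d x u) (hvu : v ≠ u)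
    (hv : ∀ i, i ≤ d → v ≠ x i) : G.dist v (x 0) ≤ G.dist v (x 1) := by
  by_contra h
  rcases H.hU v (by omega) with h1 | ⟨i, _, hi, h1⟩
  · exact hvu h1
  · exact hv i hi h1

/-- if `u ≠ u'` then `u` has only one neighbour among `x 1, ..., x (d-2)` -/
theorem unique_adj (hc : G.Connected) {d : ℕ} (hd : 3 ≤ d) {x : ℕ → V} {u u' : V}
    (H : Half G d x u) (H' : Half G d (fun i => x (d - i)) u') (hne : u ≠ u')
    {j : ℕ} (hj1 : 1 ≤ j) (hj : j + 2 ≤ d) (ha : G.Adj u (x j)) : j + 1 = G.dist u (x 0) := by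
  have e1 := H.dist_eq hc hd
  have hW := H'.not_W hne (fun i hi => H.hne _ (by omega))
  simp only [Nat.sub_zero] at hW
  have b0 := H.bd hc (by omega) ha 0 (by omega)
  have bd1 := H.bd hc (by omega) ha (d-1) (by omega)
  have bd := H.bd hc (by omega) ha d le_rfl
  have tri := hc.dist_triangle (u := x 0) (v := u) (w := x d)
  rw [H.hx 0 d (by omega) le_rfl, SimpleGraph.dist_comm (u := x 0)] at tri
  by_contra hcon
  have hl : G.dist u (x 0) = j := by omega
  obtain ⟨z, hz, hz1⟩ := exists_step hc (v := u) (w := x d) (n := d - j - 1) (by omega)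
  have t2 := hc.dist_triangle (u := x 0) (v := z) (w := x d)
  rw [H.hx 0 d (by omega) le_rfl, SimpleGraph.dist_comm (u := x 0)] at t2
  have t3 := adj_le hc hz.symm (x 1)
  rcases H.hU z (by omega) with rfl | ⟨i, hi1, hi, rfl⟩
  · exact absurd hz (G.loopless.irrefl _)
  · rw [H.hx i d hi le_rfl] at hz1
    have b3 := H.bd hc hi hz (d-1) (by omega)
    omega

/-- the off-path neighbours of `x j` -/
theorem level (hc : G.Connected) {d : ℕ} (hd : 3 ≤ d) {x : ℕ → V} {u u' : V}
    (H : Half G d x u) (H' : Half G d (fun i => x (d - i)) u')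
    {j : ℕ} (hj1 : 1 ≤ j) (hj : j + 1 ≤ d) {v : V} (ha : G.Adj v (x j)) (h1 : v ≠ x (j-1))
    (h2 : v ≠ x (j+1)) (h3 : v ≠ u) (h4 : v ≠ u') :
    (∀ i, i ≤ d → v ≠ x i) ∧ G.dist v (x 0) = j ∧ G.dist v (x (d-1)) = d - j := by
  have hv : ∀ i, i ≤ d → v ≠ x i := by
    rintro i hi rfl
    have := SimpleGraph.dist_eq_one_iff_adj.2 ha
    rw [H.hx i j hi (by omega)] at this
    have : i = j - 1 ∨ i = j + 1 := by omega
    rcases this with rfl | rfl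
    · exact h1 rfl
    · exact h2 rfl
  have a := H.not_W h3 hv
  have b := H'.not_W h4 (fun i _ => hv (d - i) (by omega))
  simp only [Nat.sub_zero] at b
  have b0 := H.bd hc (by omega) ha 0 (by omega)
  have b1 := H.bd hc (by omega) ha 1 (by omega)
  have bd1 := H.bd hc (by omega) ha (d-1) (by omega)
  have bd := H.bd hc (by omega) ha d le_rfl
  have tri := hc.dist_triangle (u := x 0) (v := v) (w := x d)
  rw [H.hx 0 d (by omega) le_rfl, SimpleGraph.dist_comm (u := x 0)] at tri
  exact ⟨hv, by omega, by omega⟩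

theorem no_twin (hc : G.Connected) {d : ℕ} (hd : 3 ≤ d) (hndb : IsNDB G (d + 1)) {p q : V}
    (hpq : G.Adj p q) (h : ∀ w, G.Adj p w → w = q ∨ G.Adj q w) : False := by
  classical
  have hW := (hndb _ _ hpq).1
  have hsub : ndbW G p q ⊆ {p} := by
    intro v hv
    simp only [ndbW, Finset.mem_filter, Finset.mem_univ, true_and] at hv
    rw [Finset.mem_singleton]
    by_contra hne
    have hpos := hc.pos_dist_of_ne hne
    rw [SimpleGraph.dist_comm, SimpleGraph.dist_comm (v := q)] at hv
    rw [SimpleGraph.dist_comm] at hpos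
    obtain ⟨w, hw, hw1⟩ := exists_step hc (v := p) (w := v) (n := G.dist p v - 1) (by omega)
    rcases h w hw with rfl | hq
    · omega
    · have := adj_le hc hq v
      omega
  have := Finset.card_le_card hsub
  rw [hW, Finset.card_singleton] at this
  omega

/-- three distinct neighbours exhaust the neighbourhood in a cubic graph -/
theorem cubic_nbrs [DecidableRel G.Adj] (hreg : G.IsRegularOfDegree 3) {p a b c : V}
    (ha : G.Adj p a) (hb : G.Adj p b) (hcc : G.Adj p c) (hab : a ≠ b) (hac : a ≠ c) (hbc : b ≠ c)
    {w : V} (hw : G.Adj p w) : w = a ∨ w = b ∨ w = c := by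
  classical
  have hsub : ({a, b, c} : Finset V) ⊆ G.neighborFinset p := by
    intro t ht
    simp only [Finset.mem_insert, Finset.mem_singleton] at ht
    rw [SimpleGraph.mem_neighborFinset]
    rcases ht with rfl | rfl | rfl <;> assumption
  have hcard : ({a, b, c} : Finset V).card = 3 := by
    rw [Finset.card_eq_three]; exact ⟨a, b, c, hab, hac, hbc, rfl⟩
  have heq := Finset.eq_of_subset_of_card_le hsub (by
    rw [hcard, SimpleGraph.card_neighborFinset_eq_degree]; exact (hreg p).le)
  have : w ∈ ({a, b, c} : Finset V) := by rw [heq, SimpleGraph.mem_neighborFinset]; exact hw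
  simpa using this

/-- In a cubic graph, no off-path vertex is adjacent to three consecutive path vertices. -/
theorem cubic_no_three [DecidableRel G.Adj] (hc : G.Connected) (hreg : G.IsRegularOfDegree 3)
    {d : ℕ} (hd : 3 ≤ d) (hndb : IsNDB G (d + 1)) {x : ℕ → V} {u v : V} (H : Half G d x u)
    (hv : ∀ i, i ≤ d → v ≠ x i) {j : ℕ} (hj : j + 2 ≤ d)
    (h0 : G.Adj v (x j)) (h1 : G.Adj v (x (j+1))) (h2 : G.Adj v (x (j+2))) : False := by
  have e0 : G.Adj (x (j+1)) (x j) := by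
    rw [← SimpleGraph.dist_eq_one_iff_adj, H.hx _ _ (by omega) (by omega)]; omega
  have e2 : G.Adj (x (j+1)) (x (j+2)) := by
    rw [← SimpleGraph.dist_eq_one_iff_adj, H.hx _ _ (by omega) (by omega)]; omega
  have e02 : x j ≠ x (j+2) := by
    intro h
    have := H.hx j (j+2) (by omega) (by omega)
    rw [h, SimpleGraph.dist_self] at this
    omega
  refine no_twin hc hd hndb h1.symm ?_
  intro w hw
  rcases cubic_nbrs hreg e0 e2 h1.symm e02 (hv _ (by omega)).symm (hv _ (by omega)).symm hw
    with rfl | rfl | rfl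
  · exact Or.inr h0
  · exact Or.inr h2
  · exact Or.inl rfl

/-- The number of neighbours of `u'` among `x 1, ..., x (d-1)`. -/
theorem full_bound [DecidableEq V] [DecidableRel G.Adj] (hc : G.Connected) {k : ℕ} (hreg : G.IsRegularOfDegree k)
    {d : ℕ} (hd : 4 ≤ d) (hndb : IsNDB G (d + 1)) {x : ℕ → V} {u u' : V}
    (H : Half G d x u) (H' : Half G d (fun i => x (d - i)) u') :
    ((Icc 1 (d-1)).filter (fun j => G.Adj u' (x j))).card + (if u = u' then 0 else 1) ≤ 3 ∧
    (k = 3 → ((Icc 1 (d-1)).filter (fun j => G.Adj u' (x j))).card +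
      (if u = u' then 0 else 1) ≤ 2) := by
  have hv' : ∀ i, i ≤ d → u' ≠ x i := fun i hi => by
    have := H'.hne (d - i) (by omega)
    simpa [show d - (d - i) = i by omega] using this
  by_cases huu : u = u'
  · subst huu
    simp only [if_true, Nat.add_zero]
    obtain ⟨j0, hj1, hj0, hjl, ha⟩ := H.adj_pred hc (by omega)
    have hsub : (Icc 1 (d-1)).filter (fun j => G.Adj u (x j)) ⊆ {j0, j0+1, j0+2} := by
      intro j hj
      simp only [Finset.mem_filter, Finset.mem_Icc] at hj
      have := H.bd hc (by omega) hj.2 0 (by omega)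
      simp only [Finset.mem_insert, Finset.mem_singleton]
      omega
    refine ⟨(Finset.card_le_card hsub).trans Finset.card_le_three, ?_⟩
    rintro rfl
    by_contra hcon
    have heq := Finset.eq_of_subset_of_card_le hsub
      (Finset.card_le_three.trans (by omega))
    have hm : ∀ j, j ∈ ({j0, j0+1, j0+2} : Finset ℕ) → j ≤ d - 1 ∧ G.Adj u (x j) := by
      intro j hj
      rw [← heq] at hj
      simp only [Finset.mem_filter, Finset.mem_Icc] at hj
      exact ⟨hj.1.2, hj.2⟩
    have m1 := hm (j0+1) (by simp)
    have m2 := hm (j0+2) (by simp)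
    exact cubic_no_three hc hreg (by omega) hndb H hv' (by omega) ha m1.2 m2.2
  · simp only [if_neg huu]
    obtain ⟨i0, hi1, hi0, hil, ha⟩ := H'.adj_pred hc (by omega)
    simp only [Nat.sub_zero] at hil
    have H'' : Half G d (fun i => x (d - (d - i))) u := by
      have hxx : ∀ i, i ≤ d → x (d - (d - i)) = x i := fun i hi => by
        rw [show d - (d - i) = i by omega]
      refine ⟨?_, ?_, ?_, ?_⟩
      · intro i j hi hj
        rw [hxx i hi, hxx j hj]; exact H.hx i j hi hj
      · simp only [hxx 1 (by omega), hxx 0 (by omega)]; exact H.hu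
      · intro i hi; simp only [hxx i hi]; exact H.hne i hi
      · intro v hv
        simp only [hxx 1 (by omega), hxx 0 (by omega)] at hv
        rcases H.hU v hv with h | ⟨i, h1, h2, h3⟩
        · exact Or.inl h
        · exact Or.inr ⟨i, h1, h2, by rw [hxx i h2]; exact h3⟩
    have hu2 : ∀ j, 2 ≤ j → j ≤ d - 1 → G.Adj u' (x j) → j = d - i0 := by
      intro j h2 hj hja
      have hja' : G.Adj u' (x (d - (d - j))) := by rwa [show d - (d - j) = j by omega]
      have := unique_adj hc (by omega) H' H'' (Ne.symm huu) (j := d - j) (by omega) (by omega) hja'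
      simp only [Nat.sub_zero] at this
      omega
    have hsub : (Icc 1 (d-1)).filter (fun j => G.Adj u' (x j)) ⊆ {1, d - i0} := by
      intro j hj
      simp only [Finset.mem_filter, Finset.mem_Icc] at hj
      simp only [Finset.mem_insert, Finset.mem_singleton]
      by_cases h1 : j = 1
      · exact Or.inl h1
      · exact Or.inr (hu2 j (by omega) hj.1.2 hj.2)
    refine ⟨by have := (Finset.card_le_card hsub).trans Finset.card_le_two; omega, ?_⟩
    rintro rfl
    have hsub1 : (Icc 1 (d-1)).filter (fun j => G.Adj u' (x j)) ⊆ {d - i0} := by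
      intro j hj
      have hj' := hsub hj
      simp only [Finset.mem_filter, Finset.mem_Icc] at hj
      simp only [Finset.mem_insert, Finset.mem_singleton] at hj' ⊢
      rcases hj' with rfl | h
      · by_contra hcon
        have hW := H.not_W (Ne.symm huu) hv'
        have h1 := SimpleGraph.dist_eq_one_iff_adj.2 hj.2
        have hp := hc.pos_dist_of_ne (hv' 0 (by omega))
        have h01 : G.Adj u' (x 0) := by
          rw [← SimpleGraph.dist_eq_one_iff_adj]; omega
        have b1 := H.bd hc (by omega) h01 d le_rfl
        have b2 := H.bd hc (by omega) hj.2 d le_rfl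
        have b3 := H.bd hc (by omega) h01 (d - i0) (by omega)
        have b4 := H.bd hc (by omega) ha 0 (by omega)
        have hi : d - i0 = 2 := by omega
        simp only [hi] at ha
        exact cubic_no_three hc hreg (by omega) hndb H hv' (j := 0) (by omega) h01 hj.2 ha
      · exact h
    have := Finset.card_le_card hsub1
    rw [Finset.card_singleton] at this
    omega

theorem main_bound [DecidableRel G.Adj] (hc : G.Connected) {k : ℕ} (hreg : G.IsRegularOfDegree k)
    {d : ℕ} (hd : 4 ≤ d) (hdiam : HasDiam G d) (hndb : IsNDB G (d + 1)) :
    k * (d - 2) ≤ 2 * (d - 2) + 4 ∧ (k = 3 → k * (d - 2) ≤ 2 * (d - 2) + 3) := by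
  classical
  obtain ⟨_, v, w, hvw⟩ := hdiam
  obtain ⟨x, hx⟩ := exists_geodesic hc hvw
  obtain ⟨u, H⟩ := exists_half (by omega) hndb x hx
  obtain ⟨u', H'⟩ := exists_half (by omega) hndb _ (rev_geo hx)
  have hd3 : 3 ≤ d := by omega
  have hv' : ∀ i, i ≤ d → u' ≠ x i := fun i hi => by
    have := H'.hne (d - i) (by omega)
    simpa [show d - (d - i) = i by omega] using this
  have hfull := full_bound hc hreg hd hndb H H'
  set F := (Icc 1 (d-1)).filter (fun j => G.Adj u' (x j)) with hF
  set J := Icc 1 (d-2) with hJ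
  set R : ℕ → Finset V := fun j => G.neighborFinset (x j) \ {x (j-1), x (j+1), u, u'} with hR
  have hRmem : ∀ j ∈ J, ∀ t ∈ R j, (∀ i, i ≤ d → t ≠ x i) ∧ t ≠ u' ∧ G.dist t (x 0) = j ∧
      G.dist t (x (d-2)) < G.dist t (x (d-1)) := by
    intro j hj t ht
    simp only [hJ, Finset.mem_Icc] at hj
    simp only [hR, Finset.mem_sdiff, SimpleGraph.mem_neighborFinset, Finset.mem_insert,
      Finset.mem_singleton, not_or] at ht
    obtain ⟨ha, h1, h2, h3, h4⟩ := ht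
    have hl := level hc hd3 H H' hj.1 (by omega) ha.symm h1 h2 h3 h4
    have b := H.bd hc (by omega) ha.symm (d-2) (by omega)
    exact ⟨hl.1, h4, hl.2.1, by omega⟩
  have hRcard : ∀ j ∈ J, k ≤ (R j).card + 2 + (if u ≠ u' ∧ G.Adj u (x j) then 1 else 0) +
      (if G.Adj u' (x j) then 1 else 0) := by
    intro j hj
    set P : Finset V := {x (j-1), x (j+1)} ∪ ((if u ≠ u' ∧ G.Adj u (x j) then {u} else ∅) ∪
      (if G.Adj u' (x j) then {u'} else ∅)) with hP
    have hsub : G.neighborFinset (x j) ⊆ R j ∪ P := by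
      intro t ht
      have ht' := ht
      rw [SimpleGraph.mem_neighborFinset] at ht'
      simp only [hR, hP, Finset.mem_union, Finset.mem_sdiff, Finset.mem_insert,
        Finset.mem_singleton]
      by_cases a1 : t = x (j-1)
      · tauto
      by_cases a2 : t = x (j+1)
      · tauto
      by_cases a4 : t = u'
      · subst a4
        simp [ht'.symm]
      by_cases a3 : t = u
      · subst a3
        simp [ht'.symm, a4]
      tauto
    have h1 := Finset.card_le_card hsub
    rw [SimpleGraph.card_neighborFinset_eq_degree, hreg (x j)] at h1
    have h2 := Finset.card_union_le (R j) P
    have h3 : P.card ≤ 2 + ((if u ≠ u' ∧ G.Adj u (x j) then 1 else 0) +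
      (if G.Adj u' (x j) then 1 else 0)) := by
      refine (Finset.card_union_le _ _).trans (Nat.add_le_add Finset.card_le_two ?_)
      refine (Finset.card_union_le _ _).trans (Nat.add_le_add ?_ ?_)
      · split_ifs <;> simp
      · split_ifs <;> simp
    omega
  have hsum := Finset.sum_le_sum hRcard
  simp only [Finset.sum_add_distrib, Finset.sum_const, smul_eq_mul, ← Finset.card_filter] at hsum
  have hJc : J.card = d - 2 := by simp [hJ]
  rw [hJc] at hsum
  have hBu : (J.filter (fun j => u ≠ u' ∧ G.Adj u (x j))).card ≤ if u = u' then 0 else 1 := by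
    split_ifs with huu
    · simp [huu]
    · rw [Finset.card_le_one]
      intro a ha b hb
      simp only [hJ, Finset.mem_filter, Finset.mem_Icc] at ha hb
      have h1 := unique_adj hc hd3 H H' huu ha.1.1 (by omega) ha.2.2
      have h2 := unique_adj hc hd3 H H' huu hb.1.1 (by omega) hb.2.2
      omega
  -- the large subset of W
  set X := (range (d-1)).image x with hX
  set Y := J.biUnion R with hY
  have hXc : X.card = d - 1 := by
    rw [hX, Finset.card_image_of_injOn, Finset.card_range]
    intro i hi j hj hij
    simp only [Finset.coe_range, Set.mem_Iio] at hi hj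
    have := hx i j (by omega) (by omega)
    rw [hij, SimpleGraph.dist_self] at this
    omega
  have hYc : Y.card = ∑ j ∈ J, (R j).card := by
    rw [hY, Finset.card_biUnion]
    intro i hi j hj hij
    change Disjoint (R i) (R j)
    rw [Finset.disjoint_left]
    intro t h1 h2
    have := (hRmem i hi t h1).2.2.1
    have := (hRmem j hj t h2).2.2.1
    omega
  have hXY : Disjoint X Y := by
    rw [Finset.disjoint_left]
    intro t h1 h2
    simp only [hX, Finset.mem_image, Finset.mem_range] at h1
    obtain ⟨i, hi, rfl⟩ := h1
    simp only [hY, Finset.mem_biUnion] at h2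
    obtain ⟨j, hj, ht⟩ := h2
    exact (hRmem j hj _ ht).1 i (by omega) rfl
  have hXYc : (X ∪ Y).card = (d - 1) + ∑ j ∈ J, (R j).card := by
    rw [Finset.card_union_of_disjoint hXY, hXc, hYc]
  have hadj : G.Adj (x (d-2)) (x (d-1)) := by
    rw [← SimpleGraph.dist_eq_one_iff_adj, hx _ _ (by omega) (by omega)]; omega
  have hW := (hndb _ _ hadj).1
  have hsubW : X ∪ Y ⊆ ndbW G (x (d-2)) (x (d-1)) := by
    intro t ht
    simp only [ndbW, Finset.mem_filter, Finset.mem_univ, true_and]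
    rcases Finset.mem_union.1 ht with ht | ht
    · simp only [hX, Finset.mem_image, Finset.mem_range] at ht
      obtain ⟨i, hi, rfl⟩ := ht
      rw [hx _ _ (by omega) (by omega), hx _ _ (by omega) (by omega)]
      omega
    · simp only [hY, Finset.mem_biUnion] at ht
      obtain ⟨j, hj, ht⟩ := ht
      exact (hRmem j hj _ ht).2.2.2
  have hu'n : u' ∉ X ∪ Y := by
    intro ht
    rcases Finset.mem_union.1 ht with ht | ht
    · simp only [hX, Finset.mem_image, Finset.mem_range] at ht
      obtain ⟨i, hi, h⟩ := ht
      exact hv' i (by omega) h.symm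
    · simp only [hY, Finset.mem_biUnion] at ht
      obtain ⟨j, hj, ht⟩ := ht
      exact (hRmem j hj _ ht).2.1 rfl
  obtain ⟨i0, hi1, hi0, hil, ha⟩ := H'.adj_pred hc hd3
  have e' := H'.dist_eq hc hd3
  simp only [Nat.sub_zero] at hil e'
  have hAF : J.filter (fun j => G.Adj u' (x j)) ⊆ F := by
    intro j hj
    simp only [hJ, hF, Finset.mem_filter, Finset.mem_Icc] at hj ⊢
    exact ⟨⟨hj.1.1, by omega⟩, hj.2⟩
  have hkey : (d - 1) + ∑ j ∈ J, (R j).card +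
      (J.filter (fun j => G.Adj u' (x j))).card + 1 ≤ d + 1 + F.card := by
    by_cases hi : i0 = 1
    · subst hi
      have h1 := Finset.card_le_card hsubW
      rw [hW, hXYc] at h1
      have h2 : J.filter (fun j => G.Adj u' (x j)) ⊂ F := by
        refine (Finset.ssubset_iff_of_subset hAF).2 ⟨d-1, ?_, ?_⟩
        · simp only [hF, Finset.mem_filter, Finset.mem_Icc]
          exact ⟨by omega, ha⟩
        · simp only [hJ, Finset.mem_filter, Finset.mem_Icc]
          omega
      have := Finset.card_lt_card h2
      omega
    · have hb := H.bd hc (by omega) ha (d-2) (by omega)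
      have h0 : insert u' (X ∪ Y) ⊆ ndbW G (x (d-2)) (x (d-1)) := by
        refine Finset.insert_subset ?_ hsubW
        simp only [ndbW, Finset.mem_filter, Finset.mem_univ, true_and]
        omega
      have h1 := Finset.card_le_card h0
      rw [hW, Finset.card_insert_of_notMem hu'n, hXYc] at h1
      have := Finset.card_le_card hAF
      omega
  have hmul1 : (d - 2) * k = k * (d - 2) := Nat.mul_comm _ _
  have hmul2 : (d - 2) * 2 = 2 * (d - 2) := Nat.mul_comm _ _
  rw [hmul1, hmul2] at hsum
  refine ⟨?_, fun hk => ?_⟩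
  · have := hfull.1
    omega
  · have := hfull.2 hk
    omega

end NDBProof

/-- For a regular NDB graph with valency `k`, diameter `d ≥ 3` and
`γ = d + 1`: if `k = 3` then `d ∈ {3,4,5}`; if `k = 4` then `d ∈ {3,4}`;
if `k = 5` then `d = 3`. -/
theorem stmt_5 {V : Type*} [Fintype V] (G : SimpleGraph V) [DecidableRel G.Adj]
    (hconn : G.Connected) (k d : ℕ) (hreg : G.IsRegularOfDegree k)
    (hd : 3 ≤ d) (hdiam : HasDiam G d) (hndb : IsNDB G (d + 1)) :
    (k = 3 → d = 3 ∨ d = 4 ∨ d = 5) ∧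
    (k = 4 → d = 3 ∨ d = 4) ∧
    (k = 5 → d = 3) := by
  have key : 4 ≤ d → _ := fun h => NDBProof.main_bound hconn hreg h hdiam hndb
  refine ⟨?_, ?_, ?_⟩
  · rintro rfl
    by_contra h
    have := (key (by omega)).2 rfl
    omega
  · rintro rfl
    by_contra h
    have := (key (by omega)).1
    omega
  · rintro rfl
    by_contra h
    have := (key (by omega)).1
    omega
end

section
/- Let Γ be a regular nicely distance-balanced graph with valency k = 3, diameter d ≥ 3 and γ(Γ) = d+1. Then Γ is isomorphic to the 3-dimensional hypercube graph Q_3 (the graph on the 8 binary strings of length 3, two strings being adjacent if they differ in exactly one coordinate). -/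
open SimpleGraph Finset

/-- The 3-dimensional hypercube graph `Q₃`: vertices are binary strings of
length 3, two strings being adjacent iff they differ in exactly one
coordinate. -/
def cubeQ3 : SimpleGraph (Fin 3 → Bool) :=
  SimpleGraph.fromRel fun x y => (Finset.univ.filter fun i => x i ≠ y i).card = 1


structure Hyp13 {V : Type*} [Fintype V] (G : SimpleGraph V) (d : ℕ) : Prop where
  conn : G.Connected
  nb : ∀ x, ∃ a b c, a ≠ b ∧ a ≠ c ∧ b ≠ c ∧ ∀ y, G.Adj x y ↔ (y = a ∨ y = b ∨ y = c)
  W : ∀ u v, G.Adj u v → (ndbW G u v).card = d + 1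
  le : ∀ u v, G.dist u v ≤ d
  ex : ∃ u v, G.dist u v = d
  hd : 3 ≤ d
  even : Even (Fintype.card V)

namespace Hyp13

variable {V : Type*} [Fintype V] {G : SimpleGraph V} {d : ℕ}

theorem third (H : Hyp13 G d) {x a b : V} (ha : G.Adj x a) (hb : G.Adj x b) (hab : a ≠ b) :
    ∃ c, c ≠ a ∧ c ≠ b ∧ G.Adj x c ∧ ∀ y, G.Adj x y → y = a ∨ y = b ∨ y = c := by
  obtain ⟨p, q, r, h1, h2, h3, h⟩ := H.nb x
  have ha' := (h a).1 ha
  have hb' := (h b).1 hb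
  have hp := (h p).2 (by simp)
  have hq := (h q).2 (by simp)
  have hr := (h r).2 (by simp)
  rcases ha' with rfl | rfl | rfl <;> rcases hb' with rfl | rfl | rfl
  · exact absurd rfl hab
  · exact ⟨r, h2.symm, h3.symm, hr, fun y hy => (h y).1 hy⟩
  · exact ⟨q, h1.symm, h3, hq, fun y hy => by have := (h y).1 hy; tauto⟩
  · exact ⟨r, h3.symm, h2.symm, hr, fun y hy => by have := (h y).1 hy; tauto⟩
  · exact absurd rfl hab
  · exact ⟨p, h1, h2, hp, fun y hy => by have := (h y).1 hy; tauto⟩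
  · exact ⟨q, h3, h1.symm, hq, fun y hy => by have := (h y).1 hy; tauto⟩
  · exact ⟨p, h2, h1, hp, fun y hy => by have := (h y).1 hy; tauto⟩
  · exact absurd rfl hab

/-- three distinct neighbours are all the neighbours -/
theorem full (H : Hyp13 G d) {x a b c : V} (ha : G.Adj x a) (hb : G.Adj x b) (hc : G.Adj x c)
    (hab : a ≠ b) (hac : a ≠ c) (hbc : b ≠ c) : ∀ y, G.Adj x y → y = a ∨ y = b ∨ y = c := by
  obtain ⟨e, h1, h2, h3, h⟩ := H.third ha hb hab
  have := h c hc
  have : c = e := by tauto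
  subst this
  exact h

theorem two (H : Hyp13 G d) {x a : V} (ha : G.Adj x a) :
    ∃ b c, b ≠ a ∧ c ≠ a ∧ b ≠ c ∧ G.Adj x b ∧ G.Adj x c ∧
      ∀ y, G.Adj x y → y = a ∨ y = b ∨ y = c := by
  obtain ⟨p, q, r, h1, h2, h3, h⟩ := H.nb x
  have hp := (h p).2 (by simp)
  have hq := (h q).2 (by simp)
  have : ∃ b, G.Adj x b ∧ b ≠ a := by
    by_cases hpa : p = a
    · exact ⟨q, hq, fun h => h1 (hpa.trans h.symm)⟩
    · exact ⟨p, hp, hpa⟩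
  obtain ⟨b, hb, hba⟩ := this
  obtain ⟨c, hc1, hc2, hc3, hc⟩ := H.third ha hb hba.symm
  exact ⟨b, c, hba, hc1, hc2.symm, hb, hc3, hc⟩

theorem dadj (H : Hyp13 G d) {x y : V} (z : V) (h : G.Adj x y) : G.dist z x ≤ G.dist z y + 1 := by
  have h1 := H.conn.dist_triangle (u := z) (v := y) (w := x)
  have : G.dist y x = 1 := SimpleGraph.dist_eq_one_iff_adj.2 h.symm
  omega

theorem dadj' (H : Hyp13 G d) {x y : V} (z : V) (h : G.Adj x y) : G.dist x z ≤ G.dist y z + 1 := by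
  rw [SimpleGraph.dist_comm, SimpleGraph.dist_comm (u := y)]
  exact H.dadj z h

theorem zero (H : Hyp13 G d) {x y : V} : G.dist x y = 0 ↔ x = y := H.conn.dist_eq_zero_iff

theorem pos (H : Hyp13 G d) {x y : V} (h : x ≠ y) : 0 < G.dist x y := H.conn.pos_dist_of_ne h

theorem pred (H : Hyp13 G d) {z x : V} (h : z ≠ x) : ∃ y, G.Adj x y ∧ G.dist z y + 1 = G.dist z x := by
  obtain ⟨p, hp⟩ := H.conn.exists_walk_length_eq_dist x z
  cases p with
  | nil => exact absurd rfl h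
  | cons hadj q =>
    rename_i y
    refine ⟨y, hadj, ?_⟩
    have h1 := SimpleGraph.dist_le q
    have h2 := H.dadj z hadj
    simp only [SimpleGraph.Walk.length_cons] at hp
    rw [SimpleGraph.dist_comm (u := y)] at h1
    rw [SimpleGraph.dist_comm] at hp
    omega

theorem pred' (H : Hyp13 G d) {z x : V} (h : x ≠ z) :
    ∃ y, G.Adj x y ∧ G.dist y z + 1 = G.dist x z := by
  obtain ⟨y, h1, h2⟩ := H.pred h.symm
  exact ⟨y, h1, by rw [SimpleGraph.dist_comm (u := y), SimpleGraph.dist_comm (u := x)]; exact h2⟩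

theorem memW {u v x : V} : x ∈ ndbW G u v ↔ G.dist x u < G.dist x v := by simp [ndbW]

theorem fullW (H : Hyp13 G d) {u v : V} (h : G.Adj u v) (S : Finset V) (hS : d + 1 ≤ S.card)
    (hSW : ∀ y ∈ S, G.dist y u < G.dist y v) : ∀ y, G.dist y u < G.dist y v → y ∈ S := by
  have : S = ndbW G u v := Finset.eq_of_subset_of_card_le (fun y hy => memW.2 (hSW y hy))
    (by rw [H.W u v h]; exact hS)
  intro y hy
  rw [this]; exact memW.2 hy

theorem overW (H : Hyp13 G d) {u v : V} (h : G.Adj u v) (S : Finset V) (hS : d + 1 < S.card)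
    (hSW : ∀ y ∈ S, G.dist y u < G.dist y v) : False := by
  have : S.card ≤ (ndbW G u v).card := Finset.card_le_card (fun y hy => memW.2 (hSW y hy))
  rw [H.W u v h] at this
  omega

/-- counting lemma -/
theorem cnt (H : Hyp13 G d) (x : V) (S : Finset V)
    (hS : ∀ z ∈ S, z ≠ x ∧ ∃ y y', y ≠ y' ∧ G.Adj x y ∧ G.Adj x y' ∧
      G.dist z y < G.dist z x ∧ G.dist z y' < G.dist z x) :
    Fintype.card V + S.card ≤ 3 * d + 4 := by
  classical
  obtain ⟨a, b, c, h1, h2, h3, h⟩ := H.nb x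
  have ha := (h a).2 (by simp)
  have hb := (h b).2 (by simp)
  have hc := (h c).2 (by simp)
  have wa := H.W a x ha.symm
  have wb := H.W b x hb.symm
  have wc := H.W c x hc.symm
  have key : ∑ z : V, ((1 : ℕ) + if z ∈ S then 1 else 0) ≤
      ∑ z : V, ((if G.dist z a < G.dist z x then 1 else 0) +
        (if G.dist z b < G.dist z x then 1 else 0) +
        (if G.dist z c < G.dist z x then 1 else 0) + (if z = x then 1 else 0)) := by
    apply Finset.sum_le_sum
    intro z _
    by_cases hz : z = x
    · have : z ∉ S := fun hh => (hS z hh).1 hz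
      subst hz; simp [this]
    · by_cases hzS : z ∈ S
      · obtain ⟨_, y, y', hy, hay, hay', hl, hl'⟩ := hS z hzS
        rw [h] at hay hay'
        simp only [hzS, if_true]
        rcases hay with rfl | rfl | rfl <;> rcases hay' with rfl | rfl | rfl <;>
          first | exact absurd rfl hy | (simp only [hl, hl', if_true]; omega)
      · obtain ⟨y, hy, hyd⟩ := H.pred hz
        rw [h] at hy
        simp only [hzS, if_false]
        rcases hy with rfl | rfl | rfl <;>
          (have : G.dist z y < G.dist z x := by omega) <;>
          (simp only [this, if_true]; omega)
  simp only [Finset.sum_add_distrib, Finset.sum_boole, Finset.sum_const, Finset.card_univ,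
    smul_eq_mul, mul_one, Finset.filter_mem_eq_inter, Finset.univ_inter, Nat.cast_id] at key
  simp only [ndbW] at wa wb wc
  rw [wa, wb, wc] at key
  have hx : (Finset.univ.filter fun z => z = x).card = 1 :=
    Finset.card_eq_one.2 ⟨x, by ext; simp⟩
  rw [hx] at key
  omega

end Hyp13

/-- a geodesic of length `d` given as a function on indices -/
structure Geo13 {V : Type*} (G : SimpleGraph V) (d : ℕ) (p : ℕ → V) : Prop where
  adj : ∀ i, i < d → G.Adj (p i) (p (i + 1))
  len : G.dist (p 0) (p d) = d

namespace Geo13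
variable {V : Type*} [Fintype V] {G : SimpleGraph V} {d : ℕ} {p : ℕ → V}

theorem ub (hp : Geo13 G d p) (H : Hyp13 G d) (i k : ℕ) (h : i + k ≤ d) :
    G.dist (p i) (p (i + k)) ≤ k := by
  induction k with
  | zero => simp
  | succ k ih =>
    have h1 := ih (by omega)
    have h2 := H.dadj (p i) (hp.adj (i + k) (by omega)).symm
    rw [← add_assoc]
    omega

theorem dist (hp : Geo13 G d p) (H : Hyp13 G d) {i j : ℕ} (hij : i ≤ j) (hj : j ≤ d) :
    G.dist (p i) (p j) = j - i := by
  have h1 := hp.ub H 0 i (by omega)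
  have h2 := hp.ub H i (j - i) (by omega)
  have h3 := hp.ub H j (d - j) (by omega)
  rw [show i + (j - i) = j by omega] at h2
  rw [show j + (d - j) = d by omega] at h3
  rw [zero_add] at h1
  have h4 := H.conn.dist_triangle (u := p 0) (v := p i) (w := p d)
  have h5 := H.conn.dist_triangle (u := p i) (v := p j) (w := p d)
  have := hp.len
  omega

theorem dist' (hp : Geo13 G d p) (H : Hyp13 G d) {i j : ℕ} (hij : i ≤ j) (hj : j ≤ d) :
    G.dist (p j) (p i) = j - i := by
  rw [SimpleGraph.dist_comm]; exact hp.dist H hij hj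

theorem inj (hp : Geo13 G d p) (H : Hyp13 G d) {i j : ℕ} (hi : i ≤ d) (hj : j ≤ d)
    (h : p i = p j) : i = j := by
  rcases le_total i j with hij | hij
  · have := hp.dist H hij hj
    rw [h, SimpleGraph.dist_self] at this; omega
  · have := hp.dist H hij hi
    rw [h, SimpleGraph.dist_self] at this; omega

theorem rev (hp : Geo13 G d p) : Geo13 G d (fun i => p (d - i)) := by
  constructor
  · intro i hi
    have := (hp.adj (d - (i + 1)) (by omega)).symm
    rw [show d - (i + 1) + 1 = d - i by omega] at this
    exact this
  · simp only [Nat.sub_zero, Nat.sub_self]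
    rw [SimpleGraph.dist_comm]; exact hp.len

theorem exists_geo (H : Hyp13 G d) {x y : V} (h : G.dist x y = d) :
    ∃ p, Geo13 G d p ∧ p 0 = x ∧ p d = y := by
  obtain ⟨w, hw⟩ := H.conn.exists_walk_length_eq_dist x y
  refine ⟨w.getVert, ⟨?_, ?_⟩, by simp, ?_⟩
  · intro i hi
    exact w.adj_getVert_succ (by omega)
  · rw [SimpleGraph.Walk.getVert_zero, ← h, ← hw, SimpleGraph.Walk.getVert_length, hw]
  · rw [← h, ← hw, SimpleGraph.Walk.getVert_length]

theorem cardIcc (hp : Geo13 G d p) (H : Hyp13 G d) (i : ℕ) [DecidableEq V] :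
    ((Finset.Icc i d).image p).card = d + 1 - i := by
  rw [Finset.card_image_of_injOn, Nat.card_Icc]
  intro a ha b hb hab
  simp at ha hb
  exact hp.inj H ha.2 hb.2 hab

/-- at most one extra element in `W (p 1) (p 0)` -/
theorem extra (hp : Geo13 G d p) (H : Hyp13 G d) {e : V} (he : G.dist e (p 1) < G.dist e (p 0))
    (hne : ∀ i, i ≤ d → e ≠ p i) (y : V) (hy : G.dist y (p 1) < G.dist y (p 0)) :
    y = e ∨ ∃ i, 1 ≤ i ∧ i ≤ d ∧ y = p i := by
  classical
  have hd := H.hd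
  have := H.fullW (hp.adj 0 (by omega)).symm (insert e ((Finset.Icc 1 d).image p)) (by
    rw [Finset.card_insert_of_notMem, hp.cardIcc H]
    · omega
    · simp only [Finset.mem_image, Finset.mem_Icc, not_exists, not_and]
      intro i hi h
      exact hne i hi.2 h.symm) (by
    intro z hz
    simp only [Finset.mem_insert, Finset.mem_image, Finset.mem_Icc] at hz
    rcases hz with rfl | ⟨i, hi, rfl⟩
    · exact he
    · rw [hp.dist' H (by omega) hi.2, hp.dist' H (by omega) hi.2]; omega) y hy
  simp only [Finset.mem_insert, Finset.mem_image, Finset.mem_Icc] at this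
  rcases this with h | ⟨i, hi, rfl⟩
  · exact Or.inl h
  · exact Or.inr ⟨i, hi.1, hi.2, rfl⟩

end Geo13

namespace Hyp13
variable {V : Type*} [Fintype V] {G : SimpleGraph V} {d : ℕ}

theorem uniq_geo (H : Hyp13 G d)
    (c1 : ∀ x z y y', G.Adj x y → G.Adj x y' → G.dist z y < G.dist z x →
      G.dist z y' < G.dist z x → y = y') (i : ℕ) :
    ∀ x z y y', G.dist x y = i → G.dist x y' = i → G.dist y z + i = G.dist x z →
      G.dist y' z + i = G.dist x z → y = y' := by
  induction i with
  | zero =>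
    intro x z y y' h h' _ _
    rw [H.zero] at h h'
    rw [← h, ← h']
  | succ i ih =>
    intro x z y y' h h' g g'
    obtain ⟨a, ha, hay⟩ := H.pred' (z := y) (x := x) (by rintro rfl; simp at h)
    obtain ⟨b, hb, hby⟩ := H.pred' (z := y') (x := x) (by rintro rfl; simp at h')
    have t1 := H.conn.dist_triangle (u := a) (v := y) (w := z)
    have t2 := H.conn.dist_triangle (u := b) (v := y') (w := z)
    have t3 := H.dadj' z ha
    have hab : a = b := by
      apply c1 x z a b ha hb
      · rw [SimpleGraph.dist_comm, SimpleGraph.dist_comm (u := z)]; omega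
      · rw [SimpleGraph.dist_comm, SimpleGraph.dist_comm (u := z)]; omega
    subst hab
    exact ih a z y y' (by omega) (by omega) (by omega) (by omega)

theorem two_up (H : Hyp13 G d) {p : ℕ → V} (hp : Geo13 G d p) {i j : ℕ} (hij : i ≠ j)
    (hi : 1 ≤ i ∧ i + 1 ≤ d) (hj : 1 ≤ j ∧ j + 1 ≤ d) {w w' : V}
    (hw : G.Adj (p i) w) (hw' : G.Adj (p j) w') (hn : w ≠ p (i + 1)) (hn' : w' ≠ p (j + 1))
    (hd : G.dist w (p 0) = i + 1) (hd' : G.dist w' (p 0) = j + 1) : False := by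
  have a1 := H.dadj' (p 1) hw.symm
  have a2 := H.dadj' (p 1) hw'.symm
  rw [hp.dist' H hi.1 (by omega)] at a1
  rw [hp.dist' H hj.1 (by omega)] at a2
  have key : ∀ k, k ≤ d → w ≠ p k := by
    rintro k hk rfl
    rw [hp.dist' H (by omega) hk] at hd
    exact hn (by congr 1)
  rcases hp.extra H (e := w) (by omega) key w' (by omega) with rfl | ⟨k, h1, h2, rfl⟩
  · omega
  · rw [hp.dist' H (by omega) h2] at hd'
    exact hn' (by congr 1)

theorem noBig (H : Hyp13 G d) : Fintype.card V < 3 * d + 4 := by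
  classical
  by_contra hcon
  have hcard : Fintype.card V = 3 * d + 4 := by
    have := H.cnt (H.ex.choose) ∅ (by simp)
    simp at this
    omega
  have hd := H.hd
  have hev := H.even
  have hd4 : 4 ≤ d := by
    by_contra h
    have : d = 3 := by omega
    rw [hcard, this] at hev
    exact absurd hev (by decide)
  have c1 : ∀ x z y y', G.Adj x y → G.Adj x y' → G.dist z y < G.dist z x →
      G.dist z y' < G.dist z x → y = y' := by
    intro x z y y' h1 h2 h3 h4
    by_contra hne
    have := H.cnt x {z} (by
      intro z' hz'
      simp at hz'
      subst hz'
      exact ⟨by rintro rfl; simp at h3, y, y', hne, h1, h2, h3, h4⟩)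
    simp at this
    omega
  obtain ⟨x, y, hxy⟩ := H.ex
  obtain ⟨p, hp, -, -⟩ := Geo13.exists_geo H hxy
  have step : ∀ i, 1 ≤ i → i + 1 ≤ d → ∃ w, G.Adj (p i) w ∧ w ≠ p (i - 1) ∧ w ≠ p (i + 1) ∧
      (G.dist w (p 0) = i + 1 ∨ G.dist w (p d) = d - i + 1) := by
    intro i h1 h2
    have e1 := (hp.adj (i - 1) (by omega)).symm
    rw [show i - 1 + 1 = i by omega] at e1
    have e2 := hp.adj i (by omega)
    obtain ⟨w, w1, w2, w3, -⟩ := H.third e1 e2 (fun h => by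
      have := hp.inj H (by omega) (by omega) h; omega)
    refine ⟨w, w3, w1, w2, ?_⟩
    have a1 := H.dadj' (p 0) w3.symm
    have a2 := H.dadj' (p d) w3.symm
    rw [hp.dist' H (by omega) (by omega)] at a1
    rw [hp.dist H (by omega) (by omega)] at a2
    have b1 : ¬ G.dist w (p 0) < i := by
      intro h
      apply w1
      apply c1 (p i) (p 0) _ _ w3 e1
      · rw [SimpleGraph.dist_comm, hp.dist H (by omega) (by omega)]; omega
      · rw [hp.dist H (by omega) (by omega), hp.dist H (by omega) (by omega)]; omega
    have b2 : ¬ G.dist w (p d) < d - i := by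
      intro h
      apply w2
      apply c1 (p i) (p d) _ _ w3 e2
      · rw [SimpleGraph.dist_comm, hp.dist' H (by omega) (by omega)]; omega
      · rw [hp.dist' H (by omega) (by omega), hp.dist' H (by omega) (by omega)]; omega
    by_contra hc
    push Not at hc
    apply w3.ne
    apply H.uniq_geo c1 i (p 0) (p d)
    · rw [hp.dist H (by omega) (by omega)]; omega
    · rw [SimpleGraph.dist_comm]; omega
    · rw [hp.dist H (by omega) (by omega), hp.len]; omega
    · rw [hp.len]; omega
  have up : ∀ i j w w', i ≠ j → 1 ≤ i → i + 1 ≤ d → 1 ≤ j → j + 1 ≤ d → G.Adj (p i) w →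
      G.Adj (p j) w' → w ≠ p (i + 1) → w' ≠ p (j + 1) → G.dist w (p 0) = i + 1 →
      G.dist w' (p 0) = j + 1 → False := by
    intro i j w w' hij h1 h2 h3 h4 h5 h6 h7 h8 h9 h10
    exact H.two_up hp hij ⟨h1, h2⟩ ⟨h3, h4⟩ h5 h6 h7 h8 h9 h10
  have dn : ∀ i j w w', i ≠ j → 1 ≤ i → i + 1 ≤ d → 1 ≤ j → j + 1 ≤ d → G.Adj (p i) w →
      G.Adj (p j) w' → w ≠ p (i - 1) → w' ≠ p (j - 1) → G.dist w (p d) = d - i + 1 →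
      G.dist w' (p d) = d - j + 1 → False := by
    intro i j w w' hij h1 h2 h3 h4 h5 h6 h7 h8 h9 h10
    refine H.two_up hp.rev (i := d - i) (j := d - j) (w := w) (w' := w') (by omega) ⟨by omega, by omega⟩
      ⟨by omega, by omega⟩ ?_ ?_ ?_ ?_ ?_ ?_
    · simpa [show d - (d - i) = i by omega] using h5
    · simpa [show d - (d - j) = j by omega] using h6
    · simpa [show d - (d - i + 1) = i - 1 by omega] using h7
    · simpa [show d - (d - j + 1) = j - 1 by omega] using h8
    · simpa using h9
    · simpa using h10
  obtain ⟨w1, q1, q2, q3, q4⟩ := step 1 (by omega) (by omega)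
  obtain ⟨w2, r1, r2, r3, r4⟩ := step 2 (by omega) (by omega)
  obtain ⟨w3, s1, s2, s3, s4⟩ := step 3 (by omega) (by omega)
  have u12 := up 1 2 w1 w2 (by omega) (by omega) (by omega) (by omega) (by omega) q1 r1 q3 r3
  have u13 := up 1 3 w1 w3 (by omega) (by omega) (by omega) (by omega) (by omega) q1 s1 q3 s3
  have u23 := up 2 3 w2 w3 (by omega) (by omega) (by omega) (by omega) (by omega) r1 s1 r3 s3
  have d12 := dn 1 2 w1 w2 (by omega) (by omega) (by omega) (by omega) (by omega) q1 r1 q2 r2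
  have d13 := dn 1 3 w1 w3 (by omega) (by omega) (by omega) (by omega) (by omega) q1 s1 q2 s2
  have d23 := dn 2 3 w2 w3 (by omega) (by omega) (by omega) (by omega) (by omega) r1 s1 r2 s2
  rcases q4 with q4 | q4 <;> rcases r4 with r4 | r4 <;> rcases s4 with s4 | s4 <;>
    first
    | exact u12 q4 r4
    | exact u13 q4 s4
    | exact u23 r4 s4
    | exact d12 q4 r4
    | exact d13 q4 s4
    | exact d23 r4 s4

end Hyp13

namespace Hyp13
variable {V : Type*} [Fintype V] {G : SimpleGraph V} {d : ℕ}

theorem triExtra (H : Hyp13 G d) {u v w a : V} (huv : G.Adj u v) (hvw : G.Adj v w)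
    (hua : G.Adj u a) (hall : ∀ y, G.Adj u y → y = v ∨ y = w ∨ y = a) :
    ∃ e, G.dist e a < G.dist e u ∧ G.dist e v ≤ G.dist e u ∧
      ∀ y, G.dist y a < G.dist y u → G.dist y v ≤ G.dist y u → y = e := by
  classical
  have hsub : (ndbW G u v).erase u ⊆ ndbW G a u := by
    intro z hz
    rw [Finset.mem_erase, memW] at hz
    rw [memW]
    obtain ⟨y, hy, hyd⟩ := H.pred hz.1
    have := H.dadj z hvw
    rcases hall y hy with rfl | rfl | rfl <;> omega
  have hu : u ∈ ndbW G u v := by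
    rw [memW, SimpleGraph.dist_self]; exact H.pos huv.ne
  have h1 : (ndbW G a u \ (ndbW G u v).erase u).card = 1 := by
    rw [Finset.card_sdiff_of_subset hsub, Finset.card_erase_of_mem hu, H.W _ _ huv, H.W _ _ hua.symm]
    omega
  rw [Finset.card_eq_one] at h1
  obtain ⟨e, he⟩ := h1
  have hmem : ∀ y, y ∈ ndbW G a u \ (ndbW G u v).erase u ↔
      (G.dist y a < G.dist y u ∧ G.dist y v ≤ G.dist y u) := by
    intro y
    rw [Finset.mem_sdiff, Finset.mem_erase, memW, memW]
    constructor
    · rintro ⟨h1, h2⟩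
      refine ⟨h1, ?_⟩
      by_contra h3
      apply h2
      refine ⟨?_, by omega⟩
      rintro rfl
      simp at h1
    · rintro ⟨h1, h2⟩
      exact ⟨h1, fun h => by omega⟩
  have := (hmem e).1 (by rw [he]; simp)
  refine ⟨e, this.1, this.2, ?_⟩
  intro y h1 h2
  have := (hmem y).2 ⟨h1, h2⟩
  rw [he] at this
  simpa using this

theorem triCard (H : Hyp13 G d) {u v w : V} (huv : G.Adj u v) (hvw : G.Adj v w)
    (huw : G.Adj u w) : 3 * d + 3 ≤ Fintype.card V ∧
      ∀ z, ¬ (G.dist z u = G.dist z v ∧ G.dist z v = G.dist z w) := by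
  classical
  have key : ∑ z : V, ((if G.dist z u < G.dist z v then 1 else 0) +
        (if G.dist z v < G.dist z u then 1 else 0) +
        (if G.dist z u < G.dist z w then 1 else 0) +
        (if G.dist z w < G.dist z u then 1 else 0) +
        (if G.dist z v < G.dist z w then 1 else 0) +
        (if G.dist z w < G.dist z v then 1 else 0) +
        2 * (if (G.dist z u = G.dist z v ∧ G.dist z v = G.dist z w) then 1 else 0)) =
      ∑ z : V, 2 := by
    apply Finset.sum_congr rfl
    intro z _
    have := H.dadj z huv
    have := H.dadj z huv.symm
    have := H.dadj z hvw
    have := H.dadj z hvw.symm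
    have := H.dadj z huw
    have := H.dadj z huw.symm
    split_ifs <;> omega
  simp only [Finset.sum_add_distrib, Finset.sum_boole, Finset.sum_const, Finset.card_univ,
    smul_eq_mul, mul_one, Nat.cast_id, ← Finset.mul_sum] at key
  have w1 := H.W _ _ huv
  have w2 := H.W _ _ huv.symm
  have w3 := H.W _ _ huw
  have w4 := H.W _ _ huw.symm
  have w5 := H.W _ _ hvw
  have w6 := H.W _ _ hvw.symm
  simp only [ndbW] at w1 w2 w3 w4 w5 w6
  rw [w1, w2, w3, w4, w5, w6] at key
  have hb := H.noBig
  refine ⟨by omega, ?_⟩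
  intro z hz
  have : 0 < (Finset.univ.filter fun z => G.dist z u = G.dist z v ∧ G.dist z v = G.dist z w).card :=
    Finset.card_pos.2 ⟨z, by simpa using hz⟩
  omega

theorem triCase1 (H : Hyp13 G d) {u v w a b : V} (huv : G.Adj u v) (hvw : G.Adj v w)
    (huw : G.Adj u w) (hua : G.Adj u a) (hall : ∀ y, G.Adj u y → y = v ∨ y = w ∨ y = a)
    (hvb : G.Adj v b) (hbll : ∀ y, G.Adj v y → y = u ∨ y = w ∨ y = b)
    (r : V) (hr1 : G.dist r u = G.dist r v) (hr2 : G.dist r u < G.dist r w) : False := by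
  classical
  obtain ⟨hn, hne⟩ := H.triCard huv hvw huw
  obtain ⟨e, e1, e2, e3⟩ := H.triExtra huv hvw hua hall
  obtain ⟨f, f1, f2, f3⟩ := H.triExtra huv.symm huw hvb hbll
  have hw := H.dadj r huw.symm
  have hru : r ≠ u := by
    rintro rfl
    have := H.pos huv.ne
    rw [SimpleGraph.dist_self] at hr1; omega
  have hrv : r ≠ v := by
    rintro rfl
    have := H.pos huv.ne.symm
    rw [SimpleGraph.dist_self] at hr1; omega
  have hposr := H.pos hru
  -- the apex is the extra element
  have ab : ∀ y, G.dist y u = G.dist y v → G.dist y u < G.dist y w → y ≠ u → y = e := by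
    intro y h1 h2 h3
    obtain ⟨t, ht, htd⟩ := H.pred h3
    rcases hall t ht with rfl | rfl | rfl
    · omega
    · omega
    · exact e3 y (by omega) (by omega)
  have ab' : ∀ y, G.dist y u = G.dist y v → G.dist y u < G.dist y w → y ≠ v → y = f := by
    intro y h1 h2 h3
    obtain ⟨t, ht, htd⟩ := H.pred h3
    rcases hbll t ht with rfl | rfl | rfl
    · omega
    · omega
    · exact f3 y (by omega) (by omega)
  have hre := ab r hr1 hr2 hru
  have hrf := ab' r hr1 hr2 hrv
  subst hre
  subst hrf
  obtain ⟨r1, hr1a, hr1d⟩ := H.pred' hru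
  obtain ⟨r2, hr2a, hr2d⟩ := H.pred' hrv
  have r1w := H.dadj r1 huw.symm
  have r2w := H.dadj r2 hvw.symm
  have r1w' := H.dadj' w hr1a
  have r2w' := H.dadj' w hr2a
  have r1v := H.dadj' v hr1a
  have r2u := H.dadj' u hr2a
  have hne12 : r1 ≠ r2 := by
    rintro rfl
    by_cases hu : r1 = u
    · subst hu
      have := H.pos huv.ne
      rw [SimpleGraph.dist_self] at hr1d; omega
    · have := ab r1 (by omega) (by omega) hu
      subst this
      exact hr1a.ne rfl
  obtain ⟨r3, g1, g2, g3, -⟩ := H.third hr1a hr2a hne12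
  have cw := fun y => SimpleGraph.dist_comm (G := G) (u := w) (v := y)
  have cu := fun y => SimpleGraph.dist_comm (G := G) (u := u) (v := y)
  have cv := fun y => SimpleGraph.dist_comm (G := G) (u := v) (v := y)
  have wexc : ∃ y y', y ≠ y' ∧ G.Adj r y ∧ G.Adj r y' ∧
      G.dist w y < G.dist w r ∧ G.dist w y' < G.dist w r :=
    ⟨r1, r2, hne12, hr1a, hr2a, by rw [cw, cw]; omega, by rw [cw, cw]; omega⟩
  have hrw : w ≠ r := by rintro rfl; simp at hr2
  have noU : ¬ G.dist r3 u < G.dist r u := by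
    intro h
    have := H.cnt r {u, w} (by
      intro z hz
      simp at hz
      rcases hz with rfl | rfl
      · exact ⟨hru.symm, r1, r3, g1.symm, hr1a, g3, by rw [cu, cu]; omega, by rw [cu, cu]; omega⟩
      · exact ⟨hrw, wexc⟩)
    rw [Finset.card_pair huw.ne] at this
    omega
  have noV : ¬ G.dist r3 v < G.dist r v := by
    intro h
    have := H.cnt r {v, w} (by
      intro z hz
      simp at hz
      rcases hz with rfl | rfl
      · exact ⟨hrv.symm, r2, r3, g2.symm, hr2a, g3, by rw [cv, cv]; omega, by rw [cv, cv]; omega⟩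
      · exact ⟨hrw, wexc⟩)
    rw [Finset.card_pair hvw.ne] at this
    omega
  have a1 := H.dadj' u g3.symm
  have a2 := H.dadj' v g3.symm
  have a3 := H.dadj' w g3
  have a4 := H.dadj' a g3.symm
  have a5 := H.dadj' b g3.symm
  by_cases hu : G.dist r3 u = G.dist r u + 1
  · have := e3 r3 (by omega) (by omega)
    subst this; exact g3.ne rfl
  by_cases hv : G.dist r3 v = G.dist r v + 1
  · have := f3 r3 (by omega) (by omega)
    subst this; exact g3.ne rfl
  have h3 := hne r3
  have := ab r3 (by omega) (by omega) (by rintro rfl; rw [SimpleGraph.dist_self] at noU; omega)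
  subst this; exact g3.ne rfl

theorem triCase2 (H : Hyp13 G d) {u v w a c : V} (huv : G.Adj u v) (hvw : G.Adj v w)
    (huw : G.Adj u w)
    (hua : G.Adj u a) (hau : ∀ y, G.Adj u y → y = v ∨ y = w ∨ y = a)
    (hwc : G.Adj w c) (hcu : c ≠ u) (hcv : c ≠ v)
    (hU : ∀ z, (G.dist z u < G.dist z v ∧ G.dist z u < G.dist z w) ∨
      (G.dist z v < G.dist z u ∧ G.dist z v < G.dist z w) ∨
      (G.dist z w < G.dist z u ∧ G.dist z w < G.dist z v))
    {ea ec : V}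
    (fa : ∀ y, G.dist y a < G.dist y u → G.dist y v ≤ G.dist y u → y = ea)
    (fc : ∀ y, G.dist y c < G.dist y w → G.dist y u ≤ G.dist y w → y = ec)
    (hc1 : G.dist ec c < G.dist ec w) (hc2 : G.dist ec u < G.dist ec w)
    (hc3 : G.dist ec u < G.dist ec v) : G.dist ea w < G.dist ea u := by
  have b1 := H.dadj ec huw.symm
  have b2 := H.dadj ec hwc
  have b3 := H.dadj ec huv.symm
  have hne : ec ≠ c := by
    rintro rfl
    have := H.pos hcu
    rw [SimpleGraph.dist_self] at b2
    omega
  obtain ⟨y, hy, hyd⟩ := H.pred' hne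
  have d1 := H.dadj y hwc
  have d2 := H.dadj' w hy
  have d3 := H.dadj' u hy.symm
  have d4 := H.dadj' a hy.symm
  have hecu : ec ≠ u := by
    rintro rfl
    rw [SimpleGraph.dist_self] at b1
    have : G.dist ec c = 0 := by omega
    exact hne (H.zero.1 this)
  have hal : G.dist ec a < G.dist ec u := by
    obtain ⟨t, ht, htd⟩ := H.pred hecu
    rcases hau t ht with rfl | rfl | rfl <;> omega
  have hyC : G.dist y w < G.dist y u := by
    by_contra h
    have hx := hU y
    by_cases h5 : G.dist y u ≤ G.dist y w
    · have := fc y (by omega) h5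
      subst this; exact hy.ne rfl
    · omega
  have hyv : G.dist y v ≤ G.dist y u := by
    have hx := hU y
    have := H.dadj y hvw
    omega
  have := fa y (by have := H.dadj y huw; omega) hyv
  subst this
  exact hyC

theorem noTri (H : Hyp13 G d) {u v w : V} (huv : G.Adj u v) (hvw : G.Adj v w)
    (huw : G.Adj u w) : False := by
  obtain ⟨a, a1, a2, a3, a4⟩ := H.third huv huw hvw.ne
  obtain ⟨b, b1, b2, b3, b4⟩ := H.third huv.symm hvw huw.ne
  obtain ⟨c, c1, c2, c3, c4⟩ := H.third huw.symm hvw.symm huv.ne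
  have a4' : ∀ y, G.Adj u y → y = w ∨ y = v ∨ y = a := fun y hy => by have := a4 y hy; tauto
  have b4' : ∀ y, G.Adj v y → y = w ∨ y = u ∨ y = b := fun y hy => by have := b4 y hy; tauto
  have c4' : ∀ y, G.Adj w y → y = v ∨ y = u ∨ y = c := fun y hy => by have := c4 y hy; tauto
  obtain ⟨hn, hne⟩ := H.triCard huv hvw huw
  have k1 : ∀ r, ¬ (G.dist r u = G.dist r v ∧ G.dist r u < G.dist r w) :=
    fun r h => H.triCase1 huv hvw huw a3 a4 b3 b4 r h.1 h.2
  have k2 : ∀ r, ¬ (G.dist r u = G.dist r w ∧ G.dist r u < G.dist r v) :=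
    fun r h => H.triCase1 huw hvw.symm huv a3 a4' c3 c4 r h.1 h.2
  have k3 : ∀ r, ¬ (G.dist r v = G.dist r w ∧ G.dist r v < G.dist r u) :=
    fun r h => H.triCase1 hvw huw.symm huv.symm b3 b4' c3 c4' r h.1 h.2
  have hU : ∀ z, (G.dist z u < G.dist z v ∧ G.dist z u < G.dist z w) ∨
      (G.dist z v < G.dist z u ∧ G.dist z v < G.dist z w) ∨
      (G.dist z w < G.dist z u ∧ G.dist z w < G.dist z v) := by
    intro z
    have := k1 z
    have := k2 z
    have := k3 z
    have := hne z
    omega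
  have s1 := fun z => H.dadj z huv
  have s2 := fun z => H.dadj z huv.symm
  have s3 := fun z => H.dadj z huw
  have s4 := fun z => H.dadj z huw.symm
  have s5 := fun z => H.dadj z hvw
  have s6 := fun z => H.dadj z hvw.symm
  obtain ⟨ea, ea1, ea2, ea3⟩ := H.triExtra huv hvw a3 a4
  obtain ⟨eb, eb1, eb2, eb3⟩ := H.triExtra huv.symm huw b3 b4
  obtain ⟨ec, ec1, ec2, ec3⟩ := H.triExtra huw.symm huv c3 c4
  have ea3' : ∀ y, G.dist y a < G.dist y u → G.dist y w ≤ G.dist y u → y = ea := fun y h1 h2 =>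
    ea3 y h1 (by have := hU y; have := s1 y; have := s2 y; have := s3 y; have := s4 y
                 have := s5 y; have := s6 y; omega)
  have eb3' : ∀ y, G.dist y b < G.dist y v → G.dist y w ≤ G.dist y v → y = eb := fun y h1 h2 =>
    eb3 y h1 (by have := hU y; have := s1 y; have := s2 y; have := s3 y; have := s4 y
                 have := s5 y; have := s6 y; omega)
  have ec3' : ∀ y, G.dist y c < G.dist y w → G.dist y v ≤ G.dist y w → y = ec := fun y h1 h2 =>
    ec3 y h1 (by have := hU y; have := s1 y; have := s2 y; have := s3 y; have := s4 y
                 have := s5 y; have := s6 y; omega)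
  -- the six transfer rules
  have tac := H.triCase2 (ea := ea) (ec := ec) huv hvw huw a3 a4 c3 c1 c2 hU ea3 ec3 ec1
  have tbc := H.triCase2 (ea := eb) (ec := ec) huv.symm huw hvw b3 b4 c3 c2 c1
    (fun z => by have := hU z; omega) eb3 ec3' ec1
  have tab := H.triCase2 (ea := ea) (ec := eb) huw hvw.symm huv a3 a4' b3 b1 b2
    (fun z => by have := hU z; omega) ea3' eb3 eb1
  have tcb := H.triCase2 (ea := ec) (ec := eb) huw.symm huv hvw.symm c3 c4 b3 b2 b1
    (fun z => by have := hU z; omega) ec3 eb3' eb1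
  have tba := H.triCase2 (ea := eb) (ec := ea) hvw huw.symm huv.symm b3 b4' a3 a1 a2
    (fun z => by have := hU z; omega) eb3' ea3 ea1
  have tca := H.triCase2 (ea := ec) (ec := ea) hvw.symm huv.symm huw.symm c3 c4' a3 a2 a1
    (fun z => by have := hU z; omega) ec3' ea3' ea1
  have ha := hU ea
  have hb := hU eb
  have hc := hU ec
  have := s1 ea; have := s2 ea; have := s3 ea; have := s4 ea; have := s5 ea; have := s6 ea
  have := s1 eb; have := s2 eb; have := s3 eb; have := s4 eb; have := s5 eb; have := s6 eb
  have := s1 ec; have := s2 ec; have := s3 ec; have := s4 ec; have := s5 ec; have := s6 ec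
  omega

end Hyp13

namespace Hyp13
variable {V : Type*} [Fintype V] {G : SimpleGraph V} {d : ℕ}

theorem dist_two (H : Hyp13 G d) {x y z : V} (h1 : G.Adj x y) (h2 : G.Adj y z) (h : x ≠ z) :
    G.dist x z = 2 := by
  have a := H.dadj x h2.symm
  have b : G.dist x y = 1 := SimpleGraph.dist_eq_one_iff_adj.2 h1
  have c := H.pos h
  have e : G.dist x z ≠ 1 := fun e =>
    H.noTri h1 h2 (SimpleGraph.dist_eq_one_iff_adj.1 e)
  omega

theorem W10 (H : Hyp13 G d) {p : ℕ → V} (hp : Geo13 G d p) :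
    ∃ w, G.Adj (p 1) w ∧ w ≠ p 0 ∧ w ≠ p 2 ∧ G.dist w (p 0) = 2 ∧
      (∀ y, G.Adj (p 1) y → y = p 0 ∨ y = p 2 ∨ y = w) ∧
      ∀ y, G.dist y (p 1) < G.dist y (p 0) → y = w ∨ ∃ i, 1 ≤ i ∧ i ≤ d ∧ y = p i := by
  have hd := H.hd
  have a0 := hp.adj 0 (by omega)
  have a1 := hp.adj 1 (by omega)
  have ne : p 0 ≠ p 2 := fun h => by have := hp.inj H (by omega) (by omega) h; omega
  obtain ⟨w, h1, h2, h3, h4⟩ := H.third a0.symm a1 ne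
  have hw : G.dist w (p 0) = 2 := H.dist_two h3.symm a0.symm h1
  have hw1 : G.dist w (p 1) = 1 := SimpleGraph.dist_eq_one_iff_adj.2 h3.symm
  refine ⟨w, h3, h1, h2, hw, h4, hp.extra H (by omega) ?_⟩
  rintro i hi rfl
  have := hp.dist' H (Nat.zero_le i) hi
  have : i = 2 := by omega
  subst this
  exact h2 rfl

theorem lvl (H : Hyp13 G d) {p : ℕ → V} (hp : Geo13 G d p) {i : ℕ} (h2 : 2 ≤ i) (hi : i + 1 ≤ d)
    {w : V} (hw : G.Adj (p i) w) (hn : w ≠ p (i + 1)) : G.dist w (p 0) ≤ i := by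
  obtain ⟨w1, g1, g2, g3, g4, -, -⟩ := H.W10 hp
  by_contra hcon
  have := H.dadj' (p 0) hw.symm
  rw [hp.dist' H (by omega) (by omega)] at this
  exact H.two_up hp (i := 1) (j := i) (by omega) ⟨by omega, by omega⟩ ⟨by omega, hi⟩ g1 hw g3 hn g4
    (by omega)

theorem lvl' (H : Hyp13 G d) {p : ℕ → V} (hp : Geo13 G d p) {i : ℕ} (h2 : 1 ≤ i) (hi : i + 2 ≤ d)
    {w : V} (hw : G.Adj (p i) w) (hn : w ≠ p (i - 1)) : G.dist w (p d) ≤ d - i := by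
  have := H.lvl hp.rev (i := d - i) (w := w) (by omega) (by omega)
    (by rw [show d - (d - i) = i by omega]; exact hw)
    (by rw [show d - (d - i + 1) = i - 1 by omega]; exact hn)
  simpa using this

theorem R (H : Hyp13 G d) {p : ℕ → V} (hp : Geo13 G d p) (h4 : 4 ≤ d) :
    ∃ v w q, G.Adj (p 2) w ∧ w ≠ p 1 ∧ w ≠ p 3 ∧ G.Adj v w ∧ G.Adj (p 0) v ∧ v ≠ p 1 ∧
      G.Adj w q ∧ G.dist q (p d) = d - 3 ∧ q ≠ p 3 ∧ G.dist q (p 0) = 3 ∧ G.dist q (p 1) = 3 ∧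
      G.dist w (p 0) = 2 ∧
      ∀ y, G.dist y (p 2) < G.dist y (p 1) → y = w ∨ y = q ∨ ∃ i, 2 ≤ i ∧ i ≤ d ∧ y = p i := by
  classical
  have a0 := hp.adj 0 (by omega)
  have a1 := hp.adj 1 (by omega)
  have a2 := hp.adj 2 (by omega)
  have ne : p 1 ≠ p 3 := fun h => by have := hp.inj H (by omega) (by omega) h; omega
  obtain ⟨w1, g1, g2, g3, g4, -, g6⟩ := H.W10 hp
  obtain ⟨w, h1, h2, h3, h5⟩ := H.third a1.symm a2 ne
  have l1 := H.lvl hp (i := 2) le_rfl (by omega) h3 h2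
  have l2 := H.lvl' hp (i := 2) (by omega) (by omega) h3 h1
  have tr : ∀ z, d ≤ G.dist z (p 0) + G.dist z (p d) := by
    intro z
    have := H.conn.dist_triangle (u := p 0) (v := z) (w := p d)
    rw [hp.len, SimpleGraph.dist_comm (v := z)] at this
    exact this
  have := tr w
  have hw0 : w ≠ p 0 := by rintro rfl; rw [hp.len] at l2; omega
  have hwd : w ≠ p d := by
    rintro rfl; have := hp.dist' H (Nat.zero_le d) le_rfl; omega
  obtain ⟨v, v1, v2⟩ := H.pred' hw0
  obtain ⟨q, q1, q2⟩ := H.pred' hwd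
  have hv : G.Adj v (p 0) := SimpleGraph.dist_eq_one_iff_adj.1 (by omega)
  have q0 : G.dist q (p 0) = 3 := by
    have := tr q
    have := H.dadj' (p 0) q1.symm
    omega
  have qi : ∀ i, i ≤ d → q = p i → i = 3 := by
    rintro i hi rfl
    have := hp.dist' H (Nat.zero_le i) hi; omega
  have wi : ∀ i, i ≤ d → w = p i → i = 2 := by
    rintro i hi rfl
    have := hp.dist' H (Nat.zero_le i) hi; omega
  have hq3 : q ≠ p 3 := by
    rintro rfl
    exact H.noTri h3 q1 a2
  have hw1 : G.dist w (p 1) = 2 := H.dist_two h3.symm a1.symm h1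
  have hw2 : G.dist w (p 2) = 1 := SimpleGraph.dist_eq_one_iff_adj.2 h3.symm
  have hq1 : G.dist q (p 1) = 3 := by
    have t1 := H.dadj' (p 1) q1.symm
    by_contra hc
    rcases g6 q (by omega) with rfl | ⟨i, i1, i2, i3⟩
    · omega
    · have := qi i i2 i3
      subst this; exact hq3 i3
  have hq2 := H.dadj' (p 2) q1.symm
  refine ⟨v, w, q, h3, h1, h2, v1.symm, hv.symm, ?_, q1, by omega, hq3, q0, hq1, by omega, ?_⟩
  · rintro rfl
    exact H.noTri a1 h3 v1.symm
  intro y hy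
  have := H.fullW (u := p 2) (v := p 1) a1.symm (insert w (insert q ((Finset.Icc 2 d).image p))) (by
    rw [Finset.card_insert_of_notMem, Finset.card_insert_of_notMem, hp.cardIcc H]
    · omega
    · simp only [Finset.mem_image, Finset.mem_Icc, not_exists, not_and]
      rintro i hi h
      have := qi i hi.2 h.symm
      subst this; exact hq3 h.symm
    · simp only [Finset.mem_insert, Finset.mem_image, Finset.mem_Icc, not_or, not_exists, not_and]
      refine ⟨q1.ne, ?_⟩
      rintro i hi h
      have := wi i hi.2 h.symm
      subst this; exact h3.ne h) (by
    intro z hz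
    simp only [Finset.mem_insert, Finset.mem_image, Finset.mem_Icc] at hz
    rcases hz with rfl | rfl | ⟨i, hi, rfl⟩
    · omega
    · omega
    · rw [hp.dist' H (by omega) hi.2, hp.dist' H (by omega) hi.2]; omega) y hy
  simp only [Finset.mem_insert, Finset.mem_image, Finset.mem_Icc] at this
  rcases this with h | h | ⟨i, hi, h⟩
  · exact Or.inl h
  · exact Or.inr (Or.inl h)
  · exact Or.inr (Or.inr ⟨i, hi.1, hi.2, h.symm⟩)

theorem no5 (H : Hyp13 G d) : d ≤ 4 := by
  by_contra hd
  obtain ⟨x, y, hxy⟩ := H.ex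
  obtain ⟨p, hp, -, -⟩ := Geo13.exists_geo H hxy
  obtain ⟨v, w, q, r1, r2, r3, r4, r5, r6, r7, r8, r9, r10, r11, r12, r13⟩ := H.R hp (by omega)
  obtain ⟨w1, g1, g2, g3, g4, -, g6⟩ := H.W10 hp
  have a1 := hp.adj 1 (by omega)
  have a2 := hp.adj 2 (by omega)
  have a3 := hp.adj 3 (by omega)
  have ne : p 2 ≠ p 4 := fun h => by have := hp.inj H (by omega) (by omega) h; omega
  obtain ⟨w3, h1, h2, h3, h5⟩ := H.third a2.symm a3 ne
  have l1 := H.lvl hp (i := 3) (by omega) (by omega) h3 h2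
  have l2 := H.lvl' hp (i := 3) (by omega) (by omega) h3 h1
  have tr : ∀ z, d ≤ G.dist z (p 0) + G.dist z (p d) := by
    intro z
    have := H.conn.dist_triangle (u := p 0) (v := z) (w := p d)
    rw [hp.len, SimpleGraph.dist_comm (v := z)] at this
    exact this
  have := tr w3
  have lp : ∀ i, i ≤ d → G.dist (p i) (p 0) = i := fun i hi => hp.dist' H (Nat.zero_le i) hi
  have hw1 : 3 ≤ G.dist w3 (p 1) := by
    by_contra hc
    rcases g6 w3 (by omega) with rfl | ⟨i, i1, i2, rfl⟩
    · omega
    · have := lp i i2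
      have : i = 3 := by omega
      subst this; exact h3.ne rfl
  have hw2 : G.dist w3 (p 2) ≤ 2 := by
    have := H.dadj' (p 2) h3.symm
    rw [hp.dist' H (by omega) (by omega)] at this
    omega
  have e : w3 = q := by
    rcases r13 w3 (by omega) with rfl | rfl | ⟨i, i1, i2, rfl⟩
    · omega
    · rfl
    · have := lp i i2
      have : i = 3 := by omega
      subst this; exact absurd rfl h3.ne
  subst e
  have hqd : w3 ≠ p d := by
    rintro rfl; simp at r8; omega
  obtain ⟨s, s1, s2⟩ := H.pred' hqd
  have s0 : G.dist s (p 0) = 4 := by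
    have := tr s
    have := H.dadj' (p 0) s1.symm
    omega
  have s3 := H.dadj' (p 2) s1.symm
  have hs : s = p 4 := by
    by_cases hc : G.dist s (p 1) < 4
    · rcases g6 s (by omega) with rfl | ⟨i, i1, i2, rfl⟩
      · omega
      · have := lp i i2
        have : i = 4 := by omega
        subst this; rfl
    · rcases r13 s (by omega) with rfl | rfl | ⟨i, i1, i2, rfl⟩
      · omega
      · omega
      · have := lp i i2
        have : i = 4 := by omega
        subst this; rfl
  subst hs
  exact H.noTri h3 s1 a3

/-- five explicit points -/
theorem mkGeo (G : SimpleGraph V) {x0 x1 x2 x3 x4 : V} (a0 : G.Adj x0 x1) (a1 : G.Adj x1 x2)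
    (a2 : G.Adj x2 x3) (a3 : G.Adj x3 x4) (h : G.dist x0 x4 = 4) :
    ∃ p : ℕ → V, Geo13 G 4 p ∧ p 0 = x0 ∧ p 1 = x1 ∧ p 2 = x2 ∧ p 3 = x3 ∧ p 4 = x4 := by
  refine ⟨fun i => match i with | 0 => x0 | 1 => x1 | 2 => x2 | 3 => x3 | _ => x4, ⟨?_, h⟩,
    rfl, rfl, rfl, rfl, rfl⟩
  intro i hi
  interval_cases i
  · exact a0
  · exact a1
  · exact a2
  · exact a3

theorem R4 (H : Hyp13 G 4) {x0 x1 x2 x3 x4 : V} (a0 : G.Adj x0 x1) (a1 : G.Adj x1 x2)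
    (a2 : G.Adj x2 x3) (a3 : G.Adj x3 x4) (h : G.dist x0 x4 = 4) :
    ∃ v w q, G.Adj x2 w ∧ w ≠ x1 ∧ w ≠ x3 ∧ G.Adj v w ∧ G.Adj x0 v ∧ v ≠ x1 ∧
      G.Adj w q ∧ G.Adj q x4 ∧ q ≠ x3 ∧ G.dist q x0 = 3 ∧ G.dist q x1 = 3 ∧ G.dist w x0 = 2 ∧
      ∀ y, G.dist y x2 < G.dist y x1 → y = w ∨ y = q ∨ y = x2 ∨ y = x3 ∨ y = x4 := by
  obtain ⟨p, hp, rfl, rfl, rfl, rfl, rfl⟩ := mkGeo G a0 a1 a2 a3 h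
  obtain ⟨v, w, q, r1, r2, r3, r4, r5, r6, r7, r8, r9, r10, r11, r12, r13⟩ := H.R hp le_rfl
  refine ⟨v, w, q, r1, r2, r3, r4, r5, r6, r7, SimpleGraph.dist_eq_one_iff_adj.1 r8, r9, r10, r11,
    r12, ?_⟩
  intro y hy
  rcases r13 y hy with h | h | ⟨i, i1, i2, h⟩
  · tauto
  · tauto
  · interval_cases i <;> tauto

theorem W4 (H : Hyp13 G 4) {x0 x1 x2 x3 x4 y2 : V} (a0 : G.Adj x0 x1) (a1 : G.Adj x1 x2)
    (a2 : G.Adj x2 x3) (a3 : G.Adj x3 x4) (h : G.dist x0 x4 = 4)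
    (hy : G.Adj x1 y2) (hy0 : y2 ≠ x0) (hy2 : y2 ≠ x2) :
      ∀ y, G.dist y x1 < G.dist y x0 → y = y2 ∨ y = x1 ∨ y = x2 ∨ y = x3 ∨ y = x4 := by
  obtain ⟨p, hp, rfl, rfl, rfl, rfl, rfl⟩ := mkGeo G a0 a1 a2 a3 h
  obtain ⟨w1, g1, g2, g3, g4, g5, g6⟩ := H.W10 hp
  have : y2 = w1 := by have := g5 y2 hy; tauto
  subst this
  intro y hy
  rcases g6 y hy with h | ⟨i, i1, i2, h⟩
  · tauto
  · interval_cases i <;> tauto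

end Hyp13

namespace Hyp13
variable {V : Type*} [Fintype V] {G : SimpleGraph V}

theorem a1' {x y : V} (h : G.Adj x y) : G.dist x y = 1 := SimpleGraph.dist_eq_one_iff_adj.2 h

theorem Q4 (H : Hyp13 G 4) {x0 x1 x2 x3 x4 y2 : V} (a0 : G.Adj x0 x1) (a1 : G.Adj x1 x2)
    (a2 : G.Adj x2 x3) (a3 : G.Adj x3 x4) (h : G.dist x0 x4 = 4)
    (hy : G.Adj x1 y2) (hy0 : y2 ≠ x0) (hy2 : y2 ≠ x2) : G.Adj y2 x3 := by
  obtain ⟨v, w, q, r1, r2, r3, r4, r5, r6, r7, r8, r9, r10, r11, r12, r13⟩ := H.R4 a0 a1 a2 a3 h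
  have lx0 : G.dist x0 x0 = 0 := by simp
  have hr : G.dist x4 x0 = 4 := by rw [SimpleGraph.dist_comm]; exact h
  have b1 := H.dadj' x0 a0.symm
  have b2 := H.dadj' x0 a1.symm
  have b3 := H.dadj' x0 a2.symm
  have b4 := H.dadj' x0 a3.symm
  have nl : ∀ {a b : V}, G.dist a x0 ≠ G.dist b x0 → a ≠ b := fun h e => h (by rw [e])
  have n02 : x0 ≠ x2 := nl (by omega)
  have n24 : x2 ≠ x4 := nl (by omega)
  have n13 : x1 ≠ x3 := nl (by omega)
  have n14 : x1 ≠ x4 := nl (by omega)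
  have hyL : G.dist y2 x0 = 2 := H.dist_two hy.symm a0.symm hy0
  by_contra hcon
  have w10 := H.W4 a0 a1 a2 a3 h hy hy0 hy2
  have f1 := H.full a0.symm a1 hy n02 hy0.symm hy2.symm
  obtain ⟨w3, h1, h2, h3, h4⟩ := H.third a2.symm a3 n24
  have w34 := H.W4 a3.symm a2.symm a1.symm a0.symm hr h3 h2 h1
  have d2 : G.dist w3 x2 = 2 := H.dist_two h3.symm a2.symm h1
  have d4 : G.dist w3 x4 = 2 := H.dist_two h3.symm a3 h2
  have c1 : G.dist w3 x1 ≤ 2 := by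
    by_contra hc
    rcases r13 w3 (by omega) with rfl | rfl | rfl | rfl | rfl
    · exact H.noTri a2 h3 r1
    · exact H.noTri h3 r8 a3
    · exact h1 rfl
    · exact h3.ne rfl
    · exact h2 rfl
  have hw31 : w3 ≠ x1 := by
    rintro rfl
    have := H.dadj' x0 h3
    omega
  obtain ⟨c, hc1, hc2⟩ := H.pred' hw31
  by_cases hcx : c = x1
  · subst hcx
    rcases f1 w3 hc1.symm with rfl | rfl | rfl
    · have := H.dadj' w3 h3; omega
    · exact h1 rfl
    · exact hcon h3.symm
  have hpc := H.pos hcx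
  have hc3 : G.Adj c x1 := SimpleGraph.dist_eq_one_iff_adj.1 (by omega)
  have hcy : c = y2 := by
    rcases f1 c hc3.symm with rfl | rfl | rfl
    · have := H.dadj' x4 hc1.symm; omega
    · exact (H.noTri a2 h3 hc1.symm).elim
    · rfl
  subst hcy
  have e3 := H.dadj' x3 hc1.symm
  have : G.dist w3 x3 = 1 := a1' h3.symm
  have hy4 : G.dist c x4 ≤ 2 := by
    by_contra hc
    rcases w34 c (by omega) with rfl | rfl | rfl | rfl | rfl
    · exact hc1.ne rfl
    · omega
    · exact hy2 rfl
    · exact hcx rfl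
    · exact hy0 rfl
  have hc4 : c ≠ x4 := nl (by omega)
  obtain ⟨t, t1, t2⟩ := H.pred' hc4
  have htx : t ≠ x4 := by
    rintro rfl
    have := H.dadj' x0 t1.symm; omega
  have := H.pos htx
  have t3 : G.Adj t x4 := SimpleGraph.dist_eq_one_iff_adj.1 (by omega)
  have t4 := H.dadj' x0 t3.symm
  have t5 := H.dadj' x1 t1.symm
  rcases w10 t (by omega) with rfl | rfl | rfl | rfl | rfl
  · exact t1.ne rfl
  · omega
  · omega
  · exact hcon t1
  · exact htx rfl

end Hyp13

namespace Hyp13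
variable {V : Type*} [Fintype V] {G : SimpleGraph V}

set_option maxHeartbeats 1000000 in
theorem no4 (H : Hyp13 G 4) : False := by
  classical
  obtain ⟨x, y, hxy⟩ := H.ex
  obtain ⟨p, hp, -, -⟩ := Geo13.exists_geo H hxy
  obtain ⟨x0, x1, x2, x3, x4, a0, a1, a2, a3, h⟩ : ∃ x0 x1 x2 x3 x4, G.Adj x0 x1 ∧ G.Adj x1 x2 ∧
      G.Adj x2 x3 ∧ G.Adj x3 x4 ∧ G.dist x0 x4 = 4 :=
    ⟨p 0, p 1, p 2, p 3, p 4, hp.adj 0 (by omega), hp.adj 1 (by omega), hp.adj 2 (by omega),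
      hp.adj 3 (by omega), hp.len⟩
  clear hp hxy
  obtain ⟨v2, w2, p3, r1, r2, r3, r4, r5, r6, r7, r8, r9, r10, r11, r12, -⟩ := H.R4 a0 a1 a2 a3 h
  have lx0 : G.dist x0 x0 = 0 := by simp
  have lx4 : G.dist x4 x0 = 4 := by rw [SimpleGraph.dist_comm]; exact h
  have b1 := H.dadj' x0 a0.symm
  have b2 := H.dadj' x0 a1.symm
  have b3 := H.dadj' x0 a2.symm
  have b4 := H.dadj' x0 a3.symm
  have lx1 : G.dist x1 x0 = 1 := by omega
  have lx2 : G.dist x2 x0 = 2 := by omega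
  have lx3 : G.dist x3 x0 = 3 := by omega
  clear b1 b2 b3 b4
  have lv2 : G.dist v2 x0 = 1 := a1' r5.symm
  have nl : ∀ {a b : V}, G.dist a x0 ≠ G.dist b x0 → a ≠ b := fun h e => h (by rw [e])
  -- the third neighbours
  obtain ⟨y2, y1, y3, y4, n1⟩ := H.third a0.symm a1 (nl (by omega))
  have ly2 : G.dist y2 x0 = 2 := H.dist_two y4.symm a0.symm y1
  have y5 := H.Q4 a0 a1 a2 a3 h y4 y1 y3
  obtain ⟨v3, v31, v32, v33, n0⟩ := H.third a0 r5 r6.symm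
  have lv3 : G.dist v3 x0 = 1 := a1' v33.symm
  obtain ⟨t, t1, t2, t3, n4⟩ := H.third a3.symm r8.symm r9.symm
  have lt : 3 ≤ G.dist t x0 := by have := H.dadj' x0 t3; omega
  obtain ⟨q, q1, q2, q3, nv⟩ := H.third r5.symm r4 (nl (by omega))
  have q4 := H.Q4 r5 r4 r7 r8 h q3 q1 q2
  have lq : G.dist q x0 = 2 := H.dist_two q3.symm r5.symm q1
  have n2 := H.full a1.symm a2 r1 (nl (by omega)) r2.symm r3.symm
  have n3 := H.full a2.symm a3 y5.symm (nl (by omega)) y3.symm (nl (by omega))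
  have nw := H.full r4.symm r1.symm r7 (nl (by omega)) (nl (by omega)) (nl (by omega))
  have np := H.full r7.symm r8 q4.symm (nl (by omega)) q2.symm (nl (by omega))
  obtain ⟨v', w', p', s1, s2, s3, s4, s5, s6, s7, s8, s9, s10, s11, s12, -⟩ :=
    H.R4 a0 y4 y5 a3 h
  have ny := H.full y4.symm y5 s1 (nl (by omega)) s2.symm s3.symm
  -- the ball of radius two
  have ball1 : ∀ z, G.dist z x2 ≤ 1 → z = x2 ∨ z = x1 ∨ z = x3 ∨ z = w2 := by
    intro z hz
    by_cases hz2 : z = x2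
    · exact Or.inl hz2
    · have := H.pos hz2
      exact Or.inr (n2 z (SimpleGraph.dist_eq_one_iff_adj.1 (by omega : G.dist z x2 = 1)).symm)
  have ball2 : ∀ z, G.dist z x2 ≤ 2 → z = x2 ∨ z = x1 ∨ z = x3 ∨ z = w2 ∨ z = x0 ∨ z = y2 ∨
      z = x4 ∨ z = v2 ∨ z = p3 := by
    intro z hz
    by_cases hz2 : z = x2
    · exact Or.inl hz2
    obtain ⟨c, c1, c2⟩ := H.pred' hz2
    rcases ball1 c (by omega) with rfl | rfl | rfl | rfl
    · rcases n2 z c1.symm with h | h | h <;> simp [h]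
    · rcases n1 z c1.symm with h | h | h <;> simp [h]
    · rcases n3 z c1.symm with h | h | h <;> simp [h]
    · rcases nw z c1.symm with h | h | h <;> simp [h]
  have ball3 : ∀ z, G.dist z x2 ≤ 3 → z = x2 ∨ z = x1 ∨ z = x3 ∨ z = w2 ∨ z = x0 ∨ z = y2 ∨
      z = x4 ∨ z = v2 ∨ z = p3 ∨ z = v3 ∨ z = q ∨ z = t ∨ z = w' := by
    intro z hz
    by_cases hz2 : z = x2
    · exact Or.inl hz2
    obtain ⟨c, c1, c2⟩ := H.pred' hz2
    rcases ball2 c (by omega) with rfl | rfl | rfl | rfl | rfl | rfl | rfl | rfl | rfl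
    · rcases n2 z c1.symm with h | h | h <;> simp [h]
    · rcases n1 z c1.symm with h | h | h <;> simp [h]
    · rcases n3 z c1.symm with h | h | h <;> simp [h]
    · rcases nw z c1.symm with h | h | h <;> simp [h]
    · rcases n0 z c1.symm with h | h | h <;> simp [h]
    · rcases ny z c1.symm with h | h | h <;> simp [h]
    · rcases n4 z c1.symm with h | h | h <;> simp [h]
    · rcases nv z c1.symm with h | h | h <;> simp [h]
    · rcases np z c1.symm with h | h | h <;> simp [h]
  -- nonneighbours of `v3`
  have k0 : v3 ≠ x0 := nl (by omega)
  have k2 : v3 ≠ x2 := nl (by omega)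
  have k3 : v3 ≠ x3 := nl (by omega)
  have k4 : v3 ≠ x4 := nl (by omega)
  have kw : v3 ≠ w2 := nl (by omega)
  have ky : v3 ≠ y2 := nl (by omega)
  have kq : v3 ≠ q := nl (by omega)
  have kp : v3 ≠ p3 := nl (by omega)
  have kw' : v3 ≠ w' := nl (by omega)
  have kt : v3 ≠ t := nl (by omega)
  have nt : ¬ G.Adj v3 t := fun h => by have := H.dadj' x0 h.symm; omega
  have m1 : ¬ G.Adj v3 x1 := fun h => by
    rcases n1 v3 h.symm with e | e | e
    · exact k0 e
    · exact k2 e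
    · exact ky e
  have m2 : ¬ G.Adj v3 x2 := fun h => by
    rcases n2 v3 h.symm with e | e | e
    · exact v31 e
    · exact k3 e
    · exact kw e
  have m3 : ¬ G.Adj v3 x3 := fun h => by
    rcases n3 v3 h.symm with e | e | e
    · exact k2 e
    · exact k4 e
    · exact ky e
  have m4 : ¬ G.Adj v3 x4 := fun h => by
    rcases n4 v3 h.symm with e | e | e
    · exact k3 e
    · exact kp e
    · exact kt e
  have mw : ¬ G.Adj v3 w2 := fun h => by
    rcases nw v3 h.symm with e | e | e
    · exact v32 e
    · exact k2 e
    · exact kp e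
  have my : ¬ G.Adj v3 y2 := fun h => by
    rcases ny v3 h.symm with e | e | e
    · exact v31 e
    · exact k3 e
    · exact kw' e
  have mv : ¬ G.Adj v3 v2 := fun h => by
    rcases nv v3 h.symm with e | e | e
    · exact k0 e
    · exact kw e
    · exact kq e
  have mp : ¬ G.Adj v3 p3 := fun h => by
    rcases np v3 h.symm with e | e | e
    · exact kw e
    · exact k4 e
    · exact kq e
  have dv3 : G.dist v3 x1 < G.dist v3 x2 := by
    have e1 : G.dist v3 x1 = 2 := H.dist_two v33.symm a0 v31
    by_contra hc
    rcases ball2 v3 (by omega) with e | e | e | e | e | e | e | e | e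
    · exact k2 e
    · exact v31 e
    · exact k3 e
    · exact kw e
    · exact k0 e
    · exact ky e
    · exact k4 e
    · exact v32 e
    · exact kp e
  have dr : ∀ r, G.Adj v3 r → r ≠ q → r ≠ w' → G.dist r x1 < G.dist r x2 := by
    intro r hr hq hw
    have e1 : G.dist v3 x1 = 2 := H.dist_two v33.symm a0 v31
    have e2 := H.dadj' x1 hr.symm
    by_contra hc
    rcases ball3 r (by omega) with rfl | rfl | rfl | rfl | rfl | rfl | rfl | rfl | rfl | rfl | rfl |
      rfl | rfl
    · exact m2 hr
    · exact m1 hr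
    · exact m3 hr
    · exact mw hr
    · have := a1' a0
      have := H.dist_two a0 a1 (nl (by omega))
      omega
    · exact my hr
    · exact m4 hr
    · exact mv hr
    · exact mp hr
    · exact hr.ne rfl
    · exact hq rfl
    · exact nt hr
    · exact hw rfl
  have fin : ∀ r s, r ≠ s → G.Adj v3 r → G.Adj v3 s → r ≠ x0 → s ≠ x0 →
      G.dist r x1 < G.dist r x2 → G.dist s x1 < G.dist s x2 → False := by
    intro r s hrs hr hs hr0 hs0 hr1 hs1
    have d1 := a1' a1
    have d2 := H.dist_two a0 a1 (nl (by omega))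
    have d3 := a1' a0
    have d4 := a1' y4.symm
    have d5 := H.dist_two y4.symm a1 y3
    have d6 : G.dist x1 x1 = 0 := by simp
    have nd : [x1, x0, y2, v3, r, s].Nodup := by
      have g1 : x1 ≠ x0 := a0.ne.symm
      have g2 : x1 ≠ y2 := y4.ne
      have g3 : x1 ≠ r := fun h => m1 (h ▸ hr)
      have g4 : x1 ≠ s := fun h => m1 (h ▸ hs)
      have g5 : y2 ≠ r := fun h => my (h ▸ hr)
      have g6 : y2 ≠ s := fun h => my (h ▸ hs)
      have g7 := hr.ne
      have g8 := hs.ne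
      simp [g1, g2, g3, g4, g5, g6, g7, g8, y1.symm, v31.symm, k0.symm, ky.symm, hr0.symm, hs0.symm, hrs]
    refine H.overW (u := x1) (v := x2) a1 [x1, x0, y2, v3, r, s].toFinset ?_ ?_
    · rw [List.toFinset_card_of_nodup nd]; simp
    · intro z hz
      simp at hz
      rcases hz with rfl | rfl | rfl | rfl | rfl | rfl <;> omega
  have nwy : ¬ G.Adj w2 y2 := fun h => by
    rcases nw y2 h with e | e | e
    · exact nl (by omega) e
    · exact y3 e
    · exact nl (by omega) e
  obtain ⟨r, s, z1, z2, z3, z4, z5, -⟩ := H.two v33.symm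
  rcases n0 v' s5 with e | e | e
  · exact s6 e
  · -- case I
    subst e
    have hw : w' = q := by
      rcases nv w' s4 with e | e | e
      · exact absurd e (nl (by omega))
      · subst e; exact absurd s1.symm nwy
      · exact e
    subst hw
    have nq := H.full q3.symm q4 s1.symm (nl (by omega)) (nl (by omega)) (nl (by omega))
    have mq : ¬ G.Adj v3 w' := fun h => by
      rcases nq v3 h.symm with e | e | e
      · exact v32 e
      · exact kp e
      · exact ky e
    have hrq : r ≠ w' := fun h => mq (h ▸ z4)
    have hsq : s ≠ w' := fun h => mq (h ▸ z5)
    exact fin r s z3 z4 z5 z1 z2 (dr r z4 hrq hrq) (dr s z5 hsq hsq)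
  · -- case II
    subst e
    have hp : p' = t := by
      rcases n4 p' s8.symm with e | e | e
      · exact absurd e s9
      · subst e
        exfalso
        rcases np w' s7.symm with e | e | e
        · subst e; exact nwy s1.symm
        · exact nl (by omega) e
        · subst e
          have nq := H.full q3.symm q4 s1.symm (nl (by omega)) (nl (by omega)) (nl (by omega))
          rcases nq v' s4.symm with e | e | e
          · exact v32 e
          · exact kp e
          · exact ky e
      · exact e
    subst hp
    obtain ⟨g, g1, g2, g3, -⟩ := H.third s5.symm s4 (nl (by omega))
    have g4 := H.Q4 s5 s4 s7 s8 h g3 g1 g2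
    have gq : g ≠ q := by
      rintro rfl
      rcases H.full q3.symm q4 g3.symm (nl (by omega)) v32.symm (nl (by omega)) p' g4 with e | e | e
      · exact nl (by omega) e
      · exact t2 e
      · exact kt e.symm
    refine fin w' g g2.symm s4 g3 (nl (by omega)) g1 ?_ (dr g g3 gq g2)
    have e1 : G.dist w' x1 = 2 := H.dist_two s1.symm y4.symm s2
    by_contra hc
    rcases ball2 w' (by omega) with e | e | e | e | e | e | e | e | e
    · exact m2 (e ▸ s4)
    · exact m1 (e ▸ s4)
    · exact m3 (e ▸ s4)
    · exact mw (e ▸ s4)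
    · exact nl (by omega) e
    · exact my (e ▸ s4)
    · exact m4 (e ▸ s4)
    · exact mv (e ▸ s4)
    · exact mp (e ▸ s4)

end Hyp13

/-- the vertex `u`, its neighbours and their further neighbours -/
structure Loc13 {V : Type*} (G : SimpleGraph V) (u v1 p p' v2 r r' v3 s t : V) : Prop where
  a1 : G.Adj u v1
  a2 : G.Adj u v2
  a3 : G.Adj u v3
  n12 : v1 ≠ v2
  n13 : v1 ≠ v3
  n23 : v2 ≠ v3
  p1 : G.Adj v1 p
  p2 : G.Adj v1 p'
  p3 : p ≠ u
  p4 : p' ≠ u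
  p5 : p ≠ p'
  r1 : G.Adj v2 r
  r2 : G.Adj v2 r'
  r3 : r ≠ u
  r4 : r' ≠ u
  r5 : r ≠ r'
  s1 : G.Adj v3 s
  s2 : G.Adj v3 t
  s3 : s ≠ u
  s4 : t ≠ u
  s5 : s ≠ t

namespace Hyp13
variable {V : Type*} [Fintype V] {G : SimpleGraph V}

theorem all3 {d : ℕ} (H : Hyp13 G d) {x a b c : V} (h : ∀ y, G.Adj x y → y = a ∨ y = b ∨ y = c) :
    G.Adj x a ∧ G.Adj x b ∧ G.Adj x c := by
  obtain ⟨e, f, g, h1, h2, h3, hh⟩ := H.nb x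
  have he := (hh e).2 (by simp)
  have hf := (hh f).2 (by simp)
  have hg := (hh g).2 (by simp)
  rcases h e he with rfl | rfl | rfl <;> rcases h f hf with rfl | rfl | rfl <;>
    rcases h g hg with rfl | rfl | rfl <;>
    first | exact absurd rfl h1 | exact absurd rfl h2 | exact absurd rfl h3 | exact ⟨he, hf, hg⟩ |
      exact ⟨he, hg, hf⟩ | exact ⟨hf, he, hg⟩ | exact ⟨hf, hg, he⟩ | exact ⟨hg, he, hf⟩ |
      exact ⟨hg, hf, he⟩

theorem cardLe (l : List V) (h : ∀ y, y ∈ l) : Fintype.card V ≤ l.length := by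
  classical
  calc Fintype.card V = (Finset.univ : Finset V).card := rfl
    _ ≤ l.toFinset.card := Finset.card_le_card (fun y _ => by simpa using h y)
    _ ≤ l.length := List.toFinset_card_le l

theorem exLoc {d : ℕ} (H : Hyp13 G d) (u : V) : ∃ v1 p p' v2 r r' v3 s t,
    Loc13 G u v1 p p' v2 r r' v3 s t := by
  obtain ⟨e, f, g, h1, h2, h3, hh⟩ := H.nb u
  have he := (hh e).2 (by simp)
  have hf := (hh f).2 (by simp)
  have hg := (hh g).2 (by simp)
  obtain ⟨p, p', p1, p2, p3, p4, p5, -⟩ := H.two he.symm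
  obtain ⟨r, r', r1, r2, r3, r4, r5, -⟩ := H.two hf.symm
  obtain ⟨s, t, s1, s2, s3, s4, s5, -⟩ := H.two hg.symm
  exact ⟨e, p, p', f, r, r', g, s, t, he, hf, hg, h1, h2, h3, p4, p5, p1, p2, p3, r4, r5, r1, r2, r3,
    s4, s5, s1, s2, s3⟩

theorem zEx (H : Hyp13 G 3) {u v : V} (h : G.Adj u v) : ∃ z, G.dist z u = 3 ∧ G.dist z v = 2 ∧
    ∀ y, G.dist y u = 3 → G.dist y v = 2 → y = z := by
  classical
  obtain ⟨a, b, h1, h2, h3, h4, h5, h6⟩ := H.two h.symm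
  have da := H.dist_two h4.symm h.symm h1
  have db := H.dist_two h5.symm h.symm h2
  have da' := a1' h4.symm
  have db' := a1' h5.symm
  have dv := a1' h.symm
  have dv' : G.dist v v = 0 := by simp
  have hsub : ({v, a, b} : Finset V) ⊆ ndbW G v u := by
    intro y hy
    simp at hy
    rw [memW]
    rcases hy with rfl | rfl | rfl <;> omega
  have hc : ({v, a, b} : Finset V).card = 3 := by
    rw [Finset.card_eq_three]
    exact ⟨v, a, b, h4.ne, h5.ne, h3, rfl⟩
  have hW := H.W v u h.symm
  have h1' : (ndbW G v u \ {v, a, b}).card = 1 := by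
    rw [Finset.card_sdiff_of_subset hsub, hc, hW]
  rw [Finset.card_eq_one] at h1'
  obtain ⟨z, hz⟩ := h1'
  have mem : ∀ y, y = z ↔ (G.dist y v < G.dist y u ∧ ¬ (y = v ∨ y = a ∨ y = b)) := by
    intro y
    have : y ∈ ndbW G v u \ {v, a, b} ↔ y = z := by rw [hz]; simp
    rw [← this, Finset.mem_sdiff, memW]; simp
  have hz' := (mem z).1 rfl
  have l1 := H.le z u
  have l2 := H.dadj z h
  have : 2 ≤ G.dist z v := by
    by_contra hcon
    have hzv : z ≠ v := fun e => hz'.2 (Or.inl e)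
    have := H.pos hzv
    have : G.Adj z v := SimpleGraph.dist_eq_one_iff_adj.1 (by omega)
    rcases h6 z this.symm with e | e | e
    · rw [e, SimpleGraph.dist_self] at hz'; omega
    · exact hz'.2 (Or.inr (Or.inl e))
    · exact hz'.2 (Or.inr (Or.inr e))
  refine ⟨z, by omega, by omega, ?_⟩
  intro y y1 y2
  rw [mem]
  refine ⟨by omega, ?_⟩
  rintro (rfl | rfl | rfl) <;> omega

end Hyp13

namespace Loc13
variable {V : Type*} [Fintype V] {G : SimpleGraph V} {u v1 p p' v2 r r' v3 s t : V}

theorem rot (L : Loc13 G u v1 p p' v2 r r' v3 s t) : Loc13 G u v2 r r' v3 s t v1 p p' :=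
  ⟨L.a2, L.a3, L.a1, L.n23, L.n12.symm, L.n13.symm, L.r1, L.r2, L.r3, L.r4, L.r5, L.s1, L.s2, L.s3,
    L.s4, L.s5, L.p1, L.p2, L.p3, L.p4, L.p5⟩

theorem n1 (L : Loc13 G u v1 p p' v2 r r' v3 s t) (H : Hyp13 G 3) :
    ∀ y, G.Adj v1 y → y = u ∨ y = p ∨ y = p' :=
  H.full L.a1.symm L.p1 L.p2 L.p3.symm L.p4.symm L.p5

theorem n0 (L : Loc13 G u v1 p p' v2 r r' v3 s t) (H : Hyp13 G 3) :
    ∀ y, G.Adj u y → y = v1 ∨ y = v2 ∨ y = v3 :=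
  H.full L.a1 L.a2 L.a3 L.n12 L.n13 L.n23

theorem lp (L : Loc13 G u v1 p p' v2 r r' v3 s t) (H : Hyp13 G 3) : G.dist p u = 2 :=
  H.dist_two L.p1.symm L.a1.symm L.p3

theorem lp' (L : Loc13 G u v1 p p' v2 r r' v3 s t) (H : Hyp13 G 3) : G.dist p' u = 2 :=
  H.dist_two L.p2.symm L.a1.symm L.p4

theorem cov (L : Loc13 G u v1 p p' v2 r r' v3 s t) (H : Hyp13 G 3) (y : V) :
    y = u ∨ y = v1 ∨ y = v2 ∨ y = v3 ∨ y = p ∨ y = p' ∨ y = r ∨ y = r' ∨ y = s ∨ y = t ∨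
      G.dist y u = 3 := by
  by_cases hy : y = u
  · exact Or.inl hy
  have hpos := H.pos hy
  have hle := H.le y u
  by_cases h1 : G.dist y u = 1
  · rcases L.n0 H y (SimpleGraph.dist_eq_one_iff_adj.1 h1).symm with e | e | e <;> simp [e]
  by_cases h2 : G.dist y u = 2
  · obtain ⟨c, c1, c2⟩ := H.pred' hy
    have hc : G.Adj u c := (SimpleGraph.dist_eq_one_iff_adj.1 (by omega : G.dist c u = 1)).symm
    rcases L.n0 H c hc with rfl | rfl | rfl
    · rcases L.n1 H y c1.symm with e | e | e <;> simp [e]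
    · rcases L.rot.n1 H y c1.symm with e | e | e <;> simp [e]
    · rcases L.rot.rot.n1 H y c1.symm with e | e | e <;> simp [e]
  · have : G.dist y u = 3 := by omega
    simp [this]

theorem z3 (L : Loc13 G u v1 p p' v2 r r' v3 s t) (H : Hyp13 G 3) {y : V} (h : G.dist y u = 3) :
    G.dist y v1 = 2 ∨ G.dist y v2 = 2 ∨ G.dist y v3 = 2 := by
  have hy : y ≠ u := by rintro rfl; simp at h
  obtain ⟨c, c1, c2⟩ := H.pred hy
  rcases L.n0 H c c1 with rfl | rfl | rfl <;> omega

theorem znb (L : Loc13 G u v1 p p' v2 r r' v3 s t) (H : Hyp13 G 3) {z y : V} (h : G.dist z u = 3)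
    (hzy : G.Adj z y) : G.dist y u = 3 ∨ (G.dist z v1 = 2 ∧ (y = p ∨ y = p')) ∨
      (G.dist z v2 = 2 ∧ (y = r ∨ y = r')) ∨ (G.dist z v3 = 2 ∧ (y = s ∨ y = t)) := by
  have l0 := H.dadj' u hzy
  have d1 := Hyp13.a1' L.a1.symm
  have d2 := Hyp13.a1' L.a2.symm
  have d3 := Hyp13.a1' L.a3.symm
  have e1 := H.dadj z L.a1
  have e2 := H.dadj z L.a2
  have e3 := H.dadj z L.a3
  have f1 := H.dadj' v1 hzy
  have f2 := H.dadj' v2 hzy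
  have f3 := H.dadj' v3 hzy
  rcases L.cov H y with e | e | e | e | e | e | e | e | e | e | e
  · subst e; simp at l0; omega
  · subst e; omega
  · subst e; omega
  · subst e; omega
  · have := Hyp13.a1' L.p1.symm; subst e; exact Or.inr (Or.inl ⟨by omega, Or.inl rfl⟩)
  · have := Hyp13.a1' L.p2.symm; subst e; exact Or.inr (Or.inl ⟨by omega, Or.inr rfl⟩)
  · have := Hyp13.a1' L.r1.symm; subst e; exact Or.inr (Or.inr (Or.inl ⟨by omega, Or.inl rfl⟩))
  · have := Hyp13.a1' L.r2.symm; subst e; exact Or.inr (Or.inr (Or.inl ⟨by omega, Or.inr rfl⟩))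
  · have := Hyp13.a1' L.s1.symm; subst e; exact Or.inr (Or.inr (Or.inr ⟨by omega, Or.inl rfl⟩))
  · have := Hyp13.a1' L.s2.symm; subst e; exact Or.inr (Or.inr (Or.inr ⟨by omega, Or.inr rfl⟩))
  · exact Or.inl e

end Loc13

namespace Hyp13
variable {V : Type*} [Fintype V] {G : SimpleGraph V}

theorem cardLev (u : V) (A B C : List V) (hA : A.Nodup) (hB : B.Nodup) (hC : C.Nodup)
    (lA : ∀ a ∈ A, G.dist a u = 1) (lB : ∀ a ∈ B, G.dist a u = 2) (lC : ∀ a ∈ C, G.dist a u = 3) :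
    1 + A.length + B.length + C.length ≤ Fintype.card V := by
  have : (u :: (A ++ (B ++ C))).Nodup := by
    rw [List.nodup_cons]
    constructor
    · intro h
      simp only [List.mem_append] at h
      rcases h with h | h | h
      · have := lA u h; simp at this
      · have := lB u h; simp at this
      · have := lC u h; simp at this
    · refine List.Nodup.append hA (List.Nodup.append hB hC ?_) ?_
      · intro x h1 h2
        have := lB x h1
        have := lC x h2
        omega
      · intro x h1 h2
        rw [List.mem_append] at h2
        have := lA x h1
        rcases h2 with h2 | h2
        · have := lB x h2
          omega
        · have := lC x h2
          omega
  have := this.length_le_card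
  simp at this
  omega

end Hyp13

namespace Loc13
variable {V : Type*} [Fintype V] {G : SimpleGraph V} {u v1 p p' v2 r r' v3 s t : V}

theorem lA (L : Loc13 G u v1 p p' v2 r r' v3 s t) : ∀ a ∈ [v1, v2, v3], G.dist a u = 1 := by
  intro a ha
  simp at ha
  rcases ha with rfl | rfl | rfl
  · exact Hyp13.a1' L.a1.symm
  · exact Hyp13.a1' L.a2.symm
  · exact Hyp13.a1' L.a3.symm

theorem ndA (L : Loc13 G u v1 p p' v2 r r' v3 s t) : [v1, v2, v3].Nodup := by
  simp [L.n12, L.n13, L.n23]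

theorem subA (L : Loc13 G u v1 p p' v2 r r' v3 s t) (H : Hyp13 G 3) {z1 z2 z3 : V}
    (d1 : G.dist z1 u = 3) (d2 : G.dist z2 u = 3) (d3 : G.dist z3 u = 3)
    (e2 : G.dist z2 v2 = 2) (e3 : G.dist z3 v3 = 2)
    (u1 : ∀ y, G.dist y u = 3 → G.dist y v1 = 2 → y = z1)
    (u2 : ∀ y, G.dist y u = 3 → G.dist y v2 = 2 → y = z2)
    (u3 : ∀ y, G.dist y u = 3 → G.dist y v3 = 2 → y = z3)
    (n12 : z1 ≠ z2) (n13 : z1 ≠ z3) (hn : ¬ G.Adj z1 z2) :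
    G.Adj z1 p ∧ G.Adj z1 p' ∧ G.Adj z1 z3 := by
  apply H.all3
  intro y hy
  rcases L.znb H d1 hy with h | ⟨h, h'⟩ | ⟨h, h'⟩ | ⟨h, h'⟩
  · rcases L.z3 H h with h' | h' | h'
    · have := u1 y h h'; subst this; exact absurd rfl hy.ne
    · have := u2 y h h'; subst this; exact absurd hy hn
    · exact Or.inr (Or.inr (u3 y h h'))
  · rcases h' with h' | h' <;> simp [h']
  · exact absurd (u2 z1 d1 h) n12
  · exact absurd (u3 z1 d1 h) n13

/-- a neighbour of `z` at level two is adjacent only to admissible `v` -/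
theorem sepv (L : Loc13 G u v1 p p' v2 r r' v3 s t) (H : Hyp13 G 3) {z x : V}
    (d1 : G.dist z u = 3) (h : G.dist z v1 ≠ 2) (hx : G.Adj z x) : x ≠ p ∧ x ≠ p' := by
  have key : ∀ x, G.Adj z x → ¬ G.Adj v1 x := by
    intro x hx hv
    have := Hyp13.a1' hv.symm
    have := H.dadj' v1 hx
    have := H.dadj z L.a1
    omega
  exact ⟨fun e => key x hx (e ▸ L.p1), fun e => key x hx (e ▸ L.p2)⟩

theorem noA' (L : Loc13 G u v1 p p' v2 r r' v3 s t) (H : Hyp13 G 3) {z1 z2 z3 : V}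
    (d1 : G.dist z1 u = 3) (d2 : G.dist z2 u = 3) (d3 : G.dist z3 u = 3)
    (e1 : G.dist z1 v1 = 2) (e2 : G.dist z2 v2 = 2) (e3 : G.dist z3 v3 = 2)
    (u1 : ∀ y, G.dist y u = 3 → G.dist y v1 = 2 → y = z1)
    (u2 : ∀ y, G.dist y u = 3 → G.dist y v2 = 2 → y = z2)
    (u3 : ∀ y, G.dist y u = 3 → G.dist y v3 = 2 → y = z3)
    (n12 : z1 ≠ z2) (n13 : z1 ≠ z3) (n23 : z2 ≠ z3) (hn : ¬ G.Adj z1 z2) : False := by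
  obtain ⟨b1, b2, b3⟩ := L.subA H d1 d2 d3 e2 e3 u1 u2 u3 n12 n13 hn
  have hn2 : ¬ G.Adj z2 z1 := fun h => hn h.symm
  obtain ⟨c1, c2, c3⟩ : G.Adj z2 r ∧ G.Adj z2 r' ∧ G.Adj z2 z3 := by
    apply H.all3
    intro y hy
    rcases L.znb H d2 hy with h | ⟨h, h'⟩ | ⟨h, h'⟩ | ⟨h, h'⟩
    · rcases L.z3 H h with h' | h' | h'
      · have := u1 y h h'; subst this; exact absurd hy hn2
      · have := u2 y h h'; subst this; exact absurd rfl hy.ne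
      · exact Or.inr (Or.inr (u3 y h h'))
    · exact absurd (u1 z2 d2 h).symm n12
    · rcases h' with h' | h' <;> simp [h']
    · exact absurd (u3 z2 d2 h) n23
  have f12 : G.dist z1 v2 ≠ 2 := fun h => n12 (u2 z1 d1 h)
  have f13 : G.dist z1 v3 ≠ 2 := fun h => n13 (u3 z1 d1 h)
  have f23 : G.dist z2 v3 ≠ 2 := fun h => n23 (u3 z2 d2 h)
  have g1 := L.rot.sepv H d1 f12 b1
  have g2 := L.rot.sepv H d1 f12 b2
  have g3 := L.rot.rot.sepv H d1 f13 b1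
  have g4 := L.rot.rot.sepv H d1 f13 b2
  have g5 := L.rot.rot.sepv H d2 f23 c1
  have g6 := L.rot.rot.sepv H d2 f23 c2
  have ge := Hyp13.cardLev (G := G) u [v1, v2, v3] [p, p', r, r', s, t] [z1, z2, z3] L.ndA
    (by simp [g1, g2, g3, g4, g5, g6, L.p5, L.r5, L.s5]) (by simp [n12, n13, n23]) L.lA
    (by
      intro a ha
      simp at ha
      rcases ha with rfl | rfl | rfl | rfl | rfl | rfl
      · exact L.lp H
      · exact L.lp' H
      · exact L.rot.lp H
      · exact L.rot.lp' H
      · exact L.rot.rot.lp H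
      · exact L.rot.rot.lp' H)
    (by
      intro a ha
      simp at ha
      rcases ha with rfl | rfl | rfl <;> assumption)
  have le := Hyp13.cardLe [u, v1, v2, v3, p, p', r, r', s, t, z1, z2, z3] (by
    intro y
    rcases L.cov H y with e | e | e | e | e | e | e | e | e | e | e
    · simp [e]
    · simp [e]
    · simp [e]
    · simp [e]
    · simp [e]
    · simp [e]
    · simp [e]
    · simp [e]
    · simp [e]
    · simp [e]
    · rcases L.z3 H e with h | h | h
      · simp [u1 y e h]
      · simp [u2 y e h]
      · simp [u3 y e h])
  simp at ge le
  have := H.even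
  rw [show Fintype.card V = 13 by omega] at this
  revert this; decide

theorem noA (L : Loc13 G u v1 p p' v2 r r' v3 s t) (H : Hyp13 G 3) {z1 z2 z3 : V}
    (d1 : G.dist z1 u = 3) (d2 : G.dist z2 u = 3) (d3 : G.dist z3 u = 3)
    (e1 : G.dist z1 v1 = 2) (e2 : G.dist z2 v2 = 2) (e3 : G.dist z3 v3 = 2)
    (u1 : ∀ y, G.dist y u = 3 → G.dist y v1 = 2 → y = z1)
    (u2 : ∀ y, G.dist y u = 3 → G.dist y v2 = 2 → y = z2)
    (u3 : ∀ y, G.dist y u = 3 → G.dist y v3 = 2 → y = z3)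
    (n12 : z1 ≠ z2) (n13 : z1 ≠ z3) (n23 : z2 ≠ z3) : False := by
  by_cases h12 : G.Adj z1 z2
  · by_cases h23 : G.Adj z2 z3
    · by_cases h13 : G.Adj z3 z1
      · exact H.noTri h12 h23 h13.symm
      · exact L.rot.rot.noA' H d3 d1 d2 e3 e1 e2 u3 u1 u2 n13.symm n23.symm n12 h13
    · exact L.rot.noA' H d2 d3 d1 e2 e3 e1 u2 u3 u1 n23 n12.symm n13.symm h23
  · exact L.noA' H d1 d2 d3 e1 e2 e3 u1 u2 u3 n12 n13 n23 h12

end Loc13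

namespace Hyp13
variable {V : Type*} [Fintype V] {G : SimpleGraph V}

theorem L3two (H : Hyp13 G 3) {u v1 p p' v2 r r' v3 s t : V}
    (L : Loc13 G u v1 p p' v2 r r' v3 s t) :
    ∃ z z', ∀ y, G.dist y u = 3 → y = z ∨ y = z' := by
  obtain ⟨z1, d1, e1, u1⟩ := H.zEx L.a1
  obtain ⟨z2, d2, e2, u2⟩ := H.zEx L.a2
  obtain ⟨z3, d3, e3, u3⟩ := H.zEx L.a3
  have key : ∀ y, G.dist y u = 3 → y = z1 ∨ y = z2 ∨ y = z3 := by
    intro y h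
    rcases L.z3 H h with h' | h' | h'
    · exact Or.inl (u1 y h h')
    · exact Or.inr (Or.inl (u2 y h h'))
    · exact Or.inr (Or.inr (u3 y h h'))
  by_cases n12 : z1 = z2
  · exact ⟨z1, z3, fun y h => by rcases key y h with e | e | e <;> simp [e, n12]⟩
  by_cases n13 : z1 = z3
  · exact ⟨z1, z2, fun y h => by rcases key y h with e | e | e <;> simp [e, n13]⟩
  by_cases n23 : z2 = z3
  · exact ⟨z1, z2, fun y h => by rcases key y h with e | e | e <;> simp [e, n23]⟩
  exact (L.noA H d1 d2 d3 e1 e2 e3 u1 u2 u3 n12 n13 n23).elim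

/-- local structure around a 4-cycle `x a c b` -/
theorem loc4 (H : Hyp13 G 3) {x a b c : V} (ha : G.Adj x a) (hb : G.Adj x b) (hab : a ≠ b)
    (hc : c ≠ x) (hac : G.Adj a c) (hbc : G.Adj b c) :
    ∃ e e' v f g, Loc13 G x a c e b c e' v f g := by
  obtain ⟨v, v1, v2, v3, -⟩ := H.third ha hb hab
  obtain ⟨e, e1, e2, e3, -⟩ := H.third ha.symm hac hc.symm
  obtain ⟨e', e1', e2', e3', -⟩ := H.third hb.symm hbc hc.symm
  obtain ⟨f, g, g1, g2, g3, g4, g5, -⟩ := H.two v3.symm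
  exact ⟨e, e', v, f, g, ha, hb, v3, hab, v1.symm, v2.symm, hac, e3, hc, e1, e2.symm, hbc, e3', hc,
    e1', e2'.symm, g4, g5, g1, g2, g3⟩

theorem four11 (H : Hyp13 G 3) {x a b c : V} (ha : G.Adj x a) (hb : G.Adj x b) (hab : a ≠ b)
    (hc : c ≠ x) (hac : G.Adj a c) (hbc : G.Adj b c) : Fintype.card V ≤ 11 := by
  obtain ⟨e, e', v, f, g, L⟩ := H.loc4 ha hb hab hc hac hbc
  obtain ⟨z, z', hz⟩ := H.L3two L
  refine cardLe [x, a, b, v, c, e, e', f, g, z, z'] ?_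
  intro y
  rcases L.cov H y with e | e | e | e | e | e | e | e | e | e | e
  · simp [e]
  · simp [e]
  · simp [e]
  · simp [e]
  · simp [e]
  · simp [e]
  · simp [e]
  · simp [e]
  · simp [e]
  · simp [e]
  · rcases hz y e with h | h <;> simp [h]

end Hyp13

namespace Loc13
variable {V : Type*} [Fintype V] {G : SimpleGraph V} {u v1 p p' v2 r r' v3 s t : V}

theorem sw (L : Loc13 G u v1 p p' v2 r r' v3 s t) : Loc13 G u v1 p p' v2 r r' v3 t s :=
  ⟨L.a1, L.a2, L.a3, L.n12, L.n13, L.n23, L.p1, L.p2, L.p3, L.p4, L.p5, L.r1, L.r2, L.r3, L.r4, L.r5,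
    L.s2, L.s1, L.s4, L.s3, L.s5.symm⟩

theorem noB (L : Loc13 G u v1 p p' v2 r r' v3 s t) (H : Hyp13 G 3) {z z' : V}
    (d1 : G.dist z u = 3) (d2 : G.dist z' u = 3)
    (e1 : G.dist z v1 = 2) (e2 : G.dist z' v2 = 2) (e3 : G.dist z' v3 = 2)
    (u1 : ∀ y, G.dist y u = 3 → G.dist y v1 = 2 → y = z)
    (u2 : ∀ y, G.dist y u = 3 → G.dist y v2 = 2 → y = z')
    (u3 : ∀ y, G.dist y u = 3 → G.dist y v3 = 2 → y = z')
    (n12 : z ≠ z') : False := by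
  have hL3 : ∀ y, G.dist y u = 3 → y = z ∨ y = z' := by
    intro y h
    rcases L.z3 H h with h' | h' | h'
    · exact Or.inl (u1 y h h')
    · exact Or.inr (u2 y h h')
    · exact Or.inr (u3 y h h')
  obtain ⟨b1, b2, b3⟩ : G.Adj z p ∧ G.Adj z p' ∧ G.Adj z z' := by
    apply H.all3
    intro y hy
    rcases L.znb H d1 hy with h | ⟨h, h'⟩ | ⟨h, h'⟩ | ⟨h, h'⟩
    · rcases hL3 y h with e | e
      · subst e; exact absurd rfl hy.ne
      · simp [e]
    · rcases h' with h' | h' <;> simp [h']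
    · exact absurd (u2 z d1 h) n12
    · exact absurd (u3 z d1 h) n12
  have f12 : G.dist z v2 ≠ 2 := fun h => n12 (u2 z d1 h)
  have f13 : G.dist z v3 ≠ 2 := fun h => n12 (u3 z d1 h)
  have g1 := L.rot.sepv H d1 f12 b1
  have g2 := L.rot.sepv H d1 f12 b2
  have g3 := L.rot.rot.sepv H d1 f13 b1
  have g4 := L.rot.rot.sepv H d1 f13 b2
  have hzv : z ≠ v1 := by
    rintro rfl
    rw [SimpleGraph.dist_self] at e1; omega
  have ub := H.four11 L.p1 L.p2 L.p5 hzv b1.symm b2.symm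
  have lev : ∀ a, a = p ∨ a = p' ∨ a = r ∨ a = r' ∨ a = s ∨ a = t → G.dist a u = 2 := by
    rintro a (rfl | rfl | rfl | rfl | rfl | rfl)
    · exact L.lp H
    · exact L.lp' H
    · exact L.rot.lp H
    · exact L.rot.lp' H
    · exact L.rot.rot.lp H
    · exact L.rot.rot.lp' H
  have lC : ∀ a ∈ [z, z'], G.dist a u = 3 := by
    intro a ha
    simp at ha
    rcases ha with rfl | rfl <;> assumption
  have hev := H.even
  -- exactly one coincidence
  have one : ∀ s t, Loc13 G u v1 p p' v2 r r' v3 s t → p ≠ t → p' ≠ t → (s = r ∨ s = r') → t ≠ r →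
      t ≠ r' → False := by
    intro s t L k1 k2 hs h1 h2
    have ge := Hyp13.cardLev (G := G) u [v1, v2, v3] [p, p', r, r', t] [z, z'] L.ndA
      (by simp [g1, g2, k1, k2, L.p5, L.r5, h1.symm, h2.symm]) (by simp [n12]) L.lA
      (by
        intro a ha
        simp at ha
        rcases ha with rfl | rfl | rfl | rfl | rfl
        · exact L.lp H
        · exact L.lp' H
        · exact L.rot.lp H
        · exact L.rot.lp' H
        · exact L.rot.rot.lp' H)
      lC
    simp at ge
    rw [show Fintype.card V = 11 by omega] at hev
    revert hev; decide
  by_cases hs : s = r ∨ s = r'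
  · by_cases ht : t = r ∨ t = r'
    · have hst : (s = r ∧ t = r') ∨ (s = r' ∧ t = r) := by
        rcases hs with e | e <;> rcases ht with e' | e'
        · exact absurd (e.trans e'.symm) L.s5
        · exact Or.inl ⟨e, e'⟩
        · exact Or.inr ⟨e, e'⟩
        · exact absurd (e.trans e'.symm) L.s5
      have v3r : G.Adj v3 r := by
        rcases hst with ⟨e, e'⟩ | ⟨e, e'⟩
        · rw [← e]; exact L.s1
        · rw [← e']; exact L.s2
      have v3r' : G.Adj v3 r' := by
        rcases hst with ⟨e, e'⟩ | ⟨e, e'⟩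
        · rw [← e']; exact L.s2
        · rw [← e]; exact L.s1
      obtain ⟨c1, c2, c3⟩ : G.Adj z' z ∧ G.Adj z' r ∧ G.Adj z' r' := by
        apply H.all3
        intro y hy
        rcases L.znb H d2 hy with h | ⟨h, h'⟩ | ⟨h, h'⟩ | ⟨h, h'⟩
        · rcases hL3 y h with e | e
          · simp [e]
          · subst e; exact absurd rfl hy.ne
        · exact absurd (u1 z' d2 h).symm n12
        · rcases h' with h' | h' <;> simp [h']
        · rcases h' with h' | h'
          · subst h'; rcases hs with h | h <;> simp [h]
          · subst h'; rcases ht with h | h <;> simp [h]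
      have l2 := Hyp13.a1' L.a2.symm
      have l3 := Hyp13.a1' L.a3.symm
      have lr := L.rot.lp H
      have lr' := L.rot.lp' H
      have lpp := L.lp H
      have nl : ∀ {a b : V}, G.dist a u ≠ G.dist b u → a ≠ b := fun h e => h (by rw [e])
      have nr := H.full L.r1.symm v3r.symm c2.symm L.n23 (nl (by omega)) (nl (by omega))
      have nr' := H.full L.r2.symm v3r'.symm c3.symm L.n23 (nl (by omega)) (nl (by omega))
      have nz := H.full c1 c2 c3 (nl (by omega)) (nl (by omega)) L.r5
      have npr : ¬ G.Adj p r := fun h => by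
        rcases nr p h.symm with e | e | e <;> exact nl (by omega) e
      have npr' : ¬ G.Adj p r' := fun h => by
        rcases nr' p h.symm with e | e | e <;> exact nl (by omega) e
      have npz : ¬ G.Adj p z' := fun h => by
        rcases nz p h.symm with e | e | e
        · exact nl (by omega) e
        · exact g1.1 e
        · exact g1.2 e
      obtain ⟨e, k1, k2, k3, -⟩ := H.third L.p1.symm b1.symm hzv.symm
      rcases L.cov H e with h | h | h | h | h | h | h | h | h | h | h
      · subst h
        have := Hyp13.a1' k3
        omega
      · exact k1 h
      · subst h
        rcases L.rot.n1 H p k3.symm with e | e | e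
        · exact L.p3 e
        · exact g1.1 e
        · exact g1.2 e
      · subst h
        rcases L.rot.rot.n1 H p k3.symm with e | e | e
        · exact L.p3 e
        · exact g3.1 e
        · exact g3.2 e
      · subst h; exact k3.ne rfl
      · subst h; exact H.noTri L.p1 k3 L.p2
      · subst h; exact npr k3
      · subst h; exact npr' k3
      · subst h
        rcases hs with e | e
        · exact npr (e ▸ k3)
        · exact npr' (e ▸ k3)
      · subst h
        rcases ht with e | e
        · exact npr (e ▸ k3)
        · exact npr' (e ▸ k3)
      · rcases hL3 e h with h' | h'
        · exact k2 h'
        · subst h'; exact npz k3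
    · exact one s t L g3.2 g4.2 hs (fun e => ht (Or.inl e)) (fun e => ht (Or.inr e))
  · by_cases ht : t = r ∨ t = r'
    · exact one t s L.sw g3.1 g4.1 ht (fun e => hs (Or.inl e)) (fun e => hs (Or.inr e))
    · have ge := Hyp13.cardLev (G := G) u [v1, v2, v3] [p, p', r, r', s, t] [z, z'] L.ndA
        (by
          have q1 : r ≠ s := fun e => hs (Or.inl e.symm)
          have q2 : r' ≠ s := fun e => hs (Or.inr e.symm)
          have q3 : r ≠ t := fun e => ht (Or.inl e.symm)
          have q4 : r' ≠ t := fun e => ht (Or.inr e.symm)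
          simp [g1, g2, g3, g4, L.p5, L.r5, L.s5, q1, q2, q3, q4]) (by simp [n12]) L.lA
        (by
          intro a ha
          simp at ha
          exact lev a ha)
        lC
      simp at ge
      omega

end Loc13

namespace Hyp13
variable {V : Type*} [Fintype V] {G : SimpleGraph V}

theorem single (H : Hyp13 G 3) (u : V) :
    ∃ z, G.dist z u = 3 ∧ ∀ y, G.dist y u = 3 → y = z := by
  obtain ⟨v1, p, p', v2, r, r', v3, s, t, L⟩ := H.exLoc u
  obtain ⟨z1, d1, e1, u1⟩ := H.zEx L.a1
  obtain ⟨z2, d2, e2, u2⟩ := H.zEx L.a2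
  obtain ⟨z3, d3, e3, u3⟩ := H.zEx L.a3
  by_cases n12 : z1 = z2
  · subst n12
    by_cases n13 : z1 = z3
    · subst n13
      refine ⟨z1, d1, fun y h => ?_⟩
      rcases L.z3 H h with h' | h' | h'
      · exact u1 y h h'
      · exact u2 y h h'
      · exact u3 y h h'
    · exact (L.rot.rot.noB H d3 d1 e3 e1 e2 u3 u1 u2 (Ne.symm n13)).elim
  by_cases n13 : z1 = z3
  · subst n13
    exact (L.rot.noB H d2 d1 e2 e3 e1 u2 u3 u1 (Ne.symm n12)).elim
  by_cases n23 : z2 = z3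
  · subst n23
    exact (L.noB H d1 d2 e1 e2 e3 u1 u2 u3 n12).elim
  exact (L.noA H d1 d2 d3 e1 e2 e3 u1 u2 u3 n12 n13 n23).elim

end Hyp13

/-- a 4-cycle through `x` with neighbours `a`, `b` and opposite vertex `c` -/
structure Cyc13 {V : Type*} (G : SimpleGraph V) (x a b c : V) : Prop where
  ha : G.Adj x a
  hb : G.Adj x b
  hab : a ≠ b
  hc : c ≠ x
  hac : G.Adj a c
  hbc : G.Adj b c

namespace Hyp13
variable {V : Type*} [Fintype V] {G : SimpleGraph V}

theorem card9 (H : Hyp13 G 3) {u v1 p p' v2 r r' v3 s t : V}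
    (L : Loc13 G u v1 p p' v2 r r' v3 s t) (c1 c2 c3 c4 : V)
    (h : ∀ y, y = p ∨ y = p' ∨ y = r ∨ y = r' ∨ y = s ∨ y = t →
      y = c1 ∨ y = c2 ∨ y = c3 ∨ y = c4) : Fintype.card V ≤ 9 := by
  obtain ⟨z, -, hz⟩ := H.single u
  refine cardLe [u, v1, v2, v3, c1, c2, c3, c4, z] ?_
  intro y
  have h' : y = p ∨ y = p' ∨ y = r ∨ y = r' ∨ y = s ∨ y = t →
      y ∈ [u, v1, v2, v3, c1, c2, c3, c4, z] := by
    intro hy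
    rcases h y hy with e | e | e | e <;> simp [e]
  rcases L.cov H y with e | e | e | e | e | e | e | e | e | e | e
  · simp [e]
  · simp [e]
  · simp [e]
  · simp [e]
  · exact h' (by simp [e])
  · exact h' (by simp [e])
  · exact h' (by simp [e])
  · exact h' (by simp [e])
  · exact h' (by simp [e])
  · exact h' (by simp [e])
  · simp [hz y e]

theorem cyc_a (H : Hyp13 G 3) {x a b c c' : V} (h : Cyc13 G x a b c) (h' : Cyc13 G x a b c')
    (hn : 9 < Fintype.card V) : c = c' := by
  by_contra hcc
  obtain ⟨e, e', v, f, g, L⟩ := H.loc4 h.ha h.hb h.hab h.hc h.hac h.hbc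
  have h1 : e = c' := by
    rcases L.n1 H c' h'.hac with k | k | k
    · exact absurd k h'.hc
    · exact absurd k.symm hcc
    · exact k.symm
  have h2 : e' = c' := by
    rcases L.rot.n1 H c' h'.hbc with k | k | k
    · exact absurd k h'.hc
    · exact absurd k.symm hcc
    · exact k.symm
  have := H.card9 L c c' f g (by
    rintro y (k | k | k | k | k | k) <;> simp [k, h1, h2])
  omega

theorem cyc_b (H : Hyp13 G 3) {x a b c b' c' : V} (h : Cyc13 G x a b c) (h' : Cyc13 G x a b' c')
    (hn : 9 < Fintype.card V) : b = b' := by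
  by_contra hbb
  obtain ⟨e, e', v, f, g, L⟩ := H.loc4 h.ha h.hb h.hab h.hc h.hac h.hbc
  have hv : v = b' := by
    rcases L.n0 H b' h'.hb with k | k | k
    · exact absurd k.symm h'.hab
    · exact absurd k.symm hbb
    · exact k.symm
  subst hv
  have key : ∃ f', ∀ y, y = f ∨ y = g → y = c' ∨ y = f' := by
    rcases L.rot.rot.n1 H c' h'.hbc with k | k | k
    · exact absurd k h'.hc
    · exact ⟨g, fun y hy => by rw [k]; exact hy⟩
    · exact ⟨f, fun y hy => by rw [k]; exact hy.symm⟩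
  obtain ⟨f', hf⟩ := key
  have hcc' : c' = c ∨ c' = e := by
    rcases L.n1 H c' h'.hac with k | k | k
    · exact absurd k h'.hc
    · exact Or.inl k
    · exact Or.inr k
  have := H.card9 L c e e' f' (by
    rintro y (k | k | k | k | k | k)
    · simp [k]
    · simp [k]
    · simp [k]
    · simp [k]
    · rcases hf y (Or.inl k) with k | k
      · rcases hcc' with l | l <;> simp [k, l]
      · simp [k]
    · rcases hf y (Or.inr k) with k | k
      · rcases hcc' with l | l <;> simp [k, l]
      · simp [k])
  omega

theorem _root_.Cyc13.sw {x a b c : V} (h : Cyc13 G x a b c) : Cyc13 G x b a c :=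
  ⟨h.hb, h.ha, h.hab.symm, h.hc, h.hbc, h.hac⟩

theorem cyc_u (H : Hyp13 G 3) {x a b c a' b' c' : V} (h : Cyc13 G x a b c)
    (h' : Cyc13 G x a' b' c') (hn : 9 < Fintype.card V) :
    ((a = a' ∧ b = b') ∨ (a = b' ∧ b = a')) ∧ c = c' := by
  obtain ⟨v, v1, v2, v3, v4⟩ := H.third h.ha h.hb h.hab
  have main : ∀ a b, Cyc13 G x a b c → ∀ b', Cyc13 G x a b' c' → b = b' ∧ c = c' := by
    intro a b h b' h'
    have := H.cyc_b h h' hn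
    subst this
    exact ⟨rfl, H.cyc_a h h' hn⟩
  rcases v4 a' h'.ha with e | e | e
  · subst e
    have := main _ _ h _ h'
    exact ⟨Or.inl ⟨rfl, this.1⟩, this.2⟩
  · subst e
    have := main _ _ h.sw _ h'
    exact ⟨Or.inr ⟨this.1, rfl⟩, this.2⟩
  · rcases v4 b' h'.hb with k | k | k
    · subst k
      have := main _ _ h _ h'.sw
      exact ⟨Or.inr ⟨rfl, this.1⟩, this.2⟩
    · subst k
      have := main _ _ h.sw _ h'.sw
      exact ⟨Or.inl ⟨this.1, rfl⟩, this.2⟩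
    · exact absurd (e.trans k.symm) h'.hab

theorem cyc_ex (H : Hyp13 G 3) (hn : Fintype.card V < 11) (x : V) : ∃ a b c, Cyc13 G x a b c := by
  by_contra hcon
  have key : ∀ a b c d, G.Adj x a → G.Adj x b → a ≠ b → c ≠ x → G.Adj a c → G.Adj b d → c ≠ d := by
    rintro a b c d h1 h2 h3 h4 h5 h6 rfl
    exact hcon ⟨a, b, c, h1, h2, h3, h4, h5, h6⟩
  obtain ⟨v1, p, p', v2, r, r', v3, s, t, L⟩ := H.exLoc x
  obtain ⟨z, z1, -⟩ := H.single x
  have ge := Hyp13.cardLev (G := G) x [v1, v2, v3] [p, p', r, r', s, t] [z] L.ndA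
    (by
      have q1 := key v1 v2 p r L.a1 L.a2 L.n12 L.p3 L.p1 L.r1
      have q2 := key v1 v2 p r' L.a1 L.a2 L.n12 L.p3 L.p1 L.r2
      have q3 := key v1 v2 p' r L.a1 L.a2 L.n12 L.p4 L.p2 L.r1
      have q4 := key v1 v2 p' r' L.a1 L.a2 L.n12 L.p4 L.p2 L.r2
      have q5 := key v1 v3 p s L.a1 L.a3 L.n13 L.p3 L.p1 L.s1
      have q6 := key v1 v3 p t L.a1 L.a3 L.n13 L.p3 L.p1 L.s2
      have q7 := key v1 v3 p' s L.a1 L.a3 L.n13 L.p4 L.p2 L.s1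
      have q8 := key v1 v3 p' t L.a1 L.a3 L.n13 L.p4 L.p2 L.s2
      have q9 := key v2 v3 r s L.a2 L.a3 L.n23 L.r3 L.r1 L.s1
      have q10 := key v2 v3 r t L.a2 L.a3 L.n23 L.r3 L.r1 L.s2
      have q11 := key v2 v3 r' s L.a2 L.a3 L.n23 L.r4 L.r2 L.s1
      have q12 := key v2 v3 r' t L.a2 L.a3 L.n23 L.r4 L.r2 L.s2
      simp [q1, q2, q3, q4, q5, q6, q7, q8, q9, q10, q11, q12, L.p5, L.r5, L.s5]) (by simp) L.lA
    (by
      intro a ha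
      simp at ha
      rcases ha with rfl | rfl | rfl | rfl | rfl | rfl
      · exact L.lp H
      · exact L.lp' H
      · exact L.rot.lp H
      · exact L.rot.lp' H
      · exact L.rot.rot.lp H
      · exact L.rot.rot.lp' H)
    (by
      intro a ha
      simp at ha
      subst ha; exact z1)
  simp at ge
  omega

theorem card_le_11 (H : Hyp13 G 3) (x : V) : Fintype.card V ≤ 11 := by
  obtain ⟨v1, p, p', v2, r, r', v3, s, t, L⟩ := H.exLoc x
  obtain ⟨z, -, hz⟩ := H.single x
  refine cardLe [x, v1, v2, v3, p, p', r, r', s, t, z] ?_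
  intro y
  rcases L.cov H y with e | e | e | e | e | e | e | e | e | e | e
  all_goals first | (simp [e]; done) | simp [hz y e]

theorem no10 (H : Hyp13 G 3) (hn : Fintype.card V = 10) : False := by
  classical
  have ex : ∀ x, ∃ S : Finset V, x ∈ S ∧ S.card = 4 ∧ ∀ w ∈ S, ∃ a b c, Cyc13 G w a b c ∧
      S = {w, a, b, c} := by
    intro x
    obtain ⟨a, b, c, h⟩ := H.cyc_ex (by omega) x
    refine ⟨{x, a, b, c}, by simp, ?_, ?_⟩
    · have := List.toFinset_card_of_nodup (l := [x, a, b, c])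
        (by simp [h.ha.ne, h.hb.ne, h.hab, h.hc.symm, h.hac.ne, h.hbc.ne])
      simpa using this
    · intro w hw
      simp at hw
      rcases hw with rfl | rfl | rfl | rfl
      · exact ⟨a, b, c, h, rfl⟩
      · exact ⟨x, c, b, ⟨h.ha.symm, h.hac, h.hc.symm, h.hab.symm, h.hb, h.hbc.symm⟩, by
          ext y; simp; tauto⟩
      · exact ⟨x, c, a, ⟨h.hb.symm, h.hbc, h.hc.symm, h.hab, h.ha, h.hac.symm⟩, by
          ext y; simp; tauto⟩
      · exact ⟨a, b, x, ⟨h.hac.symm, h.hbc.symm, h.hab, h.hc.symm, h.ha.symm, h.hb.symm⟩, by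
          ext y; simp; tauto⟩
  have uq : ∀ S T : Finset V, (∀ w ∈ S, ∃ a b c, Cyc13 G w a b c ∧ S = {w, a, b, c}) →
      (∀ w ∈ T, ∃ a b c, Cyc13 G w a b c ∧ T = {w, a, b, c}) → ∀ w, w ∈ S → w ∈ T → S = T := by
    intro S T hS hT w hwS hwT
    obtain ⟨a, b, c, h, e⟩ := hS w hwS
    obtain ⟨a', b', c', h', e'⟩ := hT w hwT
    obtain ⟨k, rfl⟩ := H.cyc_u h h' (by omega)
    rw [e, e']
    rcases k with ⟨rfl, rfl⟩ | ⟨rfl, rfl⟩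
    · rfl
    · ext y; simp; tauto
  have out : ∀ S : Finset V, S.card < 10 → ∃ y, y ∉ S := by
    intro S hS
    by_contra hc
    push Not at hc
    have : S = Finset.univ := Finset.eq_univ_iff_forall.2 hc
    rw [this, Finset.card_univ] at hS
    omega
  obtain ⟨x, -⟩ := H.ex
  obtain ⟨S, s1, s2, s3⟩ := ex x
  obtain ⟨y, hy⟩ := out S (by omega)
  obtain ⟨T, t1, t2, t3⟩ := ex y
  have dST : Disjoint S T := by
    rw [Finset.disjoint_left]
    intro w h1 h2
    exact hy (uq S T s3 t3 w h1 h2 ▸ t1)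
  have cST : (S ∪ T).card = 8 := by rw [Finset.card_union_of_disjoint dST]; omega
  obtain ⟨z, hz⟩ := out (S ∪ T) (by omega)
  rw [Finset.mem_union, not_or] at hz
  obtain ⟨R, r1, r2, r3⟩ := ex z
  have dR : Disjoint (S ∪ T) R := by
    rw [Finset.disjoint_left]
    intro w h1 h2
    rcases Finset.mem_union.1 h1 with h1 | h1
    · exact hz.1 (uq S R s3 r3 w h1 h2 ▸ r1)
    · exact hz.2 (uq T R t3 r3 w h1 h2 ▸ r1)
  have cR : (S ∪ T ∪ R).card = 12 := by rw [Finset.card_union_of_disjoint dR]; omega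
  have := Finset.card_le_univ (S ∪ T ∪ R)
  omega

theorem card8 (H : Hyp13 G 3) : Fintype.card V = 8 ∧
    ∀ u v y, G.Adj u v → G.dist y u ≠ G.dist y v := by
  classical
  have dis : ∀ u v, Disjoint (ndbW G u v) (ndbW G v u) := by
    intro u v
    rw [Finset.disjoint_left]
    intro y h1 h2
    rw [memW] at h1 h2
    omega
  have cu : ∀ u v, G.Adj u v → (ndbW G u v ∪ ndbW G v u).card = 8 := by
    intro u v h
    rw [Finset.card_union_of_disjoint (dis u v), H.W _ _ h, H.W _ _ h.symm]
  obtain ⟨x, -⟩ := H.ex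
  have h8 : Fintype.card V = 8 := by
    obtain ⟨a, b, c, -, -, -, h⟩ := H.nb x
    have := cu x a ((h a).2 (by simp))
    have h1 := Finset.card_le_univ (ndbW G x a ∪ ndbW G a x)
    have h2 := H.card_le_11 x
    have h3 := H.even
    have h4 := H.no10
    obtain ⟨k, hk⟩ := h3
    by_contra hne
    exact h4 (by omega)
  refine ⟨h8, ?_⟩
  intro u v y h e
  have : ndbW G u v ∪ ndbW G v u = Finset.univ := by
    apply Finset.eq_univ_of_card
    rw [cu u v h, h8]
  have hy : y ∈ ndbW G u v ∪ ndbW G v u := by rw [this]; simp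
  rw [Finset.mem_union, memW, memW] at hy
  omega

end Hyp13

/-- a labelling of vertices by binary strings of length 3 -/
def lab13 {V : Type*} (u v1 v2 v3 p q m z : V) (x : Fin 3 → Bool) : V :=
  bif x 0 then (bif x 1 then (bif x 2 then z else p) else (bif x 2 then q else v1))
  else (bif x 1 then (bif x 2 then m else v2) else (bif x 2 then v3 else u))

theorem lab13_inj : ∀ x y : Fin 3 → Bool,
    lab13 (0 : Fin 8) 1 2 3 4 5 6 7 x = lab13 0 1 2 3 4 5 6 7 y → x = y := by
  decide

theorem cubeQ3_adj_iff (x y : Fin 3 → Bool) : cubeQ3.Adj x y ↔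
    (y = ![!x 0, x 1, x 2] ∨ y = ![x 0, !x 1, x 2] ∨ y = ![x 0, x 1, !x 2]) := by
  unfold cubeQ3
  rw [SimpleGraph.fromRel_adj]
  revert x y
  decide

namespace Hyp13
variable {V : Type*} [Fintype V] {G : SimpleGraph V}

theorem build (H : Hyp13 G 3) (h8 : Fintype.card V = 8) {u v1 v2 v3 p q m z : V}
    (hn : [u, v1, v2, v3, p, q, m, z].Nodup)
    (h1 : G.Adj u v1) (h2 : G.Adj u v2) (h3 : G.Adj u v3)
    (h4 : G.Adj v1 p) (h5 : G.Adj v2 p) (h6 : G.Adj v1 q) (h7 : G.Adj v3 q)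
    (h9 : G.Adj v2 m) (h10 : G.Adj v3 m) (h11 : G.Adj p z) (h12 : G.Adj q z) (h13 : G.Adj m z) :
    Nonempty (G ≃g cubeQ3) := by
  have g1 := h1.symm
  have g2 := h2.symm
  have g3 := h3.symm
  have g4 := h4.symm
  have g5 := h5.symm
  have g6 := h6.symm
  have g7 := h7.symm
  have g9 := h9.symm
  have g10 := h10.symm
  have g11 := h11.symm
  have g12 := h12.symm
  have g13 := h13.symm
  set f := lab13 u v1 v2 v3 p q m z with hf
  have inj : Function.Injective f := by
    have key : ∀ x, f x = [u, v1, v2, v3, p, q, m, z].get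
        (lab13 (0 : Fin 8) 1 2 3 4 5 6 7 x) := by
      intro x
      simp only [hf, lab13]
      cases x 0 <;> cases x 1 <;> cases x 2 <;> rfl
    intro x y e
    rw [key, key] at e
    have := List.nodup_iff_injective_get.1 hn e
    exact lab13_inj x y this
  have bij : Function.Bijective f := by
    rw [Fintype.bijective_iff_injective_and_card]
    exact ⟨inj, by simp [h8]⟩
  have adj : ∀ x, G.Adj (f x) (f ![!x 0, x 1, x 2]) ∧ G.Adj (f x) (f ![x 0, !x 1, x 2]) ∧
      G.Adj (f x) (f ![x 0, x 1, !x 2]) := by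
    intro x
    simp only [hf, lab13]
    simp only [Matrix.cons_val]
    cases x 0 <;> cases x 1 <;> cases x 2 <;> exact ⟨by assumption, by assumption, by assumption⟩
  have ne : ∀ x : Fin 3 → Bool, ![!x 0, x 1, x 2] ≠ ![x 0, !x 1, x 2] ∧
      ![!x 0, x 1, x 2] ≠ ![x 0, x 1, !x 2] ∧ ![x 0, !x 1, x 2] ≠ ![x 0, x 1, !x 2] := by
    decide
  have iff : ∀ x y, G.Adj (f x) (f y) ↔ cubeQ3.Adj x y := by
    intro x y
    obtain ⟨a1, a2, a3⟩ := adj x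
    obtain ⟨n1, n2, n3⟩ := ne x
    rw [cubeQ3_adj_iff]
    constructor
    · intro h
      have := H.full a1 a2 a3 (inj.ne n1) (inj.ne n2) (inj.ne n3) _ h
      rwa [inj.eq_iff, inj.eq_iff, inj.eq_iff] at this
    · rintro (rfl | rfl | rfl)
      · exact a1
      · exact a2
      · exact a3
  exact ⟨(RelIso.mk (Equiv.ofBijective f bij) (by intro a b; exact iff a b) : cubeQ3 ≃g G).symm⟩

theorem cube (H : Hyp13 G 3) : Nonempty (G ≃g cubeQ3) := by
  classical
  obtain ⟨h8, tie⟩ := H.card8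
  obtain ⟨u, -⟩ := H.ex
  obtain ⟨v1, p, q, v2, r, r', v3, s, t, L⟩ := H.exLoc u
  obtain ⟨z, hz, hz'⟩ := H.single u
  have dp := L.lp H
  have dq := L.lp' H
  have dr := L.rot.lp H
  have dr' := L.rot.lp' H
  have ds := L.rot.rot.lp H
  have dt := L.rot.rot.lp' H
  have e1 := a1' L.a1.symm
  have e2 := a1' L.a2.symm
  have e3 := a1' L.a3.symm
  have e0 : G.dist u u = 0 := by simp
  obtain ⟨m, hm⟩ : ∃ m, m ∉ [u, v1, v2, v3, p, q, z] := by
    by_contra hcon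
    push Not at hcon
    have := cardLe _ hcon
    simp at this
    omega
  simp only [List.mem_cons, List.not_mem_nil, or_false, not_or] at hm
  obtain ⟨m1, m2, m3, m4, m5, m6, m7⟩ := hm
  have dm : G.dist m u = 2 := by
    rcases L.cov H m with h | h | h | h | h | h | h | h | h | h | h
    all_goals first | contradiction | (subst h; assumption) | exact absurd (hz' m h) m7
  have dne : ∀ x y, G.dist x u ≠ G.dist y u → x ≠ y := by
    rintro x y h rfl
    exact h rfl
  have hn : [u, v1, v2, v3, p, q, m, z].Nodup := by
    have := L.n12
    have := L.n13
    have := L.n23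
    have := L.p5
    simp only [List.nodup_cons, List.mem_cons, List.not_mem_nil, or_false, not_or, List.nodup_nil,
      not_false_eq_true, and_true]
    refine ⟨⟨?_, ?_, ?_, ?_, ?_, ?_, ?_⟩, ⟨?_, ?_, ?_, ?_, ?_, ?_⟩, ⟨?_, ?_, ?_, ?_, ?_⟩,
      ⟨?_, ?_, ?_, ?_⟩, ⟨?_, ?_, ?_⟩, ⟨?_, ?_⟩, ?_⟩ <;>
    first | assumption | (apply Ne.symm; assumption) | (apply dne; omega)
  have all : ∀ y, y = u ∨ y = v1 ∨ y = v2 ∨ y = v3 ∨ y = p ∨ y = q ∨ y = m ∨ y = z := by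
    have hc : ([u, v1, v2, v3, p, q, m, z] : List V).toFinset = Finset.univ := by
      apply Finset.eq_univ_of_card
      rw [List.toFinset_card_of_nodup hn, h8]
      rfl
    intro y
    have : y ∈ ([u, v1, v2, v3, p, q, m, z] : List V).toFinset := by rw [hc]; simp
    simpa using this
  have lev : ∀ x y, G.Adj x y → G.dist x u ≠ G.dist y u ∧ G.dist x u ≤ G.dist y u + 1 ∧
      G.dist y u ≤ G.dist x u + 1 := by
    intro x y h
    refine ⟨?_, H.dadj' u h, H.dadj' u h.symm⟩
    rw [SimpleGraph.dist_comm, SimpleGraph.dist_comm (u := y)]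
    exact tie x y u h
  have nz : ∀ y, G.Adj z y → y = p ∨ y = q ∨ y = m := by
    intro y h
    obtain ⟨i1, i2, i3⟩ := lev _ _ h
    rcases all y with rfl | rfl | rfl | rfl | rfl | rfl | rfl | rfl
    all_goals first | (exfalso; omega) | simp
  have n2 : ∀ x, G.dist x u = 2 → ∀ y, G.Adj x y → y = v1 ∨ y = v2 ∨ y = v3 ∨ y = z := by
    intro x hx y h
    obtain ⟨i1, i2, i3⟩ := lev _ _ h
    rcases all y with rfl | rfl | rfl | rfl | rfl | rfl | rfl | rfl
    all_goals first | (exfalso; omega) | simp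
  obtain ⟨zp, zq, zm⟩ := H.all3 nz
  have hm' : ¬ G.Adj m v1 := by
    intro h
    have := L.n1 H m h.symm
    tauto
  have nm : ∀ y, G.Adj m y → y = v2 ∨ y = v3 ∨ y = z := by
    intro y h
    rcases n2 m dm y h with rfl | h | h | h
    · exact absurd h hm'
    all_goals tauto
  obtain ⟨mv2, mv3, -⟩ := H.all3 nm
  have um : u ≠ m := fun h => m1 h.symm
  have npq : ∀ x, x = p ∨ x = q → u ≠ x ∧ m ≠ x := by
    rintro x (rfl | rfl)
    · exact ⟨L.p3.symm, m5⟩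
    · exact ⟨L.p4.symm, m6⟩
  have nv2 : ∀ x y, (x = p ∨ x = q) → (y = p ∨ y = q) → x ≠ y → G.Adj v2 x → ¬ G.Adj v2 y := by
    intro x y hx hy hxy h h'
    obtain ⟨i1, i2⟩ := npq x hx
    obtain ⟨j1, j2⟩ := npq y hy
    rcases H.full L.a2.symm mv2.symm h um i1 i2 y h' with h | h | h
    · exact j1 h.symm
    · exact j2 h.symm
    · exact hxy h.symm
  have nv3 : ∀ x y, (x = p ∨ x = q) → (y = p ∨ y = q) → x ≠ y → G.Adj v3 x → ¬ G.Adj v3 y := by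
    intro x y hx hy hxy h h'
    obtain ⟨i1, i2⟩ := npq x hx
    obtain ⟨j1, j2⟩ := npq y hy
    rcases H.full L.a3.symm mv3.symm h um i1 i2 y h' with h | h | h
    · exact j1 h.symm
    · exact j2 h.symm
    · exact hxy h.symm
  have to3 : ∀ x, G.dist x u = 2 → ¬ G.Adj v2 x → G.Adj v3 x := by
    intro x dx hx
    have : ∀ y, G.Adj x y → y = v1 ∨ y = v3 ∨ y = z := by
      intro y h
      rcases n2 x dx y h with h' | h' | h' | h'
      · tauto
      · subst h'; exact absurd h.symm hx
      · tauto
      · tauto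
    exact (H.all3 this).2.1.symm
  have to2 : ∀ x, G.dist x u = 2 → ¬ G.Adj v3 x → G.Adj v2 x := by
    intro x dx hx
    by_contra h
    exact hx (to3 x dx h)
  by_cases hp : G.Adj v2 p
  · exact H.build h8 hn L.a1 L.a2 L.a3 L.p1 hp L.p2
      (to3 q dq (nv2 p q (Or.inl rfl) (Or.inr rfl) L.p5 hp)) mv2.symm mv3.symm zp.symm zq.symm zm.symm
  · have hp3 := to3 p dp hp
    have hq2 := to2 q dq (nv3 p q (Or.inl rfl) (Or.inr rfl) L.p5 hp3)
    have hn' : [u, v1, v2, v3, q, p, m, z].Nodup := by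
      refine (List.Perm.nodup_iff ?_).1 hn
      exact ((((List.Perm.swap q p [m, z]).cons v3).cons v2).cons v1).cons u
    exact H.build h8 hn' L.a1 L.a2 L.a3 L.p2 hq2 L.p1 hp3 mv2.symm mv3.symm zq.symm zp.symm zm.symm

end Hyp13

/-- A regular NDB graph with valency `3`, diameter `d ≥ 3` and
`γ = d + 1` is isomorphic to the 3-dimensional hypercube graph `Q₃`. -/
theorem stmt_13 {V : Type*} [Fintype V] (G : SimpleGraph V) [DecidableRel G.Adj]
    (hconn : G.Connected) (d : ℕ) (hreg : G.IsRegularOfDegree 3)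
    (hd : 3 ≤ d) (hdiam : HasDiam G d) (hndb : IsNDB G (d + 1)) :
    Nonempty (G ≃g cubeQ3) := by
  classical
  have H : Hyp13 G d := by
    refine ⟨hconn, ?_, fun u v h => (hndb u v h).1, hdiam.1, hdiam.2, hd, ?_⟩
    · intro x
      have hx := hreg x
      rw [← SimpleGraph.card_neighborFinset_eq_degree, Finset.card_eq_three] at hx
      obtain ⟨a, b, c, h1, h2, h3, h⟩ := hx
      refine ⟨a, b, c, h1, h2, h3, fun y => ?_⟩
      rw [← SimpleGraph.mem_neighborFinset, h]
      simp
    · have := G.sum_degrees_eq_twice_card_edges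
      simp only [hreg.degree_eq, Finset.sum_const, smul_eq_mul, Finset.card_univ] at this
      rw [Nat.even_iff]
      omega
  have h4 := H.no5
  have hne : d ≠ 4 := by
    rintro rfl
    exact H.no4
  obtain rfl : d = 3 := by omega
  exact H.cube
end

section
/- Let Γ be a regular nicely distance-balanced graph with valency k = 4, diameter d = 3 and γ(Γ) = 4. Then for every edge x_0 x_1 of Γ we have |D^1_2(x_1,x_0)| = |D^2_1(x_1,x_0)| = 2. -/
open SimpleGraph Finset

/-- Facts about the distance function used in the combinatorial argument. -/
structure NdbFacts {V : Type*} (d : V → V → ℕ) : Prop where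
  symm : ∀ x y, d x y = d y x
  tri : ∀ x y z, d x z ≤ d x y + d y z
  zero : ∀ x y, d x y = 0 → x = y
  self : ∀ x, d x x = 0
  le3 : ∀ x y, d x y ≤ 3
  step : ∀ x y n, d x y = n + 1 → ∃ z, d x z = 1 ∧ d z y = n
  deg : ∀ v a b c e, d a v = 1 → d b v = 1 → d c v = 1 → d e v = 1 →
    a ≠ b → a ≠ c → a ≠ e → b ≠ c → b ≠ e → c ≠ e →
    ∀ x, d x v = 1 → x = a ∨ x = b ∨ x = c ∨ x = e
  two : ∀ u v y z, d u v = 1 → y ≠ z → d y u = 1 → d y v = 1 → d z u = 1 → d z v = 1 →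
    (∀ t, d t u = 1 → d t v = 1 → t = y ∨ t = z) ∧
    (∃ a b, a ≠ b ∧ d a u = 2 ∧ d a v = 3 ∧ d b u = 2 ∧ d b v = 3) ∧
    (∃ x, d x u = 1 ∧ d x v = 2)
  some23 : ∀ u v y, d u v = 1 → d y u = 1 → d y v = 1 → ∃ e, d e u = 2 ∧ d e v = 3
  zero23 : ∀ u v, d u v = 1 → (∀ t, d t u = 1 → d t v ≠ 1) → ∀ t, d t u = 2 → d t v ≠ 3
  two23 : ∀ u v a b, d u v = 1 → a ≠ b → d a u = 2 → d a v = 3 → d b u = 2 → d b v = 3 →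
    ∃ y z, y ≠ z ∧ d y u = 1 ∧ d y v = 1 ∧ d z u = 1 ∧ d z v = 1
  three23 : ∀ u v a b c, d u v = 1 → a ≠ b → a ≠ c → b ≠ c → d a u = 2 → d a v = 3 →
    d b u = 2 → d b v = 3 → d c u = 2 → d c v = 3 → False
  w4 : ∀ u v a b c e, d u v = 1 → a ≠ b → a ≠ c → a ≠ e → b ≠ c → b ≠ e → c ≠ e →
    d a u < d a v → d b u < d b v → d c u < d c v → d e u < d e v →
    ∀ x, d x u < d x v → x = a ∨ x = b ∨ x = c ∨ x = e

namespace NdbFacts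

variable {V : Type*} {d : V → V → ℕ}

lemma ne_of (H : NdbFacts d) {x y v : V} (h : d x v ≠ d y v) : x ≠ y := by
  rintro rfl; exact h rfl

lemma ne1 (H : NdbFacts d) {x y : V} (h : d x y ≠ 0) : x ≠ y := by
  rintro rfl; exact h (H.self _)

lemma pos (H : NdbFacts d) {x y : V} (h : x ≠ y) : 1 ≤ d x y := by
  rcases Nat.eq_zero_or_pos (d x y) with h0 | h0
  · exact absurd (H.zero _ _ h0) h
  · exact h0

/-- Structure of an edge lying in two triangles. -/
lemma edge2 (H : NdbFacts d) {u v y z : V} (huv : d u v = 1) (hyz : y ≠ z)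
    (hyu : d y u = 1) (hyv : d y v = 1) (hzu : d z u = 1) (hzv : d z v = 1) :
    ∃ p, d p u = 1 ∧ d p v = 2 ∧ (∀ t, d t u = 1 → t = v ∨ t = y ∨ t = z ∨ t = p) ∧
      (∀ t, d t u = 2 → d t v = 3 → d t p = 1) ∧
      ∃ a b, a ≠ b ∧ d a u = 2 ∧ d a v = 3 ∧ d b u = 2 ∧ d b v = 3 := by
  obtain ⟨-, hab, p, hpu, hpv⟩ := H.two u v y z huv hyz hyu hyv hzu hzv
  have hN := H.deg u v y z p (by rw [H.symm]; exact huv) hyu hzu hpu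
    (H.ne1 (by rw [H.symm]; omega)) (H.ne1 (by rw [H.symm]; omega))
    (H.ne1 (by rw [H.symm]; omega)) hyz
    (H.ne_of (v := v) (by omega)) (H.ne_of (v := v) (by omega))
  refine ⟨p, hpu, hpv, hN, ?_, hab⟩
  intro t htu htv
  obtain ⟨s, hts, hsu⟩ := H.step t u 1 htu
  have h1 := H.tri t s v
  rcases hN s hsu with rfl | rfl | rfl | rfl
  · omega
  · omega
  · omega
  · exact hts

lemma no_k4 (H : NdbFacts d) {k0 k1 k2 k3 : V} (h01 : d k0 k1 = 1) (h02 : d k0 k2 = 1)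
    (h03 : d k0 k3 = 1) (h12 : d k1 k2 = 1) (h13 : d k1 k3 = 1) (h23 : d k2 k3 = 1) : False := by
  have s := H.symm
  have n02 : k0 ≠ k2 := H.ne1 (by omega)
  have n03 : k0 ≠ k3 := H.ne1 (by omega)
  have n23 : k2 ≠ k3 := H.ne1 (by omega)
  have h10 : d k1 k0 = 1 := by rw [s]; exact h01
  have h20 : d k2 k0 = 1 := by rw [s]; exact h02
  have h30 : d k3 k0 = 1 := by rw [s]; exact h03
  have h21 : d k2 k1 = 1 := by rw [s]; exact h12
  have h31 : d k3 k1 = 1 := by rw [s]; exact h13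
  have h32 : d k3 k2 = 1 := by rw [s]; exact h23
  obtain ⟨p, hp1, hp0, hN1, hT, a, b, hab, ha1, ha0, hb1, hb0⟩ :=
    H.edge2 h10 n23 h21 h20 h31 h30
  obtain ⟨q, hq0, hq1, hN0, -⟩ := H.edge2 h01 n23 h20 h21 h30 h31
  have C02 := (H.two k0 k2 k1 k3 h02 (H.ne1 (by omega)) h10 h12 h30 h32).1
  have C03 := (H.two k0 k3 k1 k2 h03 (H.ne1 (by omega)) h10 h13 h20 h23).1
  have C12 := (H.two k1 k2 k0 k3 h12 n03 h01 h02 h31 h32).1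
  -- edges k1 k2
  obtain ⟨-, ⟨a', b', hab', ha1', ha2', hb1', hb2'⟩, -⟩ :=
    H.two k1 k2 k0 k3 h12 n03 h01 h02 h31 h32
  have nq1 : q ≠ k1 := H.ne1 (by omega)
  have nq2 : q ≠ k2 := H.ne_of (v := k1) (by omega)
  have nq3 : q ≠ k3 := H.ne_of (v := k1) (by omega)
  have np0 : p ≠ k0 := H.ne1 (by omega)
  have np3 : p ≠ k3 := H.ne_of (v := k0) (by omega)
  have np2 : p ≠ k2 := H.ne_of (v := k0) (by omega)
  have hq2 : d q k2 ≠ 1 := fun h => by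
    rcases C02 q hq0 h with h | h
    · exact nq1 h
    · exact nq3 h
  have hq3 : d q k3 ≠ 1 := fun h => by
    rcases C03 q hq0 h with h | h
    · exact nq1 h
    · exact nq2 h
  have hp2 : d p k2 ≠ 1 := fun h => by
    rcases C12 p hp1 h with h | h
    · exact np0 h
    · exact np3 h
  have hp2' : d p k2 = 2 := by
    have := H.pos np2
    have := H.tri p k1 k2
    omega
  have hT2 : ∀ t, d t k1 = 2 → d t k2 = 3 → d t p = 1 := by
    intro t h1 h2
    obtain ⟨r, htr, hr⟩ := H.step t k1 1 h1
    have := H.tri t r k2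
    rcases hN1 r hr with rfl | rfl | rfl | rfl
    · omega
    · omega
    · omega
    · exact htr
  -- a vertex far from both k0 and k2
  obtain ⟨u, hu1, hu0, hu2⟩ : ∃ u, d u k1 = 2 ∧ d u k0 = 3 ∧ d u k2 = 3 := by
    by_contra hcon
    push Not at hcon
    have e1 : a ≠ a' := by rintro rfl; exact hcon _ ha1 ha0 ha2'
    have e2 : a ≠ b' := by rintro rfl; exact hcon _ ha1 ha0 hb2'
    have e3 : b ≠ a' := by rintro rfl; exact hcon _ hb1 hb0 ha2'
    have e4 : b ≠ b' := by rintro rfl; exact hcon _ hb1 hb0 hb2'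
    rcases H.deg p a b a' b' (hT _ ha1 ha0) (hT _ hb1 hb0) (hT2 _ ha1' ha2') (hT2 _ hb1' hb2')
      hab e1 e2 e3 e4 hab' k1 (by rw [s]; exact hp1) with rfl | rfl | rfl | rfl
    · have := H.self k1; omega
    · have := H.self k1; omega
    · have := H.self k1; omega
    · have := H.self k1; omega
  have hup := hT u hu1 hu0
  have c0 : ∀ t, d t k0 = 1 → d t q ≠ 1 := by
    intro t ht htq
    rw [s] at htq
    rcases hN0 t ht with rfl | rfl | rfl | rfl
    · omega
    · exact hq2 htq
    · exact hq3 htq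
    · have := H.self t; omega
  have z1 := H.zero23 k0 q (by rw [s]; exact hq0) c0
  have z2 := H.zero23 q k0 hq0 (fun t h1 h2 => c0 t h2 h1)
  have huq : d u q = 3 := by
    have := H.tri u q k0
    have := H.le3 u q
    have : d u q ≠ 2 := fun h => z2 u h hu0
    omega
  have hpq : d p q = 2 := by
    have := H.tri u p q
    have := H.le3 p q
    have := z1 p hp0
    omega
  refine H.three23 p u k0 k2 q (by rw [s]; exact hup) n02 (H.ne1 (by rw [s]; omega))
    nq2.symm (by rw [s]; exact hp0) (by rw [s]; exact hu0) (by rw [s]; exact hp2')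
    (by rw [s]; exact hu2) (by rw [s]; exact hpq) (by rw [s]; exact huq)

/-- The local graph contains no path on four vertices. -/
lemma no_p4 (H : NdbFacts d) {x0 x1 y1 y2 x2 : V} (h01 : d x0 x1 = 1) (hy : y1 ≠ y2)
    (hy10 : d y1 x0 = 1) (hy11 : d y1 x1 = 1) (hy20 : d y2 x0 = 1) (hy21 : d y2 x1 = 1)
    (hx21 : d x2 x1 = 1) (hx20 : d x2 x0 = 2) (hx2y2 : d x2 y2 = 1) : False := by
  have s := H.symm
  have h10 : d x1 x0 = 1 := by rw [s]; exact h01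
  have h12 : d x1 x2 = 1 := by rw [s]; exact hx21
  have hy0' : d x0 y2 = 1 := by rw [s]; exact hy20
  have hy1' : d x1 y2 = 1 := by rw [s]; exact hy21
  have hy2' : d y2 x2 = 1 := by rw [s]; exact hx2y2
  have hx02 : d x0 x2 = 2 := by rw [s]; exact hx20
  have hy0'' : d x0 y1 = 1 := by rw [s]; exact hy10
  have hy1'' : d x1 y1 = 1 := by rw [s]; exact hy11
  have hyy : d y1 y2 = 2 := by
    have := H.pos hy
    have := H.tri y1 x0 y2
    have : d y1 y2 ≠ 1 := fun h => H.no_k4 h01 hy0'' hy0' hy1'' hy1' h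
    omega
  -- the edge x1 x0
  obtain ⟨p, hp1, hp0, hN1, hT, a, b, hab, ha1, ha0, hb1, hb0⟩ :=
    H.edge2 h10 hy hy11 hy10 hy21 hy20
  have hpx : x2 = p := by
    rcases hN1 x2 hx21 with h | h | h | h
    · rw [h, H.self] at hx20; omega
    · rw [h] at hx20; omega
    · rw [h] at hx20; omega
    · exact h
  subst hpx
  have ha2 := hT a ha1 ha0
  have hb2 := hT b hb1 hb0
  have hay : 2 ≤ d a y2 := by have := H.tri a y2 x0; omega
  have hby : 2 ≤ d b y2 := by have := H.tri b y2 x0; omega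
  have hN2 := H.deg x2 x1 y2 a b h12 hy2' ha2 hb2 (H.ne1 (by omega))
    (H.ne_of (v := x0) (by omega)) (H.ne_of (v := x0) (by omega))
    (H.ne_of (v := x0) (by omega)) (H.ne_of (v := x0) (by omega)) hab
  have hy1x2 : d y1 x2 = 2 := by
    have := H.tri y1 x1 x2
    have := H.pos (H.ne_of (x := y1) (y := x2) (v := x0) (by omega))
    have : d y1 x2 ≠ 1 := by
      intro h
      rcases hN2 y1 h with h | h | h | h
      · rw [h, H.self] at hy11; omega
      · exact hy h
      · rw [h] at hy10; omega
      · rw [h] at hy10; omega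
    omega
  -- the edge x1 y2
  have n02 : x0 ≠ x2 := H.ne1 (by omega)
  obtain ⟨p', hp1', hp2', hM1, hT', g, g', hgg, hg1, hg2, hg1', hg2'⟩ :=
    H.edge2 hy1' n02 h01 hy0' hx21 hx2y2
  have hpy : y1 = p' := by
    rcases hM1 y1 hy11 with h | h | h | h
    · exact absurd h hy
    · rw [h, H.self] at hy10; omega
    · rw [h] at hy10; omega
    · exact h
  subst hpy
  have hgy := hT' g hg1 hg2
  have hgy' := hT' g' hg1' hg2'
  have hg0 : d g x0 = 2 := by
    have := H.tri g x0 y2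
    have := H.tri g y1 x0
    omega
  have hg0' : d g' x0 = 2 := by
    have := H.tri g' x0 y2
    have := H.tri g' y1 x0
    omega
  -- the edge x0 y2
  obtain ⟨c, c', hcc, hc0, hc2, hc0', hc2'⟩ := H.two23 x0 y2 g g' hy0' hgg hg0 hg2 hg0' hg2'
  obtain ⟨z, hz1, hz0, hz2⟩ : ∃ z, z ≠ x1 ∧ d z x0 = 1 ∧ d z y2 = 1 := by
    by_cases h : c = x1
    · exact ⟨c', by rintro rfl; exact hcc h, hc0', hc2'⟩
    · exact ⟨c, h, hc0, hc2⟩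
  have nzx2 : z ≠ x2 := H.ne_of (v := x0) (by omega)
  have hNy2 := H.deg y2 x0 x1 x2 z hy0' hy1' hx2y2 hz2 (H.ne1 (by omega)) n02
    (H.ne1 (by rw [s]; omega)) (H.ne1 (by omega)) hz1.symm nzx2.symm
  -- all of a, b are close to y1
  have close : ∀ t, d t x1 = 2 → d t x0 = 3 → d t x2 = 1 → d t y1 ≤ 2 := by
    intro t ht1 ht0 ht2
    by_contra hcon
    have hty2 : 2 ≤ d t y2 := by have := H.tri t y2 x0; omega
    have e1 := s t x1
    have e2 := s t x0
    have e3 := s t x2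
    have e4 := s t y2
    have e5 := s t y1
    have := H.self x2
    rcases H.w4 x2 t x2 x1 y2 x0 (by omega) (H.ne1 (by omega)) (H.ne1 (by omega))
      n02.symm (H.ne1 (by omega)) (H.ne1 (by omega)) (H.ne1 (by omega))
      (by omega) (by omega) (by omega) (by omega) y1 (by omega) with h | h | h | h
    · rw [h, H.self] at hy1x2; omega
    · rw [h, H.self] at hy11; omega
    · exact hy h
    · rw [h, H.self] at hy10; omega
  -- the edge x1 y1
  obtain ⟨e, he1, he2⟩ := H.some23 x1 y1 x0 hy1'' h01 hy0''
  obtain ⟨r, her, hr⟩ := H.step e x1 1 he1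
  have hery := H.tri e r y1
  rcases hN1 r hr with rfl | rfl | rfl | rfl
  · omega
  · rw [H.self] at hery; omega
  · rcases hNy2 e her with rfl | rfl | rfl | rfl
    · omega
    · omega
    · omega
    · have := H.tri e x0 y1; omega
  · rcases hN2 e her with rfl | rfl | rfl | rfl
    · omega
    · omega
    · have := close e ha1 ha0 ha2; omega
    · have := close e hb1 hb0 hb2; omega

/-- No edge lies in two triangles. -/
lemma no_two (H : NdbFacts d) {x0 x1 y1 y2 : V} (h01 : d x0 x1 = 1) (hy : y1 ≠ y2)
    (hy10 : d y1 x0 = 1) (hy11 : d y1 x1 = 1) (hy20 : d y2 x0 = 1) (hy21 : d y2 x1 = 1) :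
    False := by
  have s := H.symm
  have h10 : d x1 x0 = 1 := by rw [s]; exact h01
  obtain ⟨x2, hx21, hx20, hN1, hT, a, b, hab, ha1, ha0, hb1, hb0⟩ :=
    H.edge2 h10 hy hy11 hy10 hy21 hy20
  obtain ⟨z, hz0, hz1, hN0, -⟩ := H.edge2 h01 hy hy10 hy11 hy20 hy21
  have ha2 := hT a ha1 ha0
  have hb2 := hT b hb1 hb0
  have c0 : ∀ t, d t x0 = 1 → d t z ≠ 1 := by
    intro t ht htz
    rw [s] at htz
    rcases hN0 t ht with rfl | rfl | rfl | rfl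
    · omega
    · exact H.no_p4 h10 hy.symm hy21 hy20 hy11 hy10 hz0 hz1 htz
    · exact H.no_p4 h10 hy hy11 hy10 hy21 hy20 hz0 hz1 htz
    · have := H.self t; omega
  have z1 := H.zero23 x0 z (by rw [s]; exact hz0) c0
  have z2 := H.zero23 z x0 hz0 (fun t h1 h2 => c0 t h2 h1)
  have key : ∀ t, d t x1 = 2 → d t x0 = 3 → d t x2 = 1 →
      ∃ y z, y ≠ z ∧ d y x2 = 1 ∧ d y t = 1 ∧ d z x2 = 1 ∧ d z t = 1 := by
    intro t ht1 ht0 ht2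
    have htz : d t z = 3 := by
      have := H.tri t z x0
      have := H.le3 t z
      have : d t z ≠ 2 := fun h => z2 t h ht0
      omega
    have hxz : d x2 z = 2 := by
      have := H.tri t x2 z
      have := H.le3 x2 z
      have := z1 x2 hx20
      omega
    exact H.two23 x2 t x0 z (by rw [s]; exact ht2) (H.ne1 (by rw [s]; omega))
      (by rw [s]; exact hx20) (by rw [s]; exact ht0) (by rw [s]; exact hxz)
      (by rw [s]; exact htz)
  have hx12 : d x1 x2 = 1 := by rw [s]; exact hx21
  obtain ⟨c, c', hcc, hc2, hca, hc2', hca'⟩ := key a ha1 ha0 ha2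
  have ha1' : d x1 a = 2 := by rw [s]; exact ha1
  have hb1' : d x1 b = 2 := by rw [s]; exact hb1
  have hN := H.deg x2 x1 a c c' hx12 ha2 hc2 hc2' (H.ne1 (by omega))
    (H.ne_of (v := a) (by omega)) (H.ne_of (v := a) (by omega))
    (H.ne1 (by rw [s]; omega)) (H.ne1 (by rw [s]; omega)) hcc
  have nbx : b ≠ x1 := H.ne1 (by omega)
  obtain ⟨w, hw2, hwa, hba, hM⟩ : ∃ w, d w x2 = 1 ∧ d w a = 1 ∧ d b a = 1 ∧
      ∀ t, d t x2 = 1 → t = x1 ∨ t = a ∨ t = b ∨ t = w := by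
    rcases hN b hb2 with h | h | h | h
    · exact absurd h nbx
    · exact absurd h.symm hab
    · subst h; exact ⟨c', hc2', hca', hca, hN⟩
    · subst h
      exact ⟨c, hc2, hca, hca', fun t ht => by
        rcases hN t ht with h | h | h | h
        · exact Or.inl h
        · exact Or.inr (Or.inl h)
        · exact Or.inr (Or.inr (Or.inr h))
        · exact Or.inr (Or.inr (Or.inl h))⟩
  obtain ⟨e, e', hee, he2, heb, he2', heb'⟩ := key b hb1 hb0 hb2
  have hwb : d w b = 1 := by
    have bb := H.self b
    have A : ∀ t, d t x2 = 1 → d t b = 1 → t = a ∨ t = w := by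
      intro t h1 h2
      rcases hM t h1 with h | h | h | h
      · rw [h] at h2; omega
      · exact Or.inl h
      · rw [h] at h2; omega
      · exact Or.inr h
    rcases A e he2 heb with h | h
    · rcases A e' he2' heb' with h' | h'
      · exact absurd (h.trans h'.symm) hee
      · rw [← h']; exact heb'
    · rw [← h]; exact heb
  exact H.no_k4 hwa hwb hw2 (by rw [s]; exact hba) ha2 hb2

/-- An end of an edge in no triangle has eccentricity at most two. -/
lemma ecc (H : NdbFacts d) {x p : V} (hxp : d p x = 1) (h0 : ∀ t, d t x = 1 → d t p ≠ 1) :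
    ∀ f, d f x ≠ 3 := by
  intro f hf
  have s := H.symm
  have z1 := H.zero23 x p (by rw [s]; exact hxp) h0
  have z2 := H.zero23 p x hxp (fun t h1 h2 => h0 t h2 h1)
  obtain ⟨g, hfg, hg⟩ := H.step f x 2 hf
  have hfp : d f p = 3 := by
    have := H.tri f p x
    have := H.le3 f p
    have : d f p ≠ 2 := fun h => z2 f h hf
    omega
  have hgp : d g p = 2 := by
    have := H.tri f g p
    have := H.le3 g p
    have := z1 g hg
    omega
  obtain ⟨y, z, hyz, h1, h2, h3, h4⟩ := H.two23 g f x p (by rw [s]; exact hfg)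
    (H.ne1 (by rw [s]; omega)) (by rw [s]; exact hg) (by rw [s]; exact hf)
    (by rw [s]; exact hgp) (by rw [s]; exact hfp)
  exact H.no_two (x0 := g) (x1 := f) (by rw [s]; exact hfg) hyz h1 h2 h3 h4

lemma ecc_step (H : NdbFacts d) {x y : V} (hxy : d y x = 1) (hx : ∀ f, d f x ≠ 3) :
    ∀ f, d f y ≠ 3 := by
  apply H.ecc (p := x) (by rw [H.symm]; exact hxy)
  intro t h1 h2
  obtain ⟨e, -, he⟩ := H.some23 y x t hxy h1 h2
  exact hx e he

end NdbFacts

section Counting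

variable {V : Type*} [Fintype V] (G : SimpleGraph V) [DecidableRel G.Adj]

lemma ndb_counts (hconn : G.Connected) (hreg : G.IsRegularOfDegree 4)
    (hdiam : HasDiam G 3) (hndb : IsNDB G 4) (u v : V) (h : G.Adj u v) :
    (ndbD G u v 1 2).card + (ndbD G u v 1 1).card = 3 ∧
    (ndbD G u v 2 3).card = (ndbD G u v 1 1).card ∧ 1 ≤ (ndbD G u v 1 2).card := by
  classical
  have huv : G.dist u v = 1 := SimpleGraph.dist_eq_one_iff_adj.mpr h
  have hvu : G.dist v u = 1 := by rw [SimpleGraph.dist_comm]; exact huv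
  have tri : ∀ x, G.dist x v ≤ G.dist x u + 1 := fun x => by
    have := hconn.dist_triangle (u := x) (v := u) (w := v); omega
  have tri' : ∀ x, G.dist x u ≤ G.dist x v + 1 := fun x => by
    have := hconn.dist_triangle (u := x) (v := v) (w := u); omega
  have hz : ∀ x y, G.dist x y = 0 ↔ x = y := fun x y => hconn.dist_eq_zero_iff
  have hN : (ndbD G u v 1 2).card + (ndbD G u v 1 1).card + 1 = 4 := by
    have : G.neighborFinset u = insert v (ndbD G u v 1 2 ∪ ndbD G u v 1 1) := by
      ext x
      simp only [SimpleGraph.mem_neighborFinset, ndbD, Finset.mem_insert, Finset.mem_union,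
        Finset.mem_filter, Finset.mem_univ, true_and]
      rw [← SimpleGraph.dist_eq_one_iff_adj, SimpleGraph.dist_comm]
      have := tri x
      have := hz x v
      constructor
      · intro h1
        by_cases hx : x = v
        · exact Or.inl hx
        · right
          have : G.dist x v ≠ 0 := fun h => hx ((hz _ _).1 h)
          omega
      · rintro (rfl | h | h)
        · exact hvu
        · exact h.1
        · exact h.1
    have h4 := hreg u
    rw [← SimpleGraph.card_neighborFinset_eq_degree, this, Finset.card_insert_of_notMem,
      Finset.card_union_of_disjoint] at h4
    · exact h4
    · rw [Finset.disjoint_left]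
      intro x
      simp only [ndbD, Finset.mem_filter, Finset.mem_univ, true_and]
      omega
    · have : G.dist v v = 0 := by simp
      simp only [ndbD, Finset.mem_union, Finset.mem_filter, Finset.mem_univ, true_and]
      omega
  have hW : (ndbD G u v 1 2).card + (ndbD G u v 2 3).card + 1 = 4 := by
    have : ndbW G u v = insert u (ndbD G u v 1 2 ∪ ndbD G u v 2 3) := by
      ext x
      simp only [ndbW, ndbD, Finset.mem_insert, Finset.mem_union,
        Finset.mem_filter, Finset.mem_univ, true_and]
      have := tri x
      have h3 := hdiam.1 x v
      constructor
      · intro h1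
        by_cases hx : x = u
        · exact Or.inl hx
        · right
          have : G.dist x u ≠ 0 := fun h => hx ((hz _ _).1 h)
          omega
      · rintro (rfl | h | h)
        · have : G.dist x x = 0 := by simp
          omega
        · omega
        · omega
    have h4 := (hndb u v h).1
    rw [this, Finset.card_insert_of_notMem, Finset.card_union_of_disjoint] at h4
    · exact h4
    · rw [Finset.disjoint_left]
      intro x
      simp only [ndbD, Finset.mem_filter, Finset.mem_univ, true_and]
      omega
    · have : G.dist u u = 0 := by simp
      simp only [ndbD, Finset.mem_union, Finset.mem_filter, Finset.mem_univ, true_and]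
      omega
  refine ⟨by omega, by omega, ?_⟩
  by_contra hcon
  have h0 : (ndbD G u v 1 2).card = 0 := by omega
  have h3 : 0 < (ndbD G u v 2 3).card := by omega
  obtain ⟨x, hx⟩ := Finset.card_pos.1 h3
  simp only [ndbD, Finset.mem_filter, Finset.mem_univ, true_and] at hx
  obtain ⟨w, hw⟩ := hconn.exists_walk_length_eq_dist x u
  cases w with
  | nil => simp at hw; omega
  | cons hadj w' =>
    rename_i y
    rw [SimpleGraph.Walk.length_cons] at hw
    have h1 := SimpleGraph.dist_le w'
    have h2 := hconn.dist_triangle (u := x) (v := y) (w := v)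
    have h3 : G.dist x y = 1 := SimpleGraph.dist_eq_one_iff_adj.mpr hadj
    have h4 := tri y
    have : y ∈ ndbD G u v 1 2 := by
      simp only [ndbD, Finset.mem_filter, Finset.mem_univ, true_and]
      omega
    rw [Finset.card_eq_zero] at h0
    rw [h0] at this
    simp at this

lemma mem_of_card_four {s : Finset V} (hs : s.card = 4) {a b c e : V} (ha : a ∈ s) (hb : b ∈ s)
    (hc : c ∈ s) (he : e ∈ s) (hab : a ≠ b) (hac : a ≠ c) (hae : a ≠ e) (hbc : b ≠ c)
    (hbe : b ≠ e) (hce : c ≠ e) {x : V} (hx : x ∈ s) : x = a ∨ x = b ∨ x = c ∨ x = e := by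
  classical
  have hsub : ({a, b, c, e} : Finset V) ⊆ s := by
    intro t ht
    simp only [Finset.mem_insert, Finset.mem_singleton] at ht
    rcases ht with rfl | rfl | rfl | rfl <;> assumption
  have hcard : ({a, b, c, e} : Finset V).card = 4 := by
    rw [Finset.card_insert_of_notMem, Finset.card_insert_of_notMem, Finset.card_pair hce] <;>
      simp [*]
  have := Finset.eq_of_subset_of_card_le hsub (by omega)
  rw [← this] at hx
  simpa using hx

lemma ndb_facts (hconn : G.Connected) (hreg : G.IsRegularOfDegree 4)
    (hdiam : HasDiam G 3) (hndb : IsNDB G 4) : NdbFacts G.dist := by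
  classical
  have K := ndb_counts G hconn hreg hdiam hndb
  have adj : ∀ u v, G.dist u v = 1 → G.Adj u v :=
    fun u v h => SimpleGraph.dist_eq_one_iff_adj.mp h
  have mem : ∀ u v i j x, x ∈ ndbD G u v i j ↔ G.dist x u = i ∧ G.dist x v = j := by
    intro u v i j x
    simp [ndbD]
  constructor
  · exact fun x y => SimpleGraph.dist_comm
  · exact fun x y z => hconn.dist_triangle
  · exact fun x y h => hconn.dist_eq_zero_iff.1 h
  · intro x; simp
  · exact hdiam.1
  · intro x y n h
    obtain ⟨w, hw⟩ := hconn.exists_walk_length_eq_dist x y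
    cases w with
    | nil => simp at hw; simp at h
    | cons hadj w' =>
      rename_i z
      rw [SimpleGraph.Walk.length_cons] at hw
      have h1 := SimpleGraph.dist_le w'
      have h2 := hconn.dist_triangle (u := x) (v := z) (w := y)
      have h3 : G.dist x z = 1 := SimpleGraph.dist_eq_one_iff_adj.mpr hadj
      exact ⟨z, h3, by omega⟩
  · intro v a b c e ha hb hc he h1 h2 h3 h4 h5 h6 x hx
    have m : ∀ t, G.dist t v = 1 → t ∈ G.neighborFinset v := fun t ht => by
      rw [SimpleGraph.mem_neighborFinset]; exact (adj _ _ ht).symm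
    exact mem_of_card_four (by rw [SimpleGraph.card_neighborFinset_eq_degree]; exact hreg v)
      (m a ha) (m b hb) (m c hc) (m e he) h1 h2 h3 h4 h5 h6 (m x hx)
  · intro u v y z huv hyz hyu hyv hzu hzv
    obtain ⟨k1, k2, k3⟩ := K u v (adj _ _ huv)
    have hsub : ({y, z} : Finset V) ⊆ ndbD G u v 1 1 := by
      intro t ht
      simp only [Finset.mem_insert, Finset.mem_singleton] at ht
      rw [mem]
      rcases ht with rfl | rfl <;> constructor <;> assumption
    have hc := Finset.card_pair hyz
    have hle := Finset.card_le_card hsub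
    have heq := Finset.eq_of_subset_of_card_le hsub (by omega)
    refine ⟨?_, ?_, ?_⟩
    · intro t h1 h2
      have : t ∈ ndbD G u v 1 1 := (mem _ _ _ _ _).2 ⟨h1, h2⟩
      rw [← heq] at this
      simpa using this
    · have h2 : 1 < (ndbD G u v 2 3).card := by omega
      obtain ⟨a, ha, b, hb, hab⟩ := Finset.one_lt_card.1 h2
      rw [mem] at ha hb
      exact ⟨a, b, hab, ha.1, ha.2, hb.1, hb.2⟩
    · obtain ⟨x, hx⟩ := Finset.card_pos.1 k3
      rw [mem] at hx
      exact ⟨x, hx⟩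
  · intro u v y huv h1 h2
    obtain ⟨k1, k2, k3⟩ := K u v (adj _ _ huv)
    have : 0 < (ndbD G u v 2 3).card := by
      rw [k2]; exact Finset.card_pos.2 ⟨y, (mem _ _ _ _ _).2 ⟨h1, h2⟩⟩
    obtain ⟨x, hx⟩ := Finset.card_pos.1 this
    rw [mem] at hx
    exact ⟨x, hx⟩
  · intro u v huv h0 t h1 h2
    obtain ⟨k1, k2, k3⟩ := K u v (adj _ _ huv)
    have : 0 < (ndbD G u v 1 1).card := by
      rw [← k2]; exact Finset.card_pos.2 ⟨t, (mem _ _ _ _ _).2 ⟨h1, h2⟩⟩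
    obtain ⟨x, hx⟩ := Finset.card_pos.1 this
    rw [mem] at hx
    exact h0 x hx.1 hx.2
  · intro u v a b huv hab h1 h2 h3 h4
    obtain ⟨k1, k2, k3⟩ := K u v (adj _ _ huv)
    have : 1 < (ndbD G u v 1 1).card := by
      rw [← k2]
      exact Finset.one_lt_card.2 ⟨a, (mem _ _ _ _ _).2 ⟨h1, h2⟩, b, (mem _ _ _ _ _).2 ⟨h3, h4⟩, hab⟩
    obtain ⟨a, ha, b, hb, hab⟩ := Finset.one_lt_card.1 this
    rw [mem] at ha hb
    exact ⟨a, b, hab, ha.1, ha.2, hb.1, hb.2⟩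
  · intro u v a b c huv hab hac hbc h1 h2 h3 h4 h5 h6
    obtain ⟨k1, k2, k3⟩ := K u v (adj _ _ huv)
    have : 2 < (ndbD G u v 2 3).card :=
      Finset.two_lt_card.2 ⟨a, (mem _ _ _ _ _).2 ⟨h1, h2⟩, b, (mem _ _ _ _ _).2 ⟨h3, h4⟩,
        c, (mem _ _ _ _ _).2 ⟨h5, h6⟩, hab, hac, hbc⟩
    omega
  · intro u v a b c e huv h1 h2 h3 h4 h5 h6 ha hb hc he x hx
    have m : ∀ t, G.dist t u < G.dist t v → t ∈ ndbW G u v := fun t ht => by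
      simp [ndbW, ht]
    exact mem_of_card_four (hndb u v (adj _ _ huv)).1
      (m a ha) (m b hb) (m c hc) (m e he) h1 h2 h3 h4 h5 h6 (m x hx)

lemma ndb_one (hconn : G.Connected) (hreg : G.IsRegularOfDegree 4)
    (hdiam : HasDiam G 3) (hndb : IsNDB G 4) (u v : V) (h : G.Adj u v) :
    (ndbD G u v 1 2).card = 2 := by
  have H := ndb_facts G hconn hreg hdiam hndb
  obtain ⟨k1, -, -⟩ := ndb_counts G hconn hreg hdiam hndb u v h
  have huv : G.dist u v = 1 := SimpleGraph.dist_eq_one_iff_adj.mpr h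
  have mem : ∀ x, x ∈ ndbD G u v 1 1 ↔ G.dist x u = 1 ∧ G.dist x v = 1 := by
    intro x
    simp [ndbD]
  have hle : ¬ 1 < (ndbD G u v 1 1).card := by
    intro h1
    obtain ⟨a, ha, b, hb, hab⟩ := Finset.one_lt_card.1 h1
    rw [mem] at ha hb
    exact H.no_two huv hab ha.1 ha.2 hb.1 hb.2
  have hpos : (ndbD G u v 1 1).card ≠ 0 := by
    intro h0
    rw [Finset.card_eq_zero] at h0
    have hu : ∀ f, G.dist f u ≠ 3 := by
      apply H.ecc (p := v) (by rw [SimpleGraph.dist_comm]; exact huv)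
      intro t h1 h2
      have := (mem t).2 ⟨h1, h2⟩
      rw [h0] at this
      simp at this
    have all : ∀ (a b : V), G.Walk a b → (∀ f, G.dist f a ≠ 3) → ∀ f, G.dist f b ≠ 3 := by
      intro a b w
      induction w with
      | nil => exact fun h => h
      | cons hadj w ih =>
        intro ha
        exact ih (H.ecc_step (SimpleGraph.dist_eq_one_iff_adj.mpr hadj.symm) ha)
    obtain ⟨a, b, hab⟩ := hdiam.2
    obtain ⟨w⟩ := hconn.preconnected u b
    exact all u b w hu a hab
  omega

end Counting

/-- In a regular NDB graph with valency `4`, diameter `3` and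
`γ = 4`, for every edge `x₀x₁` we have `|D^1_2(x₁,x₀)| = |D^2_1(x₁,x₀)| = 2`. -/
theorem stmt_16 {V : Type*} [Fintype V] (G : SimpleGraph V) [DecidableRel G.Adj]
    (hconn : G.Connected) (hreg : G.IsRegularOfDegree 4)
    (hdiam : HasDiam G 3) (hndb : IsNDB G 4)
    (x₀ x₁ : V) (h : G.Adj x₀ x₁) :
    (ndbD G x₁ x₀ 1 2).card = 2 ∧ (ndbD G x₁ x₀ 2 1).card = 2 := by
  refine ⟨ndb_one G hconn hreg hdiam hndb x₁ x₀ h.symm, ?_⟩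
  have h1 := ndb_one G hconn hreg hdiam hndb x₀ x₁ h
  have : ndbD G x₁ x₀ 2 1 = ndbD G x₀ x₁ 1 2 := by
    ext x
    simp [ndbD, and_comm]
  rw [this]
  exact h1
end
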